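/- Let G = ⟨X; Rⁿ⟩ be a one-relator group with torsion which is either freely indecomposable or isomorphic to ℤ ∗ Cₙ, and let T be the normal closure in G of the image of R. Suppose G splits nontrivially as an amalgamated free product A ∗_C B where C is infinite cyclic. Then the image of C in G is not contained in T. -/

import Mathlib

/-- A group is *virtually-ℤ* if it has a finite-index subgroup isomorphic to `ℤ`. -/
def VirtuallyZ (G : Type*) [Group G] : Prop :=
  ∃ H : Subgroup G, H.FiniteIndex ∧ Nonempty (H ≃* Multiplicative ℤ)

/-- A subgroup `M` of `G` is *malnormal* if `g M g⁻¹ ∩ M ≠ 1` implies `g ∈ M`. -/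
def Subgroup.IsMalnormal {G : Type*} [Group G] (M : Subgroup G) : Prop :=
  ∀ g : G, (∃ x : G, x ≠ 1 ∧ x ∈ M ∧ g * x * g⁻¹ ∈ M) → g ∈ M

/-- A group is a *free product of cyclic groups* if it is isomorphic to the free product
(`Monoid.CoprodI`) of a family of cyclic groups; every cyclic group is isomorphic to
`Multiplicative (ZMod m)` for some `m : ℕ` (with `m = 0` giving the infinite cyclic group). -/
def IsFreeProductOfCyclics (G : Type*) [Group G] : Prop :=
  ∃ (ι : Type) (m : ι → ℕ),
    Nonempty (G ≃* Monoid.CoprodI fun i => Multiplicative (ZMod (m i)))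

/-- A group is *freely decomposable* if it is isomorphic to a free product of two
nontrivial groups. -/
def FreelyDecomposable (G : Type*) [Group G] : Prop :=
  ∃ (H K : Type) (gH : Group H) (gK : Group K),
    Nontrivial H ∧ Nontrivial K ∧
      Nonempty (G ≃* (letI := gH; letI := gK; Monoid.Coprod H K))

/-- A group is *freely indecomposable* if it is not isomorphic to a free product of two
nontrivial groups. -/
def FreelyIndecomposable (G : Type*) [Group G] : Prop := ¬ FreelyDecomposable G

namespace OR
open Monoid

section Push
variable {I H : Type} {G : I → Type} [∀ i, Group (G i)] [Group H] {φ : ∀ i, H →* G i}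

variable (φ) in
/-- product of a list of syllables in the pushout -/
def pr (L : List (Σ i, G i)) : PushoutI φ := (L.map fun p => PushoutI.of p.1 p.2).prod

variable (φ) in
/-- reduced lists of syllables -/
def Red (L : List (Σ i, G i)) : Prop :=
  (∀ p ∈ L, p.2 ∉ (φ p.1).range) ∧ L.IsChain (fun p q => p.1 ≠ q.1)

@[simp] theorem pr_nil : pr φ [] = 1 := rfl
@[simp] theorem pr_cons (p : Σ i, G i) (L) : pr φ (p :: L) = PushoutI.of p.1 p.2 * pr φ L := by
  simp [pr]
@[simp] theorem pr_append (L M) : pr φ (L ++ M) = pr φ L * pr φ M := by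
  simp [pr]

theorem Red.tail {p : Σ i, G i} {L} (h : Red φ (p :: L)) : Red φ L :=
  ⟨fun q hq => h.1 q (List.mem_cons_of_mem _ hq), h.2.tail⟩

theorem Red.cons {p : Σ i, G i} {L} (h : Red φ L) (hp : p.2 ∉ (φ p.1).range)
    (hd : ∀ q ∈ L.head?, p.1 ≠ q.1) : Red φ (p :: L) :=
  ⟨List.forall_mem_cons.2 ⟨hp, h.1⟩, by rw [List.isChain_cons]; exact ⟨hd, h.2⟩⟩

theorem Red.replace {i : I} {x x' : G i} {L} (h : Red φ (⟨i, x⟩ :: L)) (hp : x' ∉ (φ i).range) :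
    Red φ (⟨i, x'⟩ :: L) := by
  refine h.tail.cons hp ?_
  have := h.2
  rw [List.isChain_cons] at this
  exact this.1

theorem Red.append {L M : List (Σ i, G i)} (h : Red φ L) (h' : Red φ M)
    (hd : ∀ p ∈ L.getLast?, ∀ q ∈ M.head?, p.1 ≠ q.1) : Red φ (L ++ M) :=
  ⟨by
    intro p hp
    rcases List.mem_append.1 hp with hp | hp
    · exact h.1 p hp
    · exact h'.1 p hp, by rw [List.isChain_append]; exact ⟨h.2, h'.2, hd⟩⟩

theorem Red.left {L M : List (Σ i, G i)} (h : Red φ (L ++ M)) : Red φ L :=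
  ⟨fun q hq => h.1 q (List.mem_append_left _ hq), (List.isChain_append.1 h.2).1⟩

theorem Red.right {L M : List (Σ i, G i)} (h : Red φ (L ++ M)) : Red φ M :=
  ⟨fun q hq => h.1 q (List.mem_append_right _ hq), (List.isChain_append.1 h.2).2.1⟩

theorem of_phi (i j : I) (h : H) :
    PushoutI.of (φ := φ) i (φ i h) = PushoutI.of j (φ j h) := by
  rw [PushoutI.of_apply_eq_base, PushoutI.of_apply_eq_base]


theorem Red.not_base (hφ : ∀ i, Function.Injective (φ i)) {L : List (Σ i, G i)} (h : Red φ L) (hL : L ≠ []) :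
    pr φ L ∉ (PushoutI.base φ).range := by
  intro hm
  let w : CoprodI.Word G := ⟨L, fun p hp h1 => h.1 p hp (by rw [h1]; exact one_mem _), h.2⟩
  have hw : PushoutI.Reduced φ w := fun g hg => h.1 g hg
  have := hw.eq_empty_of_mem_range hφ (by
    have : PushoutI.ofCoprodI (φ := φ) w.prod = pr φ L := by
      simp [w, CoprodI.Word.prod, pr, map_list_prod, Function.comp_def]
    rwa [this])
  apply hL
  exact congrArg CoprodI.Word.toList this

theorem Red.not_of_head (hφ : ∀ i, Function.Injective (φ i)) {L : List (Σ i, G i)} (h : Red φ L) (hL : L ≠ []) (i : I)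
    (hd : ∀ q ∈ L.head?, i ≠ q.1) : pr φ L ∉ (PushoutI.of (φ := φ) i).range := by
  rintro ⟨g, hg⟩
  by_cases hr : g ∈ (φ i).range
  · obtain ⟨c, rfl⟩ := hr
    exact h.not_base hφ hL ⟨c, by rw [← hg, PushoutI.of_apply_eq_base]⟩
  · have : Red φ (⟨i, g⁻¹⟩ :: L) := h.cons (by simpa using hr) hd
    refine this.not_base hφ (by simp) ⟨1, ?_⟩
    simp [← hg]

theorem Red.not_of (hφ : ∀ i, Function.Injective (φ i)) {L : List (Σ i, G i)} (h : Red φ L) (hL : 2 ≤ L.length) (i : I) :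
    pr φ L ∉ (PushoutI.of (φ := φ) i).range := by
  intro hg
  match L, hL with
  | p :: q :: L', _ =>
    by_cases hp : i = p.1
    · subst hp
      have h2 := h.2
      rw [List.isChain_cons] at h2
      refine h.tail.not_of_head hφ (by simp) p.1 h2.1 ?_
      rw [pr_cons] at hg
      exact (Subgroup.mul_mem_cancel_left _ (MonoidHom.mem_range.2 ⟨p.2, rfl⟩)).1 hg
    · exact h.not_of_head hφ (by simp) i (by simpa using hp) hg


theorem absorb (h : H) {L : List (Σ i, G i)} (hL : Red φ L) :
    (PushoutI.base φ h * pr φ L) ∈ (PushoutI.base φ).range ∨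
      ∃ M, M ≠ [] ∧ Red φ M ∧ M.length = L.length ∧ pr φ M = PushoutI.base φ h * pr φ L := by
  match L with
  | [] => left; simp
  | ⟨i, x⟩ :: L =>
    right
    refine ⟨⟨i, φ i h * x⟩ :: L, by simp, hL.replace ?_, by simp, ?_⟩
    · have := hL.1 ⟨i, x⟩ (by simp)
      intro hm
      exact this ((Subgroup.mul_mem_cancel_left _ (MonoidHom.mem_range.2 ⟨h, rfl⟩)).1 hm)
    · simp [mul_assoc, PushoutI.of_apply_eq_base]

theorem exists_red (g : PushoutI φ) : g ∈ (PushoutI.base φ).range ∨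
    ∃ L, L ≠ [] ∧ Red φ L ∧ pr φ L = g := by
  set P : PushoutI φ → Prop := fun g => g ∈ (PushoutI.base φ).range ∨
    ∃ L, L ≠ [] ∧ Red φ L ∧ pr φ L = g with hP
  have hb : ∀ h y, P y → P (PushoutI.base φ h * y) := by
    rintro h y (hy | ⟨L, hL, hr, rfl⟩)
    · exact Or.inl (mul_mem ⟨h, rfl⟩ hy)
    · rcases absorb h hr with h1 | ⟨M, h1, h2, -, h3⟩
      · exact Or.inl h1
      · exact Or.inr ⟨M, h1, h2, h3⟩
  have ho : ∀ i x y, P y → P (PushoutI.of (φ := φ) i x * y) := by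
    intro i x y hy
    by_cases hx : x ∈ (φ i).range
    · obtain ⟨c, rfl⟩ := hx
      rw [PushoutI.of_apply_eq_base]
      exact hb _ _ hy
    rcases hy with ⟨c, rfl⟩ | ⟨L, hL, hr, rfl⟩
    · right
      refine ⟨[⟨i, x * φ i c⟩], by simp, ⟨?_, by simp⟩, by simp [PushoutI.of_apply_eq_base]⟩
      simp only [List.mem_singleton, forall_eq]
      intro hm
      exact hx ((Subgroup.mul_mem_cancel_right _ (MonoidHom.mem_range.2 ⟨c, rfl⟩)).1 hm)
    · match L, hL with
      | ⟨j, z⟩ :: L, _ =>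
        by_cases hij : i = j
        · subst hij
          by_cases hxz : x * z ∈ (φ i).range
          · obtain ⟨c, hc⟩ := hxz
            have : PushoutI.of (φ := φ) i x * pr φ (⟨i, z⟩ :: L) = PushoutI.base φ c * pr φ L := by
              rw [pr_cons, ← mul_assoc, ← map_mul, ← hc, PushoutI.of_apply_eq_base]
            rw [this]
            apply hb
            by_cases hL : L = []
            · left; subst hL; simp
            · exact Or.inr ⟨L, hL, hr.tail, rfl⟩
          · exact Or.inr ⟨_, by simp, hr.replace hxz, by simp [mul_assoc]⟩
        · exact Or.inr ⟨⟨i, x⟩ :: ⟨j, z⟩ :: L, by simp, hr.cons hx (by simpa using hij), by simp⟩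
  have : ∀ y, P y → P (g * y) := by
    induction g using PushoutI.induction_on with
    | of i x => exact ho i x
    | base h => exact hb h
    | mul a b iha ihb => intro y hy; rw [mul_assoc]; exact iha _ (ihb _ hy)
  have := this 1 (Or.inl (one_mem _))
  rwa [mul_one] at this

theorem red_pow {L : List (Σ i, G i)} (h : Red φ L) (hL : L ≠ [])
    (hd : ∀ p ∈ L.getLast?, ∀ q ∈ L.head?, p.1 ≠ q.1) (k : ℕ) :
    ∃ M, M ≠ [] ∧ Red φ M ∧ M.head? = L.head? ∧ pr φ M = pr φ L ^ (k + 1) := by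
  induction k with
  | zero => exact ⟨L, hL, h, rfl, by simp⟩
  | succ k ih =>
    obtain ⟨M, h1, h2, h3, h4⟩ := ih
    refine ⟨L ++ M, by simp [hL], h.append h2 (by rwa [h3]), ?_, ?_⟩
    · cases L with
      | nil => exact absurd rfl hL
      | cons => simp
    · rw [pr_append, h4, ← pow_succ']

theorem torsion_conj_aux (hφ : ∀ i, Function.Injective (φ i)) [Nonempty I] (N : ℕ) : ∀ L : List (Σ i, G i), L.length ≤ N → Red φ L →
    IsOfFinOrder (pr φ L) → ∃ (i : I) (x : G i) (k : PushoutI φ),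
      pr φ L = k * PushoutI.of i x * k⁻¹ := by
  induction N with
  | zero =>
    intro L hL _ _
    have : L = [] := by simpa using hL
    subst this
    exact ⟨Classical.arbitrary I, 1, 1, by simp⟩
  | succ N ih =>
    intro L hL hr hfin
    match L with
    | [] => exact ⟨Classical.arbitrary I, 1, 1, by simp⟩
    | [p] => exact ⟨p.1, p.2, 1, by simp⟩
    | p :: q :: L' =>
      obtain ⟨M, z, hz⟩ : ∃ M z, q :: L' = M ++ [z] :=
        ⟨_, _, (List.dropLast_append_getLast (l := q :: L') (by simp)).symm⟩
      rw [hz] at hr hfin hL ⊢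
      by_cases hpz : z.1 = p.1
      · obtain ⟨i, x⟩ := p
        obtain ⟨j, y⟩ := z
        simp only at hpz
        subst hpz
        have hM : Red φ M := hr.tail.left
        have hMne : M ≠ [] := by
          rintro rfl
          have := hr.2
          simp at this
        have key : PushoutI.of (φ := φ) j y * pr φ (⟨j, x⟩ :: (M ++ [⟨j, y⟩])) * (PushoutI.of j y)⁻¹
            = PushoutI.of j (y * x) * pr φ M := by
          simp [mul_assoc]
        have key2 : IsOfFinOrder (PushoutI.of (φ := φ) j (y * x) * pr φ M) := by
          rw [← key]
          have := hfin
          rw [← (MulAut.conj (PushoutI.of (φ := φ) j y)).injective.isOfFinOrder_iff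
            (f := (MulAut.conj (PushoutI.of (φ := φ) j y)).toMonoidHom)] at this
          simpa using this
        have fin : ∀ M', M'.length ≤ N → Red φ M' →
            pr φ M' = PushoutI.of (φ := φ) j (y * x) * pr φ M →
            ∃ (i : I) (x_1 : G i) (k : PushoutI φ),
            pr φ (⟨j, x⟩ :: (M ++ [⟨j, y⟩])) = k * PushoutI.of i x_1 * k⁻¹ := by
          intro M' h1 h2 h3
          obtain ⟨i, x', k, hk⟩ := ih M' h1 h2 (by rw [h3]; exact key2)
          refine ⟨i, x', (PushoutI.of j y)⁻¹ * k, ?_⟩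
          rw [h3, ← key] at hk
          rw [mul_inv_rev, inv_inv]
          rw [← mul_assoc, mul_assoc _ k, mul_assoc _ (k * _), ← hk]
          group
        by_cases hyx : y * x ∈ (φ j).range
        · obtain ⟨c, hc⟩ := hyx
          rcases absorb c hM with ⟨c', hc'⟩ | ⟨M', h1, h2, h3, h4⟩
          · refine ⟨j, φ j c', (PushoutI.of j y)⁻¹, ?_⟩
            rw [← hc, PushoutI.of_apply_eq_base, ← hc'] at key
            rw [PushoutI.of_apply_eq_base, ← key]
            group
          · refine fin M' ?_ h2 ?_
            · simp at hL; omega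
            · rw [h4, ← hc, PushoutI.of_apply_eq_base]
        · have hr2 : Red φ (⟨j, x⟩ :: M) := by
            have : Red φ ((⟨j, x⟩ :: M) ++ [⟨j, y⟩]) := hr
            exact this.left
          refine fin _ ?_ (hr2.replace hyx) (by simp)
          simp at hL ⊢; omega
      · exfalso
        have hd : ∀ a ∈ (p :: (M ++ [z])).getLast?, ∀ b ∈ (p :: (M ++ [z])).head?, a.1 ≠ b.1 := by
          have : p :: (M ++ [z]) = (p :: M) ++ [z] := rfl
          rw [this, List.getLast?_append]
          simpa using hpz
        obtain ⟨k, hk, hk'⟩ := isOfFinOrder_iff_pow_eq_one.1 hfin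
        obtain ⟨M', h1, h2, -, h4⟩ := red_pow hr (by simp) hd (k - 1)
        refine h2.not_base hφ h1 ⟨1, ?_⟩
        rw [h4, Nat.sub_add_cancel hk, hk', map_one]

/-- Torsion elements of a pushout are conjugate into a factor. -/
theorem torsion_conj (hφ : ∀ i, Function.Injective (φ i)) [Nonempty I] (g : PushoutI φ) (hg : IsOfFinOrder g) :
    ∃ (i : I) (x : G i) (k : PushoutI φ), g = k * PushoutI.of i x * k⁻¹ := by
  rcases exists_red g with ⟨c, rfl⟩ | ⟨L, -, hr, rfl⟩
  · exact ⟨Classical.arbitrary I, φ _ c, 1, by simp [PushoutI.of_apply_eq_base]⟩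
  · exact torsion_conj_aux hφ _ L le_rfl hr hg

theorem red_inv {L : List (Σ i, G i)} (h : Red φ L) :
    ∃ M, Red φ M ∧ pr φ M = (pr φ L)⁻¹ ∧
      (M.head?.map Sigma.fst = L.getLast?.map Sigma.fst) ∧ M.length = L.length := by
  induction L using List.reverseRecOn with
  | nil => exact ⟨[], h, by simp, rfl, rfl⟩
  | append_singleton L p ih =>
    obtain ⟨M, h1, h2, h3, h4⟩ := ih h.left
    refine ⟨⟨p.1, p.2⁻¹⟩ :: M, h1.cons ?_ ?_, by simp [h2], by simp, by simp [h4]⟩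
    · simpa using h.1 p (by simp)
    · intro q hq
      have := (List.isChain_append.1 h.2).2.2
      have hh : q.1 ∈ M.head?.map Sigma.fst := Option.mem_map.2 ⟨q, hq, rfl⟩
      rw [h3] at hh
      obtain ⟨a, ha, ha'⟩ := Option.mem_map.1 hh
      have := this a ha p (by simp)
      simp only
      rw [← ha']
      exact this.symm

theorem malnormal_aux (hφ : ∀ i, Function.Injective (φ i)) (htf : ∀ h : H, IsOfFinOrder h → h = 1) (L : List (Σ i, G i)) :
    Red φ L → ∀ {i j : I} (x : G i) (y : G j), IsOfFinOrder x → x ≠ 1 →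
    pr φ L * PushoutI.of i x * (pr φ L)⁻¹ = PushoutI.of j y →
    i = j ∧ pr φ L ∈ (PushoutI.of (φ := φ) i).range := by
  have nr : ∀ {i} (x : G i), IsOfFinOrder x → x ≠ 1 → x ∉ (φ i).range := by
    rintro i _ hx hx1 ⟨c, rfl⟩
    apply hx1
    rw [htf c ((hφ i).isOfFinOrder_iff.1 hx), map_one]
  induction L using List.reverseRecOn with
  | nil =>
    intro _ i j x y hx hx1 he
    refine ⟨?_, by simp⟩
    by_contra hij
    have : PushoutI.of (φ := φ) i x ∈ (PushoutI.base φ).range := by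
      rw [← PushoutI.inf_of_range_eq_base_range hφ hij]
      exact ⟨⟨x, rfl⟩, ⟨y, by simpa using he.symm⟩⟩
    obtain ⟨c, hc⟩ := this
    rw [← PushoutI.of_apply_eq_base φ i c] at hc
    exact nr x hx hx1 ⟨c, PushoutI.of_injective hφ i hc⟩
  | append_singleton L q ih =>
    intro hr i j x y hx hx1 he
    obtain ⟨k, z⟩ := q
    by_cases hk : k = i
    · subst hk
      have := ih hr.left (z * x * z⁻¹) y (by
          have := hx
          rw [← (MulAut.conj z).injective.isOfFinOrder_iff (f := (MulAut.conj z).toMonoidHom)] at this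
          simpa using this) (by
            intro h; apply hx1
            have : x = z⁻¹ * (z * x * z⁻¹) * z := by group
            rw [this, h]; group) (by
            rw [← he]; simp [mul_assoc])
      refine ⟨this.1, ?_⟩
      rw [pr_append]
      exact mul_mem this.2 (by simp)
    · exfalso
      obtain ⟨M, h1, h2, h3, h4⟩ := red_inv hr
      have hxr := nr x hx hx1
      have r1 : Red φ (⟨i, x⟩ :: M) := by
        refine h1.cons hxr ?_
        intro q hq
        have hh : q.1 ∈ M.head?.map Sigma.fst := Option.mem_map.2 ⟨q, hq, rfl⟩
        rw [h3] at hh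
        simp at hh
        simp only
        rw [← hh]
        exact fun h => hk h.symm
      have r2 : Red φ ((L ++ [⟨k, z⟩]) ++ (⟨i, x⟩ :: M)) := by
        refine hr.append r1 ?_
        simpa using hk
      refine r2.not_of hφ (by simp; omega) j ⟨y, ?_⟩
      rw [pr_append, pr_cons, h2, ← he, mul_assoc]

theorem malnormal (hφ : ∀ i, Function.Injective (φ i)) (htf : ∀ h : H, IsOfFinOrder h → h = 1) {i j : I} (x : G i) (y : G j)
    (hx : IsOfFinOrder x) (hx1 : x ≠ 1) (g : PushoutI φ)
    (he : g * PushoutI.of i x * g⁻¹ = PushoutI.of j y) :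
    i = j ∧ g ∈ (PushoutI.of (φ := φ) i).range := by
  rcases exists_red g with ⟨c, rfl⟩ | ⟨L, -, hr, rfl⟩
  · refine ⟨(malnormal_aux hφ htf [] (by simp [Red]) (φ i c * x * (φ i c)⁻¹) y ?_ ?_ ?_).1, ?_⟩
    · have := hx
      rw [← (MulAut.conj (φ i c)).injective.isOfFinOrder_iff
        (f := (MulAut.conj (φ i c)).toMonoidHom)] at this
      simpa using this
    · intro h; apply hx1
      have : x = (φ i c)⁻¹ * (φ i c * x * (φ i c)⁻¹) * φ i c := by group
      rw [this, h]; group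
    · rw [← he]; simp [PushoutI.of_apply_eq_base]
    · rw [← PushoutI.of_apply_eq_base φ i c]; exact ⟨_, rfl⟩
  · exact malnormal_aux hφ htf L hr x y hx hx1 he

end Push

section Cop
variable {I : Type} {G : I → Type} [∀ i, Group (G i)]

/-- free product as a pushout over the trivial group -/
def copEquiv : CoprodI G ≃* PushoutI (fun i => (1 : PUnit.{1} →* G i)) :=
  MonoidHom.toMulEquiv (PushoutI.ofCoprodI)
    (PushoutI.lift (fun _ => CoprodI.of) 1 (by intro i; ext; simp))
    (by ext i x; simp)
    (by
      apply PushoutI.hom_ext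
      · intro i; ext x; simp
      · ext x; obtain rfl : x = 1 := rfl
        simp only [map_one])

@[simp] theorem copEquiv_of {i} (x : G i) : copEquiv (CoprodI.of x) = PushoutI.of i x := by
  simp [copEquiv]

theorem cop_inj : ∀ i, Function.Injective ((fun i => (1 : PUnit.{1} →* G i)) i) :=
  fun _ _ _ _ => rfl

theorem cop_torsion_conj [Nonempty I] (g : CoprodI G) (hg : IsOfFinOrder g) :
    ∃ (i : I) (x : G i) (k : CoprodI G), g = k * CoprodI.of x * k⁻¹ := by
  obtain ⟨i, x, k, h⟩ := torsion_conj cop_inj (copEquiv g)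
    ((copEquiv (G := G)).injective.isOfFinOrder_iff (f := copEquiv.toMonoidHom) |>.2 hg)
  refine ⟨i, x, copEquiv.symm k, copEquiv.injective ?_⟩
  simp [h]

theorem cop_malnormal {i j : I} (x : G i) (y : G j)
    (hx : IsOfFinOrder x) (hx1 : x ≠ 1) (g : CoprodI G)
    (he : g * CoprodI.of x * g⁻¹ = CoprodI.of y) :
    i = j ∧ g ∈ (CoprodI.of : G i →* CoprodI G).range := by
  have := malnormal cop_inj (fun h _ => rfl) x y hx hx1 (copEquiv g) (by
    rw [← copEquiv_of, ← copEquiv_of, ← he]; simp)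
  refine ⟨this.1, ?_⟩
  obtain ⟨z, hz⟩ := this.2
  exact ⟨z, copEquiv.injective (by rw [← hz]; simp)⟩

/-- nonempty reduced words are nontrivial, list form. -/
theorem cop_word_ne_one (L : List (Σ i, G i)) (hL : L ≠ []) (h1 : ∀ p ∈ L, p.2 ≠ 1)
    (h2 : L.IsChain (fun p q => p.1 ≠ q.1)) :
    (L.map fun p => (CoprodI.of p.2 : CoprodI G)).prod ≠ 1 := by
  intro h
  have hr : Red (fun i => (1 : PUnit.{1} →* G i)) L := by
    refine ⟨?_, h2⟩
    rintro p hp ⟨c, hc⟩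
    exact h1 p hp (by simpa using hc.symm)
  apply hr.not_base cop_inj hL
  refine ⟨1, (map_one _).trans ?_⟩
  have := congrArg copEquiv h
  rw [map_list_prod] at this
  simpa [pr, Function.comp_def] using this.symm

theorem cop_exists_word (g : CoprodI G) : ∃ L : List (Σ i, G i), (∀ p ∈ L, p.2 ≠ 1) ∧
    L.IsChain (fun p q => p.1 ≠ q.1) ∧ (L.map fun p => (CoprodI.of p.2 : CoprodI G)).prod = g := by
  rcases exists_red (copEquiv g) with ⟨c, hc⟩ | ⟨L, -, hr, hL⟩
  · refine ⟨[], by simp, by simp, copEquiv.injective ?_⟩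
    rw [← hc]; obtain rfl : c = 1 := rfl
    simp only [List.map_nil, List.prod_nil, map_one]
  · refine ⟨L, fun p hp h1 => hr.1 p hp (by rw [h1]; exact one_mem _), hr.2, copEquiv.injective ?_⟩
    rw [← hL, map_list_prod]
    simp [pr, Function.comp_def]

/-- map of free products -/
def cmap {G' : I → Type} [∀ i, Group (G' i)] (f : ∀ i, G i →* G' i) : CoprodI G →* CoprodI G' :=
  CoprodI.lift fun i => CoprodI.of.comp (f i)

@[simp] theorem cmap_of {G' : I → Type} [∀ i, Group (G' i)] (f : ∀ i, G i →* G' i) {i} (x : G i) :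
    cmap f (CoprodI.of x) = CoprodI.of (f i x) := by simp [cmap]

theorem cmap_injective {G' : I → Type} [∀ i, Group (G' i)] (f : ∀ i, G i →* G' i)
    (hf : ∀ i, Function.Injective (f i)) : Function.Injective (cmap f) := by
  rw [injective_iff_map_eq_one]
  intro g hg
  obtain ⟨L, h1, h2, rfl⟩ := cop_exists_word g
  by_cases hL : L = []
  · subst hL; rfl
  exfalso
  refine cop_word_ne_one (L.map fun p => ⟨p.1, f p.1 p.2⟩) (by simpa using hL) ?_ ?_ ?_ (G := G')
  · intro p hp
    obtain ⟨q, hq, rfl⟩ := List.mem_map.1 hp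
    simpa using (map_ne_one_iff _ (hf _)).2 (h1 q hq)
  · rw [List.isChain_map]; exact h2
  · rw [← hg, map_list_prod]
    simp [Function.comp_def]

end Cop
end OR

namespace OR
open Monoid

/-- permutational wreath product (cocycles) -/
@[ext] structure Wr (Ω S : Type) where
  f : Ω → S
  p : Equiv.Perm Ω

namespace Wr
variable {Ω S : Type} [Group S]

instance : Mul (Wr Ω S) := ⟨fun a b => ⟨fun ω => a.f (b.p ω) * b.f ω, a.p * b.p⟩⟩
instance : One (Wr Ω S) := ⟨⟨fun _ => 1, 1⟩⟩
instance : Inv (Wr Ω S) := ⟨fun a => ⟨fun ω => (a.f (a.p⁻¹ ω))⁻¹, a.p⁻¹⟩⟩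

@[simp] theorem mul_f (a b : Wr Ω S) (ω) : (a * b).f ω = a.f (b.p ω) * b.f ω := rfl
@[simp] theorem mul_p (a b : Wr Ω S) : (a * b).p = a.p * b.p := rfl
@[simp] theorem one_f (ω) : (1 : Wr Ω S).f ω = 1 := rfl
@[simp] theorem one_p : (1 : Wr Ω S).p = 1 := rfl
@[simp] theorem inv_f (a : Wr Ω S) (ω) : (a⁻¹).f ω = (a.f (a.p⁻¹ ω))⁻¹ := rfl
@[simp] theorem inv_p (a : Wr Ω S) : (a⁻¹).p = a.p⁻¹ := rfl

instance : Group (Wr Ω S) := Group.ofLeftAxioms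
  (by intro a b c; ext <;> simp [mul_assoc])
  (by intro a; ext <;> simp)
  (by intro a; ext <;> simp)

/-- restriction of a cocycle to the stabilizer of a point. -/
def stab {H : Type} [Group H] (Θ : H →* Wr Ω S) (ω₀ : Ω) {A : Type} [Group A] (j : A →* H)
    (hA : ∀ a, (Θ (j a)).p ω₀ = ω₀) : A →* S where
  toFun a := (Θ (j a)).f ω₀
  map_one' := by simp
  map_mul' a b := by simp [hA]

@[simp] theorem stab_apply {H : Type} [Group H] (Θ : H →* Wr Ω S) (ω₀ : Ω) {A : Type} [Group A]
    (j : A →* H) (hA : ∀ a, (Θ (j a)).p ω₀ = ω₀) (a : A) : stab Θ ω₀ j hA a = (Θ (j a)).f ω₀ := rfl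

/-- coboundary -/
def cob {K : Type} [Group K] [MulAction K Ω] (z : Ω → S) : K →* Wr Ω S where
  toFun x := ⟨fun ω => z (x • ω) * (z ω)⁻¹, MulAction.toPerm x⟩
  map_one' := by ext <;> simp
  map_mul' a b := by ext <;> simp [mul_smul]

end Wr

section K
variable {U : Type} {C : U → Type} [∀ u, Group (C u)] (A : Subgroup (CoprodI C))

local notation "W" => CoprodI C
local notation "Om" => CoprodI C ⧸ A

variable (s : (CoprodI C ⧸ A) → CoprodI C) (hs : ∀ ω, (QuotientGroup.mk (s ω) : CoprodI C ⧸ A) = ω)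

/-- identity cocycle wrt. a section -/
def idc (w : CoprodI C) (ω : CoprodI C ⧸ A) : A :=
  ⟨(s (w • ω))⁻¹ * w * s ω, by
    rw [mul_assoc, ← QuotientGroup.eq, hs]
    conv_lhs => rw [← hs ω]
    rfl⟩

theorem idc_mul (w w' : CoprodI C) (ω) :
    idc A s hs (w * w') ω = idc A s hs w (w' • ω) * idc A s hs w' ω := by
  apply Subtype.ext
  simp [idc, mul_smul, mul_assoc]

/-- action of a factor -/
abbrev facAct (u : U) : MulAction (C u) (CoprodI C ⧸ A) :=
  MulAction.compHom _ (CoprodI.of : C u →* CoprodI C)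

/-- base point of the orbit -/
noncomputable def bp (u : U) (ω : CoprodI C ⧸ A) : CoprodI C ⧸ A :=
  letI := facAct A u
  (Quotient.mk (MulAction.orbitRel (C u) (CoprodI C ⧸ A)) ω).out

theorem bp_spec (u : U) (ω : CoprodI C ⧸ A) : ∃ x : C u, CoprodI.of x • bp A u ω = ω := by
  let := facAct A u
  have : (Quotient.mk (MulAction.orbitRel (C u) (CoprodI C ⧸ A)) (bp A u ω)) =
    (Quotient.mk (MulAction.orbitRel (C u) (CoprodI C ⧸ A)) ω) := Quotient.out_eq _
  have := Quotient.exact this.symm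
  exact this

theorem bp_smul (u : U) (x : C u) (ω : CoprodI C ⧸ A) : bp A u (CoprodI.of x • ω) = bp A u ω := by
  let := facAct A u
  unfold bp
  congr 1
  apply Quotient.sound
  exact ⟨x, rfl⟩

/-- transporter from the base point -/
noncomputable def bx (u : U) (ω : CoprodI C ⧸ A) : C u := (bp_spec A u ω).choose

theorem bx_spec (u : U) (ω) : CoprodI.of (bx A u ω) • bp A u ω = ω := (bp_spec A u ω).choose_spec

/-- the gauge elements -/
noncomputable def zet (u : U) (ω : CoprodI C ⧸ A) : A :=
  ⟨(s ω)⁻¹ * CoprodI.of (bx A u ω) * s (bp A u ω), by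
    rw [mul_assoc, ← QuotientGroup.eq, hs]
    conv_lhs => rw [← bx_spec A u ω, ← hs (bp A u ω)]
    rfl⟩

theorem zet_spec (u : U) (x : C u) (ω : CoprodI C ⧸ A) :
    ((zet A s hs u (CoprodI.of x • ω))⁻¹ * idc A s hs (CoprodI.of x) ω * zet A s hs u ω : A).1 =
    (s (bp A u ω))⁻¹ * CoprodI.of ((bx A u (CoprodI.of x • ω))⁻¹ * x * bx A u ω) * s (bp A u ω) := by
  simp only [zet, idc, Subgroup.coe_mul, InvMemClass.coe_inv, bp_smul, map_mul, map_inv]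
  group

theorem bx_stab (u : U) (x : C u) (ω : CoprodI C ⧸ A) :
    CoprodI.of ((bx A u (CoprodI.of x • ω))⁻¹ * x * bx A u ω) • bp A u ω = bp A u ω := by
  rw [map_mul, map_mul, mul_smul, mul_smul, bx_spec, map_inv, inv_smul_eq_iff]
  conv_rhs => rw [← bp_smul A u x ω]
  rw [bx_spec]

/-- cocycle given by gauge -/
noncomputable def gco {S : Type} [Group S] (z : U → (CoprodI C ⧸ A) → S) : CoprodI C →* Wr (CoprodI C ⧸ A) S :=
  CoprodI.lift fun u => letI := facAct A u; Wr.cob (z u)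

theorem gco_p {S : Type} [Group S] (z : U → (CoprodI C ⧸ A) → S) (w ω) :
    (gco A z w).p ω = w • ω := by
  induction w using CoprodI.induction_on generalizing ω with
  | one => simp
  | of i x => simp only [gco, CoprodI.lift_of]; rfl
  | mul a b iha ihb => simp [iha, ihb, mul_smul]

theorem gco_of {S : Type} [Group S] (z : U → (CoprodI C ⧸ A) → S) {u} (x : C u) (ω) :
    (gco A z (CoprodI.of x)).f ω = z u (CoprodI.of x • ω) * (z u ω)⁻¹ := by
  simp only [gco, CoprodI.lift_of]; rfl

theorem gco_mul {S : Type} [Group S] (z : U → (CoprodI C ⧸ A) → S) (w w' ω) :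
    (gco A z (w * w')).f ω = (gco A z w).f (w' • ω) * (gco A z w').f ω := by
  rw [map_mul, Wr.mul_f, gco_p]

theorem conj_fin {G : Type} [Group G] {x : G} (g : G) (hx : IsOfFinOrder x) :
    IsOfFinOrder (g * x * g⁻¹) := by
  have := hx
  rw [← (MulAut.conj g).injective.isOfFinOrder_iff
    (f := (MulAut.conj g).toMonoidHom)] at this
  simpa using this

theorem stab_one (a : A) : (a : CoprodI C) • (QuotientGroup.mk 1 : CoprodI C ⧸ A) = QuotientGroup.mk 1 := by
  have : (a : CoprodI C) • (QuotientGroup.mk 1 : CoprodI C ⧸ A) = QuotientGroup.mk ((a : CoprodI C) * 1) := rfl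
  rw [this, QuotientGroup.eq]; simp

theorem K1_aux (hfin : ∀ u (x : C u), IsOfFinOrder x) :
    ∃ (Z : Type) (θ : A →* FreeGroup Z),
      θ.ker = Subgroup.normalClosure {t : A | IsOfFinOrder t} := by
  classical
  let s : (CoprodI C ⧸ A) → CoprodI C := Quotient.out
  have hs : ∀ ω, (QuotientGroup.mk (s ω) : CoprodI C ⧸ A) = ω := fun ω => Quotient.out_eq ω
  let z : U → (CoprodI C ⧸ A) → FreeGroup (U × (CoprodI C ⧸ A)) := fun u ω => FreeGroup.of (u, ω)
  refine ⟨U × (CoprodI C ⧸ A), Wr.stab (gco A z) (QuotientGroup.mk 1) A.subtype (by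
    intro a; rw [gco_p]; exact stab_one A a), ?_⟩
  apply le_antisymm
  · let N := Subgroup.normalClosure {t : A | IsOfFinOrder t}
    let p : A →* A ⧸ N := QuotientGroup.mk' N
    let κ : FreeGroup (U × (CoprodI C ⧸ A)) →* A ⧸ N :=
      FreeGroup.lift fun q => p (zet A s hs q.1 q.2)
    have key : ∀ w ω, κ ((gco A z w).f ω) = p (idc A s hs w ω) := by
      intro w
      induction w using CoprodI.induction_on with
      | one => intro ω; simp [idc]; rfl
      | mul a b iha ihb => intro ω; rw [gco_mul, map_mul, iha, ihb, idc_mul, map_mul]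
      | of u x =>
        intro ω
        rw [gco_of]
        simp only [z, map_mul, map_inv, κ, FreeGroup.lift_apply_of]
        have h1 : p ((zet A s hs u (CoprodI.of x • ω))⁻¹ * idc A s hs (CoprodI.of x) ω
            * zet A s hs u ω) = 1 := by
          rw [QuotientGroup.mk'_apply, QuotientGroup.eq_one_iff]
          apply Subgroup.subset_normalClosure
          show IsOfFinOrder _
          rw [← A.subtype_injective.isOfFinOrder_iff, Subgroup.subtype_apply, zet_spec]
          have := conj_fin (s (bp A u ω))⁻¹ (MonoidHom.isOfFinOrder CoprodI.of
            (hfin u ((bx A u (CoprodI.of x • ω))⁻¹ * x * bx A u ω)))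
          rwa [inv_inv] at this
        rw [map_mul, map_mul, map_inv] at h1
        rw [mul_inv_eq_iff_eq_mul, ← inv_mul_eq_one, ← h1, mul_assoc]
    intro a ha
    rw [MonoidHom.mem_ker, Wr.stab_apply] at ha
    have := key (A.subtype a) (QuotientGroup.mk 1)
    rw [ha, map_one] at this
    set s0 : A := ⟨s (QuotientGroup.mk 1), by
      have := hs (QuotientGroup.mk 1)
      rw [eq_comm, QuotientGroup.eq] at this; simpa using this⟩ with hs0
    have h2 : idc A s hs (A.subtype a) (QuotientGroup.mk 1) = s0⁻¹ * a * s0 := by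
      apply Subtype.ext
      simp only [idc, Subgroup.subtype_apply, stab_one]
      rfl
    rw [h2] at this
    have hh1 := this
    have h3 : p a = 1 := by
      have : p a = p s0 * p (s0⁻¹ * a * s0) * (p s0)⁻¹ := by
        rw [← map_inv, ← map_mul, ← map_mul]; congr 1; group
      rw [this, ← hh1]; group
    rwa [QuotientGroup.mk'_apply, QuotientGroup.eq_one_iff] at h3
  · apply Subgroup.normalClosure_le_normal
    intro t ht
    rw [SetLike.mem_coe, MonoidHom.mem_ker]
    by_contra h
    exact (not_isOfFinOrder_of_isMulTorsionFree h) (MonoidHom.isOfFinOrder _ ht)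

theorem K2_aux (u0 : U) (r : A) (r0 : C u0) (hr0 : r.1 = CoprodI.of r0)
    (hfin : ∀ u (x : C u), IsOfFinOrder x)
    (htor : ∀ t : A, IsOfFinOrder t → ∃ (a : A) (k : ℤ), t = a * r ^ k * a⁻¹)
    (hnc : Subgroup.normalClosure {r} = ⊤) : A ≤ (CoprodI.of : C u0 →* CoprodI C).range := by
  classical
  let ω0 : CoprodI C ⧸ A := QuotientGroup.mk 1
  let s : (CoprodI C ⧸ A) → CoprodI C := fun ω =>
    if h : ∃ x : C u0, CoprodI.of x • ω0 = ω then CoprodI.of h.choose else Quotient.out ω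
  have hs : ∀ ω, (QuotientGroup.mk (s ω) : CoprodI C ⧸ A) = ω := by
    intro ω
    by_cases h : ∃ x : C u0, CoprodI.of x • ω0 = ω
    · simp only [s, dif_pos h]
      conv_rhs => rw [← h.choose_spec]
      show _ = QuotientGroup.mk (_ * 1)
      rw [mul_one]
    · simp only [s, dif_neg h]
      exact Quotient.out_eq ω
  let sp : U → (CoprodI C ⧸ A) → Prop := fun u ω => u = u0 ∧ ∃ x : C u0, CoprodI.of x • ω0 = ω
  have hsp : ∀ {ω}, sp u0 ω → s ω ∈ (CoprodI.of : C u0 →* CoprodI C).range := by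
    intro ω h
    simp only [s, dif_pos h.2]
    exact ⟨_, rfl⟩
  have sp_smul : ∀ u (x : C u) ω, sp u (CoprodI.of x • ω) ↔ sp u ω := by
    intro u x ω
    constructor
    · rintro ⟨rfl, y, hy⟩
      exact ⟨rfl, x⁻¹ * y, by rw [map_mul, mul_smul, hy, map_inv, inv_smul_smul]⟩
    · rintro ⟨rfl, y, hy⟩
      exact ⟨rfl, x * y, by rw [map_mul, mul_smul, hy]⟩
  have sp0 : sp u0 ω0 := ⟨rfl, 1, by simp⟩
  have free : ∀ u (x : C u) ω, ¬ sp u ω → CoprodI.of x • ω = ω → x = 1 := by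
    intro u x ω hn hx
    by_contra hx1
    have hmem : (s ω)⁻¹ * CoprodI.of x * s ω ∈ A := by
      rw [mul_assoc, ← QuotientGroup.eq, hs]
      conv_lhs => rw [← hx, ← hs ω]
      rfl
    have hfo : IsOfFinOrder (⟨_, hmem⟩ : A) := by
      rw [← A.subtype_injective.isOfFinOrder_iff, Subgroup.subtype_apply]
      have := conj_fin (s ω)⁻¹ (MonoidHom.isOfFinOrder CoprodI.of (hfin u x))
      rwa [inv_inv] at this
    obtain ⟨a, k, hak⟩ := htor _ hfo
    have h1 : (s ω)⁻¹ * CoprodI.of x * s ω = a.1 * CoprodI.of (r0 ^ k) * a.1⁻¹ := by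
      have := congrArg Subtype.val hak
      simpa [hr0] using this
    have h2 : (s ω * a.1)⁻¹ * CoprodI.of x * ((s ω * a.1)⁻¹)⁻¹ = CoprodI.of (r0 ^ k) := by
      have : (s ω * a.1)⁻¹ * CoprodI.of x * ((s ω * a.1)⁻¹)⁻¹ =
        a.1⁻¹ * ((s ω)⁻¹ * CoprodI.of x * s ω) * a.1 := by group
      rw [this, h1]; group
    obtain ⟨rfl, h3⟩ := cop_malnormal x (r0 ^ k) (hfin _ _) hx1 _ h2
    obtain ⟨y, hy⟩ := (inv_mem_iff.1 h3 : _ ∈ (CoprodI.of : C u →* CoprodI C).range)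
    refine hn ⟨rfl, y, ?_⟩
    rw [hy, mul_smul]
    have : a.1 • ω0 = ω0 := stab_one A a
    rw [this]
    show QuotientGroup.mk (s ω * 1) = _
    rw [mul_one, hs]
  let z : U → (CoprodI C ⧸ A) → FreeGroup (U × (CoprodI C ⧸ A)) := fun u ω =>
    if sp u ω then 1 else FreeGroup.of (u, ω)
  let θ : A →* FreeGroup (U × (CoprodI C ⧸ A)) := Wr.stab (gco A z) ω0 A.subtype (by
    intro a; rw [gco_p]; exact stab_one A a)
  have hθ : ∀ a, θ a = 1 := by
    have : Subgroup.normalClosure {r} ≤ θ.ker := by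
      apply Subgroup.normalClosure_le_normal
      rw [Set.singleton_subset_iff, SetLike.mem_coe, MonoidHom.mem_ker]
      simp only [θ, Wr.stab_apply, Subgroup.subtype_apply, hr0]
      rw [gco_of]
      simp only [z, sp_smul, if_pos sp0]; simp
    intro a
    exact this (by rw [hnc]; trivial)
  have hθ' : ∀ a : A, (gco A z a.1).f ω0 = 1 := hθ
  let β : (CoprodI C ⧸ A) → FreeGroup (U × (CoprodI C ⧸ A)) := fun ω => (gco A z (s ω)).f ω0
  have sω0 : ∀ ω, s ω • ω0 = ω := by
    intro ω
    show QuotientGroup.mk (s ω * 1) = _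
    rw [mul_one, hs]
  have hβ : ∀ w ω, (gco A z w).f ω = β (w • ω) * (β ω)⁻¹ := by
    intro w ω
    rw [eq_mul_inv_iff_mul_eq]
    have h1 : w * s ω = s (w • ω) * (idc A s hs w ω).1 := by simp [idc, mul_assoc]
    have h2 := congrArg (fun g => (gco A z g).f ω0) h1
    simp only [gco_mul, hθ', sω0, mul_one] at h2
    have : ((idc A s hs w ω).1) • ω0 = ω0 := stab_one A _
    rw [this] at h2
    exact h2
  have hβ0 : β ω0 = 1 := by
    have h0 : s ω0 ∈ A := by
      have := hs ω0
      rw [eq_comm, QuotientGroup.eq] at this; simpa using this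
    exact hθ' ⟨s ω0, h0⟩
  have hβsp : ∀ {ω}, sp u0 ω → β ω = 1 := by
    rintro _ ⟨-, x, rfl⟩
    have := hβ (CoprodI.of x) ω0
    rw [gco_of, hβ0] at this
    simp only [z, sp_smul, if_pos sp0] at this
    simpa using this.symm
  let κ : FreeGroup (U × (CoprodI C ⧸ A)) →* A := FreeGroup.lift fun q => zet A s hs q.1 q.2
  have key : ∀ w ω, ((κ (β (w • ω)))⁻¹ * idc A s hs w ω * κ (β ω) : A).1 ∈
      (CoprodI.of : C u0 →* CoprodI C).range := by
    intro w
    induction w using CoprodI.induction_on with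
    | one =>
      intro ω
      have : idc A s hs 1 ω = 1 := Subtype.ext (by simp [idc])
      rw [one_smul, this, mul_one, inv_mul_cancel]; exact one_mem _
    | mul a b iha ihb =>
      intro ω
      have := mul_mem (iha (b • ω)) (ihb ω)
      rw [idc_mul, mul_smul]
      convert this using 1
      rw [← Subgroup.coe_mul]
      congr 1; group
    | of u x =>
      intro ω
      by_cases hx : sp u ω
      · obtain rfl := hx.1
        have hx' := (sp_smul _ x ω).2 hx
        rw [hβsp hx, hβsp hx', map_one, inv_one, one_mul, mul_one]
        exact mul_mem (mul_mem (inv_mem (hsp hx')) ⟨x, rfl⟩) (hsp hx)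
      · have hx' := (not_congr (sp_smul _ x ω)).2 hx
        have h1 : idc A s hs (CoprodI.of x) ω = κ ((gco A z (CoprodI.of x)).f ω) := by
          rw [gco_of]
          simp only [z, if_neg hx, if_neg hx', map_mul, map_inv, κ, FreeGroup.lift_apply_of]
          rw [eq_mul_inv_iff_mul_eq, eq_comm, ← inv_mul_eq_one, ← mul_assoc]
          have hy := free u _ _ (by
            obtain ⟨y, hy⟩ := bp_spec A u ω
            rw [← sp_smul u y, hy]; exact hx) (bx_stab A u x ω)
          have := zet_spec A s hs u x ω
          rw [hy, map_one, mul_one, inv_mul_cancel] at this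
          have h2 : (zet A s hs u (CoprodI.of x • ω))⁻¹ * idc A s hs (CoprodI.of x) ω *
            zet A s hs u ω = 1 := Subtype.ext this
          exact h2
        rw [h1, hβ, map_mul, map_inv]
        have : (κ (β (CoprodI.of x • ω)))⁻¹ * (κ (β (CoprodI.of x • ω)) * (κ (β ω))⁻¹) * κ (β ω) = 1 := by
          group
        rw [this]; exact one_mem _
  intro a ha
  have := key a ω0
  have h1 : a • ω0 = ω0 := stab_one A ⟨a, ha⟩
  rw [h1, hβ0, map_one, inv_one, one_mul, mul_one] at this
  have h2 : (idc A s hs a ω0).1 = (s ω0)⁻¹ * a * s ω0 := by simp only [idc, h1]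
  rw [h2] at this
  have h3 := mul_mem (mul_mem (hsp sp0) this) (inv_mem (hsp sp0))
  convert h3 using 1
  group

/-- Kurosh-type statement. -/
theorem K1 {A : Type} [Group A] (hfin : ∀ u (x : C u), IsOfFinOrder x) (j : A →* CoprodI C)
    (hj : Function.Injective j) : ∃ (Z : Type) (θ : A →* FreeGroup Z),
      θ.ker = Subgroup.normalClosure {t : A | IsOfFinOrder t} := by
  obtain ⟨Z, θ, h⟩ := K1_aux j.range hfin
  let e : A ≃* j.range := MonoidHom.ofInjective hj
  refine ⟨Z, θ.comp e.toMonoidHom, ?_⟩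
  rw [← MonoidHom.comap_ker, h]
  refine (Subgroup.comap_equiv_eq_map_symm' e _).trans ?_
  refine (Subgroup.map_normalClosure _ _ e.symm.surjective).trans ?_
  congr 1
  ext t
  simp only [Set.mem_image, Set.mem_ofPred_eq]
  constructor
  · rintro ⟨x, hx, rfl⟩
    exact MonoidHom.isOfFinOrder e.symm.toMonoidHom hx
  · intro ht
    exact ⟨e t, MonoidHom.isOfFinOrder e.toMonoidHom ht, by simp⟩

theorem K2 {A : Type} [Group A] (hfin : ∀ u (x : C u), IsOfFinOrder x) (j : A →* CoprodI C)
    (hj : Function.Injective j) (r : A) (hr : IsOfFinOrder r)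
    (htor : ∀ t : A, IsOfFinOrder t → ∃ (a : A) (k : ℤ), t = a * r ^ k * a⁻¹)
    (hnc : Subgroup.normalClosure {r} = ⊤) (a : A) : IsOfFinOrder a := by
  rcases isEmpty_or_nonempty U with hU | hU
  · have : j a = 1 := by
      generalize j a = g
      induction g using CoprodI.induction_on with
      | one => rfl
      | of i _ => exact (hU.false i).elim
      | mul _ _ h1 h2 => rw [h1, h2, mul_one]
    rw [hj (this.trans j.map_one.symm)]; simp
  obtain ⟨u0, r0, k, hk⟩ := cop_torsion_conj (j r) (MonoidHom.isOfFinOrder j hr)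
  let j' : A →* CoprodI C := (MulAut.conj k⁻¹).toMonoidHom.comp j
  have hj' : Function.Injective j' := (MulAut.conj k⁻¹).injective.comp hj
  let e : A ≃* j'.range := MonoidHom.ofInjective hj'
  have := K2_aux j'.range u0 (e r) r0 (by
      show j' r = _
      simp only [j', MonoidHom.comp_apply, hk]
      simp [mul_assoc]) hfin (by
      intro t ht
      obtain ⟨a, k, h⟩ := htor (e.symm t) (MonoidHom.isOfFinOrder e.symm.toMonoidHom ht)
      refine ⟨e a, k, e.symm.injective ?_⟩
      simp [h]) (by
      have := Subgroup.map_normalClosure {r} e.toMonoidHom e.surjective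
      rw [hnc] at this
      simp only [Set.image_singleton] at this
      rw [eq_comm]
      rw [← MonoidHom.range_eq_map] at this
      rw [← (MonoidHom.range_eq_top (f := e.toMonoidHom)).2 e.surjective]
      exact this)
  obtain ⟨x, hx⟩ := this (e a).2
  have : j' a = CoprodI.of x := hx.symm
  rw [← hj'.isOfFinOrder_iff, this]
  exact MonoidHom.isOfFinOrder _ (hfin _ _)

end K
end OR

namespace OR
open Monoid

section Free
variable {X : Type}

/-- subgroup generated by a set of letters -/
def Sub (S : Set X) : Subgroup (FreeGroup X) := Subgroup.closure (FreeGroup.of '' S)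

theorem of_mem_Sub {S : Set X} {x : X} (h : x ∈ S) : FreeGroup.of x ∈ Sub S :=
  Subgroup.subset_closure ⟨x, h, rfl⟩

theorem Sub_le {S : Set X} {K : Subgroup (FreeGroup X)} (h : ∀ x ∈ S, FreeGroup.of x ∈ K) :
    Sub S ≤ K := by
  rw [Sub, Subgroup.closure_le]; rintro _ ⟨x, hx, rfl⟩; exact h x hx

theorem Sub_map {Y : Type} {S : Set X} {S' : Set Y} (f : FreeGroup X →* FreeGroup Y)
    (h : ∀ x ∈ S, f (FreeGroup.of x) ∈ Sub S') {w} (hw : w ∈ Sub S) : f w ∈ Sub S' :=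
  Sub_le (K := (Sub S').comap f) h hw

theorem Sub_eq {G : Type} [Group G] {S : Set X} (f g : FreeGroup X →* G)
    (h : ∀ x ∈ S, f (FreeGroup.of x) = g (FreeGroup.of x)) {w} (hw : w ∈ Sub S) : f w = g w :=
  Sub_le (K := f.eqLocus g) h hw

theorem mk_cons (x : X) (c : Bool) (L) : FreeGroup.mk ((x, c) :: L) =
    (cond c (FreeGroup.of x) (FreeGroup.of x)⁻¹) * FreeGroup.mk L := by
  cases c
  · rw [show (x, false) :: L = [(x, false)] ++ L from rfl, ← FreeGroup.mul_mk]
    rfl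
  · rw [show (x, true) :: L = [(x, true)] ++ L from rfl, ← FreeGroup.mul_mk]
    rfl

theorem mk_mem_Sub {S : Set X} {L : List (X × Bool)} (h : ∀ p ∈ L, p.1 ∈ S) :
    FreeGroup.mk L ∈ Sub S := by
  induction L with
  | nil => exact one_mem _
  | cons p L ih =>
    obtain ⟨x, c⟩ := p
    have hx := of_mem_Sub (h _ List.mem_cons_self)
    rw [mk_cons]
    refine mul_mem ?_ (ih fun p hp => h p (List.mem_cons_of_mem _ hp))
    cases c
    · exact inv_mem hx
    · exact hx

theorem exists_mk (w : FreeGroup X) : ∃ L, FreeGroup.mk L = w := Quot.exists_rep w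

open Classical in
/-- retraction killing the letters outside `S` -/
noncomputable def ret (S : Set X) : FreeGroup X →* FreeGroup X :=
  FreeGroup.lift fun x => if x ∈ S then FreeGroup.of x else 1

theorem ret_of_mem {S : Set X} {w : FreeGroup X} (h : w ∈ Sub S) : ret S w = w := by
  refine Sub_eq (ret S) (MonoidHom.id _) ?_ h
  intro x hx; simp [ret, hx]

open Classical in
theorem ret_mk (S : Set X) (L : List (X × Bool)) :
    ret S (FreeGroup.mk L) = FreeGroup.mk (L.filter fun p => p.1 ∈ S) := by
  induction L with
  | nil => exact map_one _
  | cons p L ih =>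
    obtain ⟨x, c⟩ := p
    rw [mk_cons, map_mul, ih]
    by_cases hx : x ∈ S
    · rw [List.filter_cons_of_pos (by simpa using hx), mk_cons]
      cases c <;> simp [ret, hx]
    · rw [List.filter_cons_of_neg (by simpa using hx)]
      cases c <;> simp [ret, hx]

/-- essential letters -/
def Ess (R : FreeGroup X) (x : X) : Prop := ∀ g : FreeGroup X, g * R * g⁻¹ ∉ Sub ({x}ᶜ : Set X)

theorem Ess.conj {R R' : FreeGroup X} {x : X} (h : Ess R x) (hc : IsConj R R') : Ess R' x := by
  obtain ⟨c, rfl⟩ := isConj_iff.1 hc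
  intro g hg
  apply h (g * c)
  convert hg using 1
  group

/-- Freiheitssatz property -/
def FS (R : FreeGroup X) : Prop :=
  ∀ x, Ess R x → ∀ w ∈ Sub ({x}ᶜ : Set X), w ∈ Subgroup.normalClosure {R} → w = 1

theorem nc_conj {G : Type} [Group G] {R R' : G} (hc : IsConj R R') :
    Subgroup.normalClosure {R} = Subgroup.normalClosure {R'} := by
  have : ∀ {R R' : G}, IsConj R R' →
    Subgroup.normalClosure {R} ≤ Subgroup.normalClosure {R'} := by
    intro R R' hc
    apply Subgroup.normalClosure_le_normal
    rw [Set.singleton_subset_iff]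
    obtain ⟨c, rfl⟩ := isConj_iff.1 hc.symm
    exact Subgroup.normalClosure_normal.conj_mem _ (Subgroup.subset_normalClosure (Set.mem_singleton _)) c
  exact le_antisymm (this hc) (this hc.symm)

theorem FS.conj {R R' : FreeGroup X} (h : FS R) (hc : IsConj R R') : FS R' := by
  intro x hx w hw hw'
  rw [← nc_conj hc] at hw'
  exact h x (hx.conj hc.symm) w hw hw'

/-- minimal length of a conjugate -/
noncomputable def csize (R : FreeGroup X) : ℕ :=
  sInf {k | ∃ L, L.length = k ∧ IsConj (FreeGroup.mk L) R}

theorem csize_le {R : FreeGroup X} {L} (h : IsConj (FreeGroup.mk L) R) : csize R ≤ L.length :=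
  Nat.sInf_le ⟨L, rfl, h⟩

theorem exists_min (R : FreeGroup X) : ∃ L, IsConj (FreeGroup.mk L) R ∧ L.length = csize R ∧
    ∀ p ∈ L, Ess R p.1 := by
  classical
  obtain ⟨L, h1, h2⟩ : csize R ∈ {k | ∃ L, L.length = k ∧ IsConj (FreeGroup.mk L) R} := by
    apply Nat.sInf_mem
    obtain ⟨L, rfl⟩ := exists_mk R
    exact ⟨_, L, rfl, IsConj.refl _⟩
  refine ⟨L, h2, h1, ?_⟩
  intro p hp g hg
  have hc : IsConj (FreeGroup.mk L) (g * R * g⁻¹) := h2.trans (isConj_iff.2 ⟨g, rfl⟩)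
  have h3 := (ret ({p.1}ᶜ : Set X)).map_isConj hc
  rw [ret_of_mem hg, ret_mk] at h3
  have h4 := csize_le (R := R) (h3.trans (isConj_iff.2 ⟨g⁻¹, by group⟩))
  rw [← h1] at h4
  refine absurd h4 (not_le.2 ?_)
  rw [List.length_filter_lt_length_iff_exists]
  exact ⟨p, hp, by simp⟩

theorem Ess.mem {R : FreeGroup X} {x : X} (h : Ess R x) {L} (hc : IsConj (FreeGroup.mk L) R) :
    ∃ p ∈ L, p.1 = x := by
  by_contra hn
  push Not at hn
  obtain ⟨c, hc⟩ := isConj_iff.1 hc.symm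
  apply h c
  rw [hc]
  exact mk_mem_Sub hn

open Classical in
/-- exponent sum -/
noncomputable def exps (x : X) : FreeGroup X →* Multiplicative ℤ :=
  FreeGroup.lift fun y => if y = x then Multiplicative.ofAdd 1 else 1

theorem exps_Sub {x : X} {w} (hw : w ∈ Sub ({x}ᶜ : Set X)) : exps x w = 1 := by
  refine Sub_eq (exps x) 1 ?_ hw
  intro y hy
  simp [exps, show y ≠ x from hy]

@[simp] theorem exps_self (x : X) : exps x (FreeGroup.of x) = Multiplicative.ofAdd 1 := by
  simp [exps]

@[simp] theorem exps_ne {x y : X} (h : y ≠ x) : exps x (FreeGroup.of y) = 1 := by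
  simp [exps, h]

theorem hom_conj {G : Type} [CommGroup G] (f : FreeGroup X →* G) {a b} (h : IsConj a b) : f a = f b := by
  obtain ⟨c, rfl⟩ := isConj_iff.1 h
  simp [mul_comm]

theorem hom_nc {G : Type} [CommGroup G] (f : FreeGroup X →* G) {a b} (ha : f a = 1)
    (h : b ∈ Subgroup.normalClosure {a}) : f b = 1 := by
  have : Subgroup.normalClosure {a} ≤ f.ker := by
    apply Subgroup.normalClosure_le_normal
    simpa using ha
  exact this h

theorem nc_map {G G' : Type} [Group G] [Group G'] (f : G →* G') {a b : G} 
    (h : b ∈ Subgroup.normalClosure {a}) : f b ∈ Subgroup.normalClosure {f a} := by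
  have : Subgroup.normalClosure {a} ≤ (Subgroup.normalClosure {f a}).comap f := by
    apply Subgroup.normalClosure_le_normal
    rw [Set.singleton_subset_iff]
    exact Subgroup.subset_normalClosure (Set.mem_singleton _)
  exact this h

theorem nc_pow_le {G : Type} [Group G] (a : G) (n : ℕ) :
    Subgroup.normalClosure {a ^ n} ≤ Subgroup.normalClosure {a} := by
  apply Subgroup.normalClosure_le_normal
  rw [Set.singleton_subset_iff]
  exact pow_mem (Subgroup.subset_normalClosure (Set.mem_singleton _)) n

/-! presented groups with one relator -/

/-- lift -/
def pgLift {G : Type} [Group G] {r : FreeGroup X} (f : FreeGroup X →* G) (h : f r = 1) :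
    PresentedGroup {r} →* G :=
  QuotientGroup.lift (Subgroup.normalClosure {r}) f (by
    intro a ha
    have : Subgroup.normalClosure {r} ≤ f.ker := by
      apply Subgroup.normalClosure_le_normal
      simpa using h
    exact this ha)

@[simp] theorem pgLift_mk {G : Type} [Group G] {r : FreeGroup X} (f : FreeGroup X →* G) (h : f r = 1)
    (w) : pgLift f h (PresentedGroup.mk {r} w) = f w := rfl

theorem mk_eq_one {r : FreeGroup X} {w : FreeGroup X} :
    PresentedGroup.mk {r} w = 1 ↔ w ∈ Subgroup.normalClosure {r} :=
  QuotientGroup.eq_one_iff _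

theorem mk_self {r : FreeGroup X} : PresentedGroup.mk {r} r = 1 :=
  mk_eq_one.2 (Subgroup.subset_normalClosure (Set.mem_singleton _))

/-- rewriting process -/
noncomputable def iota (s : X) : FreeGroup (X × ℤ) →* FreeGroup X :=
  open Classical in
  FreeGroup.lift fun p => if p.1 = s then 1 else
    FreeGroup.of s ^ p.2 * FreeGroup.of p.1 * (FreeGroup.of s ^ p.2)⁻¹

theorem iota_of {s x : X} (h : x ≠ s) (i : ℤ) : iota s (FreeGroup.of (x, i)) =
    FreeGroup.of s ^ i * FreeGroup.of x * (FreeGroup.of s ^ i)⁻¹ := by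
  simp [iota, h]

open Classical in
/-- substitution -/
noncomputable def subst (s : X) (a : ℤ) (m : X → ℤ) : FreeGroup X →* FreeGroup X :=
  FreeGroup.lift fun x => if x = s then FreeGroup.of s ^ a else FreeGroup.of x * FreeGroup.of s ^ m x

theorem rewrite_list (s : X) (a : ℤ) (m : X → ℤ) (L : List (X × Bool)) :
    ∃ (M : List ((X × ℤ) × Bool)) (e : ℤ), 
      subst s a m (FreeGroup.mk L) = iota s (FreeGroup.mk M) * FreeGroup.of s ^ e ∧
      M.length ≤ L.length ∧ ((∃ p ∈ L, p.1 = s) → M.length < L.length) ∧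
      (∀ q ∈ M, q.1.1 ≠ s ∧ ∃ p ∈ L, p.1 = q.1.1) := by
  classical
  induction L using List.reverseRecOn with
  | nil => exact ⟨[], 0, by simp [FreeGroup.one_eq_mk.symm], by simp⟩
  | append_singleton L p ih =>
    obtain ⟨M, e, h1, h2, h3, h4⟩ := ih
    obtain ⟨x, c⟩ := p
    have hm : FreeGroup.mk (L ++ [(x, c)]) =
        FreeGroup.mk L * (cond c (FreeGroup.of x) (FreeGroup.of x)⁻¹) := by
      rw [← FreeGroup.mul_mk, mk_cons]
      rw [← FreeGroup.one_eq_mk, mul_one]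
    have h4' : ∀ q ∈ M, q.1.1 ≠ s ∧ ∃ p ∈ L ++ [(x, c)], p.1 = q.1.1 := by
      intro q hq
      obtain ⟨h, p, hp, hp'⟩ := h4 q hq
      exact ⟨h, p, by simp [hp], hp'⟩
    by_cases hx : x = s
    · subst hx
      refine ⟨M, e + cond c a (-a), ?_, by simp; omega, by intro; simp; omega, h4'⟩
      rw [hm, map_mul, h1, mul_assoc, zpow_add]
      cases c <;> simp [subst]
    · have h3' : ∀ i c', (∃ p ∈ L ++ [(x, c)], p.1 = s) → 
          (M ++ [((x, i), c')]).length < (L ++ [(x, c)]).length := by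
        rintro i c' ⟨p, hp, hp'⟩
        rcases List.mem_append.1 hp with hp | hp
        · simpa using h3 ⟨p, hp, hp'⟩
        · simp at hp; subst hp; exact absurd hp' hx
      have h4'' : ∀ i c', ∀ q ∈ M ++ [((x, i), c')], q.1.1 ≠ s ∧ ∃ p ∈ L ++ [(x, c)], p.1 = q.1.1 := by
        intro i c' q hq
        rcases List.mem_append.1 hq with hq | hq
        · exact h4' q hq
        · simp at hq; subst hq; exact ⟨hx, (x, c), by simp, rfl⟩
      have hM : ∀ i, FreeGroup.mk (M ++ [((x, i), c)]) =
        FreeGroup.mk M * (cond c (FreeGroup.of (x, i)) (FreeGroup.of (x, i))⁻¹) := by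
        intro i
        rw [← FreeGroup.mul_mk, mk_cons]
        rw [← FreeGroup.one_eq_mk, mul_one]
      cases c
      · refine ⟨M ++ [((x, e - m x), false)], e - m x, ?_, by simpa using h2, h3' _ _, h4'' _ _⟩
        rw [hm, hM, map_mul, map_mul, h1]
        simp only [cond_false, map_inv, iota_of hx]
        simp only [subst, FreeGroup.lift_apply_of, if_neg hx]
        simp only [zpow_sub]
        group
      · refine ⟨M ++ [((x, e), true)], e + m x, ?_, by simpa using h2, h3' _ _, h4'' _ _⟩
        rw [hm, hM, map_mul, map_mul, h1]
        simp only [cond_true, iota_of hx]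
        simp only [subst, FreeGroup.lift_apply_of, if_neg hx]
        simp only [zpow_add]
        group

end Free

section HN
variable {E G0 K : Type} [Group E] [Group G0] [Group K] (i1 i2 : E →* G0)
  (h1 : Function.Injective i1) (h2 : Function.Injective i2)

/-- HNN extension given by two embeddings -/
abbrev HN := HNNExtension G0 i1.range i2.range
  ((MonoidHom.ofInjective h1).symm.trans (MonoidHom.ofInjective h2))

theorem HN.equiv_apply (e : E) (h) :
    (((MonoidHom.ofInjective h1).symm.trans (MonoidHom.ofInjective h2)) ⟨i1 e, h⟩ : G0) = i2 e := by
  have : (⟨i1 e, h⟩ : i1.range) = MonoidHom.ofInjective h1 e := rfl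
  rw [this, MulEquiv.trans_apply, MulEquiv.symm_apply_apply]
  rfl

theorem HN.t_of (e : E) : (HNNExtension.t : HN i1 i2 h1 h2) * HNNExtension.of (i1 e) =
    HNNExtension.of (i2 e) * HNNExtension.t := by
  have := HNNExtension.t_mul_of (G := G0) (A := i1.range) (B := i2.range)
    (φ := (MonoidHom.ofInjective h1).symm.trans (MonoidHom.ofInjective h2)) ⟨i1 e, MonoidHom.mem_range.2 ⟨e, rfl⟩⟩
  rwa [HN.equiv_apply i1 i2 h1 h2 e (MonoidHom.mem_range.2 ⟨e, rfl⟩)] at this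

/-- lift from HN -/
noncomputable def HN.lift (f : G0 →* K) (x : K) (h : ∀ e, x * f (i1 e) = f (i2 e) * x) : HN i1 i2 h1 h2 →* K :=
  HNNExtension.lift f x (by
    rintro ⟨x', hx'⟩
    obtain ⟨e, rfl⟩ := MonoidHom.mem_range.1 hx'
    rw [HN.equiv_apply i1 i2 h1 h2 e hx']
    exact h e)

@[simp] theorem HN.lift_of (f : G0 →* K) (x : K) (h) (g) :
    HN.lift i1 i2 h1 h2 f x h (HNNExtension.of g) = f g := by simp [HN.lift]
@[simp] theorem HN.lift_t (f : G0 →* K) (x : K) (h) :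
    HN.lift i1 i2 h1 h2 f x h HNNExtension.t = x := by simp [HN.lift]

theorem HN.of_inj : Function.Injective (HNNExtension.of : G0 →* HN i1 i2 h1 h2) :=
  HNNExtension.of_injective _

end HN

section Mag
variable {X : Type} (s z0 : X) (a b : ℤ) (R0 : FreeGroup (X × ℤ)) (n : ℕ)

/-- window for the associated subgroup -/
def SL : Set (X × ℤ) := {p | p.1 = z0 → a ≤ p.2 ∧ p.2 < b}

/-- shift -/
def sh : FreeGroup (X × ℤ) →* FreeGroup (X × ℤ) := FreeGroup.map fun p => (p.1, p.2 + 1)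

theorem sh_inj : Function.Injective (sh (X := X)) := by
  apply FreeGroup.map_injective
  rintro ⟨x, i⟩ ⟨y, j⟩ h
  simp only [Prod.mk.injEq, add_left_inj] at h
  exact Prod.ext h.1 h.2

@[simp] theorem sh_of (p : X × ℤ) : sh (FreeGroup.of p) = FreeGroup.of (p.1, p.2 + 1) := by simp [sh]

/-- first embedding -/
def mi1 : Sub (SL z0 a b) →* PresentedGroup {R0 ^ n} :=
  (PresentedGroup.mk {R0 ^ n}).comp (Sub (SL z0 a b)).subtype

/-- second embedding -/
def mi2 : Sub (SL z0 a b) →* PresentedGroup {R0 ^ n} :=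
  (PresentedGroup.mk {R0 ^ n}).comp (sh.comp (Sub (SL z0 a b)).subtype)

variable {z0 a b R0}

theorem mi1_inj (hFS : FS R0) (hb : Ess R0 (z0, b)) :
    Function.Injective (mi1 z0 a b R0 n) := by
  rw [injective_iff_map_eq_one]
  rintro ⟨w, hw⟩ h
  simp only [mi1, MonoidHom.comp_apply, Subgroup.subtype_apply] at h
  rw [mk_eq_one] at h
  refine Subtype.ext (hFS _ hb w ?_ (nc_pow_le _ _ h))
  refine Sub_map (MonoidHom.id _) ?_ hw
  rintro ⟨x, i⟩ hx
  apply of_mem_Sub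
  rintro heq
  have heq : (x, i) = (z0, b) := heq
  simp only [Prod.mk.injEq] at heq
  have := hx heq.1
  simp only at this
  omega

theorem mi2_inj (hFS : FS R0) (ha : Ess R0 (z0, a)) :
    Function.Injective (mi2 z0 a b R0 n) := by
  rw [injective_iff_map_eq_one]
  rintro ⟨w, hw⟩ h
  simp only [mi2, MonoidHom.comp_apply, Subgroup.subtype_apply] at h
  rw [mk_eq_one] at h
  refine Subtype.ext (sh_inj ((hFS _ ha (sh w) ?_ (nc_pow_le _ _ h)).trans (map_one _).symm))
  refine Sub_map sh ?_ hw
  rintro ⟨x, i⟩ hx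
  rw [sh_of]
  apply of_mem_Sub
  rintro heq
  have heq : (x, i + 1) = (z0, a) := heq
  simp only [Prod.mk.injEq] at heq
  have := hx heq.1
  simp only at this
  omega

variable (h1 : Function.Injective (mi1 z0 a b R0 n)) (h2 : Function.Injective (mi2 z0 a b R0 n))

/-- full window -/
def Win (s z0 : X) (a b : ℤ) : Set (X × ℤ) := {p | p.1 ≠ s ∧ (p.1 = z0 → a ≤ p.2 ∧ p.2 ≤ b)}

local notation "HH" => HN (mi1 z0 a b R0 n) (mi2 z0 a b R0 n) h1 h2

open Classical in
/-- hom from the free group -/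
noncomputable def mPhi : FreeGroup X →* HN (mi1 z0 a b R0 n) (mi2 z0 a b R0 n) h1 h2 :=
  FreeGroup.lift fun x => if x = s then HNNExtension.t else
    (HNNExtension.t ^ a)⁻¹ * HNNExtension.of (PresentedGroup.mk _ (FreeGroup.of (x, a))) *
      HNNExtension.t ^ a

theorem t_of_gen (p : X × ℤ) (hp : p ∈ SL z0 a b) :
    (HNNExtension.t : HN (mi1 z0 a b R0 n) (mi2 z0 a b R0 n) h1 h2) *
      HNNExtension.of (PresentedGroup.mk _ (FreeGroup.of p)) * HNNExtension.t⁻¹ =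
      HNNExtension.of (PresentedGroup.mk _ (FreeGroup.of (p.1, p.2 + 1))) := by
  have := HN.t_of _ _ h1 h2 ⟨FreeGroup.of p, of_mem_Sub hp⟩
  rw [mul_inv_eq_iff_eq_mul]
  simpa [mi1, mi2] using this

theorem t_up (x : X) (k : ℕ) (hk : x = z0 → a + k ≤ b) :
    (HNNExtension.t : HN (mi1 z0 a b R0 n) (mi2 z0 a b R0 n) h1 h2) ^ k *
      HNNExtension.of (PresentedGroup.mk _ (FreeGroup.of (x, a))) * (HNNExtension.t ^ k)⁻¹ =
      HNNExtension.of (PresentedGroup.mk _ (FreeGroup.of (x, a + k))) := by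
  induction k with
  | zero => simp
  | succ k ih =>
    have ih := ih (fun h => by have := hk h; push_cast at this; omega)
    have := t_of_gen n h1 h2 (x, a + k) (by
      intro h; have := hk h; push_cast at this; simp only; omega)
    rw [← ih] at this
    simp only at this
    rw [show a + ((k + 1 : ℕ) : ℤ) = a + k + 1 by push_cast; ring, ← this, pow_succ']
    group

theorem t_down (x : X) (hx : x ≠ z0) (k : ℕ) :
    (HNNExtension.t ^ k : HN (mi1 z0 a b R0 n) (mi2 z0 a b R0 n) h1 h2)⁻¹ *
      HNNExtension.of (PresentedGroup.mk _ (FreeGroup.of (x, a))) * (HNNExtension.t ^ k) =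
      HNNExtension.of (PresentedGroup.mk _ (FreeGroup.of (x, a - k))) := by
  induction k with
  | zero => simp
  | succ k ih =>
    have := t_of_gen n h1 h2 (x, a - k - 1) (fun h => absurd h hx)
    simp only [sub_add_cancel] at this
    rw [← ih] at this
    rw [show a - ((k + 1 : ℕ) : ℤ) = a - k - 1 by push_cast; ring, pow_succ]
    rw [mul_inv_eq_iff_eq_mul, ← eq_inv_mul_iff_mul_eq] at this
    rw [this]
    group

theorem t_all (x : X) (i : ℤ) (h : x = z0 → a ≤ i ∧ i ≤ b) :
    (HNNExtension.t : HN (mi1 z0 a b R0 n) (mi2 z0 a b R0 n) h1 h2) ^ (i - a) *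
      HNNExtension.of (PresentedGroup.mk _ (FreeGroup.of (x, a))) * (HNNExtension.t ^ (i - a))⁻¹ =
      HNNExtension.of (PresentedGroup.mk _ (FreeGroup.of (x, i))) := by
  rcases le_or_gt a i with hi | hi
  · obtain ⟨k, hk⟩ := Int.eq_ofNat_of_zero_le (sub_nonneg.2 hi)
    rw [hk, zpow_natCast, t_up n h1 h2 x k (by intro hx; have := h hx; omega)]
    rw [← hk]; simp
  · obtain ⟨k, hk⟩ := Int.eq_ofNat_of_zero_le (sub_nonneg.2 hi.le)
    have hx : x ≠ z0 := fun hx => by have := h hx; omega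
    rw [show i - a = -(k : ℤ) by omega, zpow_neg, zpow_natCast, inv_inv, t_down n h1 h2 x hx k]
    rw [← hk]; simp

theorem mPhi_iota {w : FreeGroup (X × ℤ)} (hw : w ∈ Sub (Win s z0 a b)) :
    mPhi s n h1 h2 (iota s w) = HNNExtension.of (PresentedGroup.mk _ w) := by
  refine Sub_eq ((mPhi s n h1 h2).comp (iota s)) (HNNExtension.of.comp (PresentedGroup.mk _)) ?_ hw
  rintro ⟨x, i⟩ ⟨hx, hi⟩
  simp only [MonoidHom.comp_apply]
  rw [← t_all n h1 h2 x i hi, iota_of hx]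
  simp only [mPhi, map_mul, map_zpow, map_inv, FreeGroup.lift_apply_of, if_true, if_neg hx]
  rw [zpow_sub]
  group

/-- the descended hom -/
noncomputable def mPhi' (hR : R0 ∈ Sub (Win s z0 a b)) :
    PresentedGroup {iota s R0 ^ n} →* HN (mi1 z0 a b R0 n) (mi2 z0 a b R0 n) h1 h2 :=
  pgLift (mPhi s n h1 h2) (by
    rw [← map_pow, mPhi_iota s n h1 h2 (pow_mem hR n), mk_self, map_one])

theorem iota_sh (w : FreeGroup (X × ℤ)) : iota s (sh w) = FreeGroup.of s * iota s w * (FreeGroup.of s)⁻¹ := by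
  have : (iota s).comp sh = (MulAut.conj (FreeGroup.of s)).toMonoidHom.comp (iota s) := by
    ext ⟨x, i⟩
    by_cases hx : x = s
    · simp [iota, hx]
    · simp [iota, hx, zpow_add]
      group
  exact DFunLike.congr_fun this w

/-- the retraction -/
noncomputable def mPsi : HN (mi1 z0 a b R0 n) (mi2 z0 a b R0 n) h1 h2 →* PresentedGroup {iota s R0 ^ n} :=
  HN.lift _ _ h1 h2 (pgLift ((PresentedGroup.mk _).comp (iota s)) (by
      rw [MonoidHom.comp_apply, map_pow]; exact mk_self))
    (PresentedGroup.mk _ (FreeGroup.of s)) (by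
      rintro ⟨w, hw⟩
      simp only [mi1, mi2, MonoidHom.comp_apply, Subgroup.subtype_apply, pgLift_mk, iota_sh]
      simp)

theorem mPsi_mPhi (w : FreeGroup X) : mPsi s n h1 h2 (mPhi s n h1 h2 w) = PresentedGroup.mk _ w := by
  have : (mPsi s n h1 h2).comp (mPhi s n h1 h2) = PresentedGroup.mk _ := by
    ext x
    by_cases hx : x = s
    · subst hx; simp [mPsi, mPhi]
    · simp only [mPsi, mPhi, MonoidHom.comp_apply, FreeGroup.lift_apply_of, if_neg hx,
        map_mul, map_inv, map_zpow, HN.lift_t, HN.lift_of, pgLift_mk, iota_of hx]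
      group
  exact DFunLike.congr_fun this w

theorem mPhi'_inj (hR : R0 ∈ Sub (Win s z0 a b)) : Function.Injective (mPhi' s n h1 h2 hR) := by
  apply Function.LeftInverse.injective (g := mPsi s n h1 h2)
  intro x
  obtain ⟨w, rfl⟩ := PresentedGroup.mk_surjective _ x
  exact mPsi_mPhi s n h1 h2 w

end Mag
end OR

namespace OR
open Monoid

variable {X : Type}

theorem exps_iota (s : X) (w : FreeGroup (X × ℤ)) : exps s (iota s w) = 1 := by
  have : (exps s).comp (iota s) = 1 := by
    ext ⟨x, i⟩
    by_cases hx : x = s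
    · simp [iota, hx]
    · simp [iota, hx]
  exact DFunLike.congr_fun this w

theorem subst_one (s : X) (w : FreeGroup X) : subst s 1 (fun _ => 0) w = w := by
  have : subst s 1 (fun _ => 0) = MonoidHom.id _ := by
    ext x
    by_cases hx : x = s
    · simp [subst, hx]
    · simp [subst, hx]
  exact DFunLike.congr_fun this w

theorem magnus_pull {s z0 : X} {a b : ℤ} {R0 : FreeGroup (X × ℤ)} (hFS : FS R0)
    (ha : Ess R0 (z0, a)) (hb : Ess R0 (z0, b)) (hR : R0 ∈ Sub (Win s z0 a b))
    {w : FreeGroup (X × ℤ)} (hw : w ∈ Sub (Win s z0 a b))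
    (h : iota s w ∈ Subgroup.normalClosure {iota s R0}) : w ∈ Subgroup.normalClosure {R0} := by
  have h1 := mi1_inj (a := a) 1 hFS hb
  have h2 := mi2_inj (b := b) 1 hFS ha
  rw [← pow_one (iota s R0), ← mk_eq_one] at h
  have h3 := congrArg (mPhi' s 1 h1 h2 hR) h
  rw [map_one, mPhi', pgLift_mk, mPhi_iota s 1 h1 h2 hw] at h3
  have := HN.of_inj _ _ h1 h2 (h3.trans (map_one _).symm)
  rw [mk_eq_one, pow_one] at this
  exact this

theorem window {s z0 : X} (L : List ((X × ℤ) × Bool)) (hs : ∀ q ∈ L, q.1.1 ≠ s)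
    (hz : ∃ q ∈ L, q.1.1 = z0) : ∃ a b, a ≤ b ∧ (∃ q ∈ L, q.1 = (z0, a)) ∧ (∃ q ∈ L, q.1 = (z0, b)) ∧
      FreeGroup.mk L ∈ Sub (Win s z0 a b) := by
  classical
  let F : Finset ℤ := ((L.filter fun q => q.1.1 = z0).map fun q => q.1.2).toFinset
  have hF : ∀ i, i ∈ F ↔ ∃ q ∈ L, q.1 = (z0, i) := by
    intro i
    simp only [F, List.mem_toFinset, List.mem_map, List.mem_filter, decide_eq_true_eq]
    constructor
    · rintro ⟨q, ⟨h1, h2⟩, h3⟩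
      exact ⟨q, h1, Prod.ext h2 h3⟩
    · rintro ⟨q, h1, h2⟩
      exact ⟨q, ⟨h1, by rw [h2]⟩, by rw [h2]⟩
  have hne : F.Nonempty := by
    obtain ⟨q, h1, h2⟩ := hz
    exact ⟨q.1.2, (hF _).2 ⟨q, h1, Prod.ext h2 rfl⟩⟩
  refine ⟨F.min' hne, F.max' hne, F.min'_le_max' hne, (hF _).1 (F.min'_mem hne),
    (hF _).1 (F.max'_mem hne), mk_mem_Sub ?_⟩
  intro q hq
  refine ⟨hs q hq, fun h => ?_⟩
  have : q.1.2 ∈ F := (hF _).2 ⟨q, hq, Prod.ext h rfl⟩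
  exact ⟨F.min'_le _ this, F.le_max' _ this⟩

theorem reduceStep {R : FreeGroup X} {L : List (X × Bool)} (hl : L.length = csize R) (s : X)
    (hs : ∃ p ∈ L, p.1 = s) (a : ℤ) (m : X → ℤ)
    (he : exps s (subst s a m (FreeGroup.mk L)) = 1) :
    ∃ L0 : List ((X × ℤ) × Bool), IsConj (iota s (FreeGroup.mk L0)) (subst s a m (FreeGroup.mk L)) ∧
      csize (FreeGroup.mk L0) < csize R ∧ (∀ q ∈ L0, Ess (FreeGroup.mk L0) q.1) ∧
      (∀ q ∈ L0, q.1.1 ≠ s) := by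
  obtain ⟨M, e, h1, h2, h3, h4⟩ := rewrite_list s a m L
  obtain rfl : e = 0 := by
    rw [h1, map_mul, exps_iota, one_mul, map_zpow, exps_self] at he
    have := congrArg Multiplicative.toAdd he
    simpa using this
  obtain ⟨L0, g1, g2, g3⟩ := exists_min (FreeGroup.mk M)
  have hc : csize (FreeGroup.mk L0) ≤ csize (FreeGroup.mk M) := by
    rw [← g2]; exact csize_le (IsConj.refl _)
  refine ⟨L0, ?_, ?_, ?_, ?_⟩
  · rw [h1, zpow_zero, mul_one]
    exact (iota s).map_isConj g1
  · have := csize_le (IsConj.refl (FreeGroup.mk M))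
    have := h3 hs
    omega
  · intro q hq; exact (g3 q hq).conj g1.symm
  · intro q hq
    obtain ⟨q', hq', h⟩ := (g3 q hq).mem (IsConj.refl _)
    rw [← h]
    exact (h4 q' hq').1

theorem pow_sub_inj (y : X) (a : ℤ) (ha : a ≠ 0) : Function.Injective (subst y a (fun _ => 0)) := by
  classical
  let f : X → (FreeGroup Unit →* FreeGroup Unit) := fun x =>
    FreeGroup.lift fun _ => FreeGroup.of () ^ (if x = y then a else 1)
  have hcyc : ∀ w : FreeGroup Unit, ∃ k : ℤ, w = FreeGroup.of () ^ k := by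
    intro w
    induction w using FreeGroup.induction_on with
    | C1 => exact ⟨0, by simp⟩
    | of x => exact ⟨1, by simp⟩
    | inv_of x _ => exact ⟨-1, by simp⟩
    | mul x y hx hy =>
      obtain ⟨k, rfl⟩ := hx
      obtain ⟨l, rfl⟩ := hy
      exact ⟨k + l, by rw [zpow_add]⟩
  have hf : ∀ x, Function.Injective (f x) := by
    intro x
    rw [injective_iff_map_eq_one]
    intro w hw
    obtain ⟨k, rfl⟩ := hcyc w
    simp only [f, map_zpow, FreeGroup.lift_apply_of, ← zpow_mul] at hw
    have hne : (FreeGroup.of () : FreeGroup Unit) ≠ 1 := FreeGroup.of_ne_one _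
    rw [IsMulTorsionFree.zpow_eq_one_iff_right hne] at hw
    have : k = 0 := by
      rcases mul_eq_zero.1 hw with h | h
      · split_ifs at h <;> simp_all
      · exact h
    simp [this]
  have key : ((freeGroupEquivCoprodI (ι := X)).symm.toMonoidHom.comp ((cmap f).comp
    (freeGroupEquivCoprodI (ι := X)).toMonoidHom)) = subst y a (fun _ => 0) := by
    ext x
    by_cases hx : x = y
    · simp [freeGroupEquivCoprodI, f, hx, subst]
    · simp [freeGroupEquivCoprodI, f, hx, subst]
  rw [← key]
  exact (freeGroupEquivCoprodI (ι := X)).symm.injective.comp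
    ((cmap_injective f hf).comp (freeGroupEquivCoprodI (ι := X)).injective)

theorem ess_ne_one {R : FreeGroup X} {x : X} (h : Ess R x) : R ≠ 1 := by
  rintro rfl
  exact h 1 (by simp)

open Classical in
/-- the substitution used to kill an exponent sum -/
noncomputable abbrev psi (x y : X) (a b : ℤ) : FreeGroup X →* FreeGroup X :=
  subst y a (fun z => if z = x then -b else 0)

theorem psi_exps_y {x y : X} (hxy : x ≠ y) (R : FreeGroup X) :
    exps y (psi x y (Multiplicative.toAdd (exps x R)) (Multiplicative.toAdd (exps y R)) R) = 1 := by
  have key : ∀ a b : ℤ, ∀ w, exps y (psi x y a b w) = exps y w ^ a * exps x w ^ (-b) := by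
    intro a b w
    have : (exps y).comp (psi x y a b) =
        ((zpowGroupHom a).comp (exps y)) * ((zpowGroupHom (-b)).comp (exps x)) := by
      ext z
      by_cases hz : z = y
      · subst hz; simp [psi, subst, hxy.symm]
      · by_cases hzx : z = x
        · subst hzx; simp [psi, subst, hz]
        · simp [psi, subst, hz, hzx]
    exact DFunLike.congr_fun this w
  rw [key]
  apply Multiplicative.toAdd.injective
  simp [mul_comm]

theorem psi_exps_x {x y : X} (hxy : x ≠ y) (a b : ℤ) (w : FreeGroup X) :
    exps x (psi x y a b w) = exps x w := by
  have : (exps x).comp (psi x y a b) = exps x := by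
    ext z
    by_cases hz : z = y
    · subst hz; simp [psi, subst, hxy.symm]
    · by_cases hzx : z = x
      · subst hzx; simp [psi, subst, hz, hxy.symm]
      · simp [psi, subst, hz, hzx, hxy.symm]
  exact DFunLike.congr_fun this w

/-- Freiheitssatz -/
theorem freiheit_aux (N : ℕ) : ∀ (X : Type) (R : FreeGroup X), csize R = N → FS R := by
  induction N using Nat.strong_induction_on with
  | _ N ih =>
  intro X R hN x hx w hw hwR
  obtain ⟨L, hL1, hL2, hL3⟩ := exists_min R
  have hxL := hx.mem hL1
  have hncL := nc_conj hL1
  by_cases hex : exps x R = 1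
  · -- case A
    obtain ⟨L0, g1, g2, g3, g4⟩ := reduceStep hL2 x hxL 1 (fun _ => 0) (by
      rw [subst_one, hom_conj _ hL1, hex])
    rw [subst_one] at g1
    have hFS := ih _ (hN ▸ g2) _ (FreeGroup.mk L0) rfl
    have hne : L0 ≠ [] := by
      rintro rfl
      rw [← FreeGroup.one_eq_mk, map_one] at g1
      exact ess_ne_one hx (isConj_one_right.1 (g1.trans hL1))
    obtain ⟨q0, hq0⟩ := List.exists_mem_of_ne_nil _ hne
    obtain ⟨a, b, hab, ⟨qa, hqa, hqa'⟩, ⟨qb, hqb, hqb'⟩, hwin⟩ := window L0 g4 ⟨q0, hq0, rfl⟩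
    have ha := g3 qa hqa
    have hb := g3 qb hqb
    rw [hqa'] at ha
    rw [hqb'] at hb
    have hio : ∀ {v : FreeGroup X}, v ∈ Sub ({x}ᶜ : Set X) →
        iota x (FreeGroup.map (fun z => (z, a)) v) = FreeGroup.of x ^ a * v * (FreeGroup.of x ^ a)⁻¹ := by
      intro v hv
      refine Sub_eq ((iota x).comp (FreeGroup.map fun z => (z, a)))
        (MulAut.conj (FreeGroup.of x ^ a)).toMonoidHom ?_ hv
      intro z hz
      simp only [MonoidHom.comp_apply, FreeGroup.map.of, iota_of (show z ≠ x from hz)]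
      rfl
    have hmem : ∃ q ∈ L0, q.1.2 ≠ a := by
      by_contra hn
      push Not at hn
      have : FreeGroup.mk L0 ∈ Sub {p : X × ℤ | p.1 ≠ x ∧ p.2 = a} :=
        mk_mem_Sub fun q hq => ⟨g4 q hq, hn q hq⟩
      have h2 := Sub_le (K := (Sub ({x}ᶜ : Set X)).comap
        ((MulAut.conj (FreeGroup.of x ^ a)⁻¹).toMonoidHom.comp (iota x))) (by
          rintro ⟨z, i⟩ ⟨hz, hi⟩
          simp only at hi hz
          subst hi
          have : FreeGroup.of z ∈ Sub ({x}ᶜ : Set X) := of_mem_Sub hz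
          rw [Subgroup.mem_comap]
          rw [MonoidHom.comp_apply, iota_of hz]
          convert this using 1
          change (FreeGroup.of x ^ i)⁻¹ * _ * (FreeGroup.of x ^ i)⁻¹⁻¹ = _
          group) this
      simp only [Subgroup.mem_comap, MonoidHom.comp_apply] at h2
      exact (hx.conj (g1.trans hL1).symm) (FreeGroup.of x ^ a)⁻¹ h2
    obtain ⟨q1, hq1, hq1'⟩ := hmem
    have h3 : FreeGroup.map (fun z => (z, a)) w = 1 := by
      refine hFS q1.1 (g3 q1 hq1) _ ?_ (magnus_pull hFS ha hb hwin ?_ ?_)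
      · refine Sub_map _ ?_ hw
        intro z hz
        rw [FreeGroup.map.of]
        refine of_mem_Sub ?_
        intro h
        have h : (z, a) = q1.1 := h
        apply hq1'; rw [← h]
      · refine Sub_map _ ?_ hw
        intro z hz
        rw [FreeGroup.map.of]
        exact of_mem_Sub ⟨hz, fun _ => ⟨le_rfl, hab⟩⟩
      · rw [hio hw, nc_conj (g1.trans hL1)]
        exact Subgroup.normalClosure_normal.conj_mem _ hwR _
    exact FreeGroup.map_injective (fun z z' h => (Prod.ext_iff.1 h).1) (h3.trans (map_one _).symm)
  · by_cases hy : ∃ p ∈ L, p.1 ≠ x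
    · -- case B
      obtain ⟨py, hpy, hyx⟩ := hy
      obtain ⟨y, c⟩ := py
      simp only at hyx
      set a := Multiplicative.toAdd (exps x R) with ha_def
      set b := Multiplicative.toAdd (exps y R) with hb_def
      have ha0 : a ≠ 0 := fun h => hex (Multiplicative.toAdd.injective h)
      obtain ⟨L0, g1, g2, g3, g4⟩ := reduceStep hL2 y ⟨_, hpy, rfl⟩ a _ (by
        have := psi_exps_y hyx.symm (FreeGroup.mk L)
        rw [hom_conj (exps x) hL1, hom_conj (exps y) hL1] at this
        exact this)
      have hFS := ih _ (hN ▸ g2) _ (FreeGroup.mk L0) rfl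
      have hcx : exps x (iota y (FreeGroup.mk L0)) ≠ 1 := by
        rw [hom_conj (exps x) g1, psi_exps_x hyx.symm, hom_conj _ hL1]
        exact hex
      have hz : ∃ q ∈ L0, q.1.1 = x := by
        by_contra hn
        push Not at hn
        apply hcx
        apply exps_Sub
        refine Sub_map (iota y) (S := {p | p.1 ≠ x ∧ p.1 ≠ y}) ?_
          (mk_mem_Sub fun q hq => ⟨hn q hq, g4 q hq⟩)
        rintro ⟨z, i⟩ ⟨hz, hz'⟩
        rw [iota_of hz']
        have h1 : FreeGroup.of y ∈ Sub ({x}ᶜ : Set X) := of_mem_Sub hyx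
        exact mul_mem (mul_mem (zpow_mem h1 _) (of_mem_Sub hz)) (inv_mem (zpow_mem h1 _))
      obtain ⟨i, j, hab, ⟨qa, hqa, hqa'⟩, ⟨qb, hqb, hqb'⟩, hwin⟩ := window L0 g4 hz
      have ha := g3 qa hqa
      have hb := g3 qb hqb
      rw [hqa'] at ha
      rw [hqb'] at hb
      have hpw : psi x y a b w ∈ Subgroup.normalClosure {iota y (FreeGroup.mk L0)} := by
        rw [nc_conj g1]
        apply nc_map
        rwa [hncL]
      have hwL : ∃ Lw : List (X × Bool), FreeGroup.mk Lw = w ∧ ∀ p ∈ Lw, p.1 ≠ x := by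
        classical
        obtain ⟨Lw, rfl⟩ := exists_mk w
        have := ret_of_mem hw
        rw [ret_mk] at this
        refine ⟨_, this, ?_⟩
        intro p hp
        rw [List.mem_filter] at hp
        simpa using hp.2
      obtain ⟨Lw, rfl, hLw⟩ := hwL
      obtain ⟨M, e, k1, -, -, k4⟩ := rewrite_list y a (fun z => open Classical in if z = x then -b else 0) Lw
      obtain rfl : e = 0 := by
        have : exps y (psi x y a b (FreeGroup.mk Lw)) = 1 :=
          hom_nc _ (exps_iota y _) hpw
        rw [k1, map_mul, exps_iota, one_mul, map_zpow, exps_self] at this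
        have := congrArg Multiplicative.toAdd this
        simpa using this
      have hMx : ∀ q ∈ M, q.1.1 ≠ x := by
        intro q hq
        obtain ⟨p, hp, hp'⟩ := (k4 q hq).2
        rw [← hp']; exact hLw p hp
      rw [zpow_zero, mul_one] at k1
      have h3 : FreeGroup.mk M = 1 := by
        refine hFS _ ha _ (mk_mem_Sub ?_) (magnus_pull hFS ha hb hwin (mk_mem_Sub ?_) ?_)
        · intro q hq h
          have h : q.1 = (x, i) := h
          exact hMx q hq (by rw [h])
        · intro q hq
          exact ⟨(k4 q hq).1, fun h => absurd h (hMx q hq)⟩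
        · rw [← k1]; exact hpw
      rw [h3, map_one] at k1
      have h4 : subst y a (fun _ => 0) (FreeGroup.mk Lw) = 1 := by
        rw [← k1]
        refine Sub_eq _ _ ?_ hw
        intro z hz
        have hz : z ≠ x := hz
        simp [subst, hz]
      exact pow_sub_inj y a ha0 (h4.trans (map_one _).symm)
    · -- R conjugate to a power of x
      push Not at hy
      have h1 : ret ({x}ᶜ : Set X) (FreeGroup.mk L) = 1 := by
        classical
        rw [ret_mk, FreeGroup.one_eq_mk]
        congr 1
        rw [List.filter_eq_nil_iff]
        intro p hp
        simp [hy p hp]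
      have h2 := nc_map (ret ({x}ᶜ : Set X)) (hncL ▸ hwR)
      rw [h1, ret_of_mem hw] at h2
      have h3 : Subgroup.normalClosure {(1 : FreeGroup X)} ≤ ⊥ :=
        Subgroup.normalClosure_le_normal (by simp)
      exact Subgroup.mem_bot.1 (h3 h2)

theorem freiheit (R : FreeGroup X) : FS R := freiheit_aux _ X R rfl

end OR

namespace OR
open Monoid

/-- conjugation -/
def cj {H : Type} [Group H] (c : H) : H →* H := (MulAut.conj c).toMonoidHom
@[simp] theorem cj_apply {H : Type} [Group H] (c x : H) : cj c x = c * x * c⁻¹ := rfl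

/-- embeds into a free product of groups each of which is torsion or torsion-free -/
def Good (T : Type) [Group T] : Prop :=
  ∃ (U : Type) (C : U → Type) (_ : ∀ u, Group (C u)),
    (∀ u, (∀ x : C u, IsOfFinOrder x) ∨ (∀ x : C u, IsOfFinOrder x → x = 1)) ∧
    ∃ j : T →* CoprodI C, Function.Injective j

theorem Good.of_inj {T T' : Type} [Group T] [Group T'] (h : Good T') (f : T →* T')
    (hf : Function.Injective f) : Good T := by
  obtain ⟨U, C, gC, h1, j, hj⟩ := h
  exact ⟨U, C, gC, h1, j.comp f, hj.comp hf⟩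

theorem Good.torsion {T : Type} [Group T] (h : ∀ x : T, IsOfFinOrder x) : Good T :=
  ⟨Unit, fun _ => T, inferInstance, fun _ => Or.inl h, CoprodI.of (M := fun _ : Unit => T) (i := ()),
    CoprodI.of_injective (M := fun _ : Unit => T) ()⟩

theorem Good.free {T : Type} [Group T] (h : ∀ x : T, IsOfFinOrder x → x = 1) : Good T :=
  ⟨Unit, fun _ => T, inferInstance, fun _ => Or.inr h, CoprodI.of (M := fun _ : Unit => T) (i := ()),
    CoprodI.of_injective (M := fun _ : Unit => T) ()⟩

theorem Good.coprod {O : Type} {D : O → Type} [∀ o, Group (D o)] (h : ∀ o, Good (D o)) :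
    Good (CoprodI D) := by
  choose U C gC h1 j hj using h
  refine ⟨Σ o, U o, fun p => C p.1 p.2, fun p => gC p.1 p.2, fun p => h1 p.1 p.2, ?_⟩
  let _ : ∀ p : Σ o, U o, Group (C p.1 p.2) := fun p => gC p.1 p.2
  let F : CoprodI (fun o => CoprodI (C o)) →* CoprodI (fun p : Σ o, U o => C p.1 p.2) :=
    CoprodI.lift fun o => CoprodI.lift fun u =>
      (CoprodI.of (M := fun p : Σ o, U o => C p.1 p.2) (i := ⟨o, u⟩))
  let B : CoprodI (fun p : Σ o, U o => C p.1 p.2) →* CoprodI (fun o => CoprodI (C o)) :=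
    CoprodI.lift fun p => (CoprodI.of (M := fun o => CoprodI (C o)) (i := p.1)).comp
      (CoprodI.of (M := C p.1) (i := p.2))
  have hFB : B.comp F = MonoidHom.id _ := by
    apply CoprodI.ext_hom
    intro o
    apply CoprodI.ext_hom
    intro u
    ext x
    simp [F, B]
  have hF : Function.Injective F :=
    Function.LeftInverse.injective (g := B) (fun x => DFunLike.congr_fun hFB x)
  exact ⟨F.comp (cmap j), hF.comp (cmap_injective j hj)⟩

theorem cop_tf {I : Type} {G : I → Type} [∀ i, Group (G i)]
    (h : ∀ i (x : G i), IsOfFinOrder x → x = 1) (g : CoprodI G) (hg : IsOfFinOrder g) : g = 1 := by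
  rcases isEmpty_or_nonempty I with hU | hU
  · induction g using CoprodI.induction_on with
    | one => rfl
    | of i _ => exact (hU.false i).elim
    | mul a b h1 h2 =>
      have : ∀ a : CoprodI G, a = 1 := by
        intro a
        induction a using CoprodI.induction_on with
        | one => rfl
        | of i _ => exact (hU.false i).elim
        | mul a b h1 h2 => rw [h1, h2, mul_one]
      exact this _
  · obtain ⟨i, x, k, rfl⟩ := cop_torsion_conj g hg
    have h1 := conj_fin k⁻¹ hg
    rw [show k⁻¹ * (k * CoprodI.of x * k⁻¹) * k⁻¹⁻¹ = CoprodI.of x by group] at h1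
    rw [(CoprodI.of_injective i).isOfFinOrder_iff] at h1
    rw [h i x h1]; simp

/-- left regular wreath element -/
def Wr.mk' {Ω S : Type} [Group Ω] [Group S] (f : Ω → S) (q : Ω) : Wr Ω S := ⟨f, Equiv.mulLeft q⟩

@[simp] theorem Wr.mk'_f {Ω S : Type} [Group Ω] [Group S] (f : Ω → S) (q : Ω) : (Wr.mk' f q).f = f := rfl
@[simp] theorem Wr.mk'_p {Ω S : Type} [Group Ω] [Group S] (f : Ω → S) (q x : Ω) :
  (Wr.mk' f q).p x = q * x := rfl

theorem Wr.ext' {Ω S : Type} [Group S] {a b : Wr Ω S} (h1 : ∀ x, a.f x = b.f x) (h2 : ∀ x, a.p x = b.p x) :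
    a = b := Wr.ext (funext h1) (Equiv.ext h2)

/-- groups generated by torsion inside good groups -/
theorem Good.rec_torsion {T : Type} [Group T] (hT : Good T)
    (hg : Subgroup.normalClosure {t : T | IsOfFinOrder t} = ⊤) :
    ∃ (U : Type) (C : U → Type) (_ : ∀ u, Group (C u)),
    (∀ u, (∀ x : C u, IsOfFinOrder x)) ∧ ∃ j : T →* CoprodI C, Function.Injective j := by
  classical
  obtain ⟨U, C, gC, h1, j, hj⟩ := hT
  let tor : U → Prop := fun u => ∀ x : C u, IsOfFinOrder x
  have hntor : ∀ u, ¬ tor u → ∀ x : C u, IsOfFinOrder x → x = 1 := fun u hu =>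
    (h1 u).resolve_left hu
  let Cf : {u // ¬ tor u} → Type := fun u => C u.1
  let Q := CoprodI Cf
  let Ct : Q × {u // tor u} → Type := fun p => C p.2.1
  let W := CoprodI Ct
  let s : Q →* CoprodI C := CoprodI.lift fun u => CoprodI.of (M := C) (i := u.1)
  let tt : ∀ u, tor u → C u →* Wr Q W := fun u hu =>
    { toFun := fun x => Wr.mk' (fun q => CoprodI.of (M := Ct) (i := (q, ⟨u, hu⟩)) x) 1
      map_one' := by apply Wr.ext' <;> intro q <;> simp
      map_mul' := by intro x y; apply Wr.ext' <;> intro q <;> simp }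
  let ff : ∀ u, ¬ tor u → C u →* Wr Q W := fun u hu =>
    { toFun := fun x => Wr.mk' (fun q => 1) (CoprodI.of (M := Cf) (i := ⟨u, hu⟩) x)
      map_one' := by apply Wr.ext' <;> intro q <;> simp
      map_mul' := by intro x y; apply Wr.ext' <;> intro q <;> simp [mul_assoc] }
  let Θ : CoprodI C →* Wr Q W := CoprodI.lift fun u => if hu : tor u then tt u hu else ff u hu
  let lam : CoprodI C →* Q := CoprodI.lift fun u => if hu : tor u then 1 else
    CoprodI.of (M := Cf) (i := ⟨u, hu⟩)
  have hp : ∀ w q, (Θ w).p q = lam w * q := by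
    intro w
    induction w using CoprodI.induction_on with
    | one => simp
    | mul a b iha ihb => intro q; simp [iha, ihb, mul_assoc]
    | of u x =>
      intro q
      by_cases hu : tor u
      · simp [Θ, lam, hu, tt]
      · simp [Θ, lam, hu, ff]
  let κ : W →* CoprodI C := CoprodI.lift fun p =>
    (cj (s p.1)⁻¹).comp (CoprodI.of (M := C) (i := p.2.1))
  have hκ : ∀ w q, κ ((Θ w).f q) = (s (lam w * q))⁻¹ * w * s q := by
    intro w
    induction w using CoprodI.induction_on with
    | one => simp
    | mul a b iha ihb =>
      intro q
      rw [map_mul, Wr.mul_f, map_mul, iha, ihb, hp, map_mul lam]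
      group
    | of u x =>
      intro q
      by_cases hu : tor u
      · have h2 : (Θ (CoprodI.of x)).f q = CoprodI.of (M := Ct) (i := (q, ⟨u, hu⟩)) x := by
          simp [Θ, hu, tt]
        have h3 : lam (CoprodI.of x) = 1 := by simp [lam, hu]
        have h4 : κ (CoprodI.of (M := Ct) (i := (q, ⟨u, hu⟩)) x) = 
            (s q)⁻¹ * CoprodI.of x * (s q)⁻¹⁻¹ := CoprodI.lift_of _ _
        rw [h2, h3, h4, one_mul, inv_inv]
      · have h2 : (Θ (CoprodI.of x)).f q = 1 := by
          simp [Θ, hu, ff]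
        have h3 : lam (CoprodI.of x) = CoprodI.of (M := Cf) (i := ⟨u, hu⟩) x := by simp [lam, hu]
        have h4 : s (CoprodI.of (M := Cf) (i := ⟨u, hu⟩) x) = CoprodI.of x := CoprodI.lift_of _ _
        rw [h2, h3, map_mul, h4, map_one]; group
  have htf : ∀ g : Q, IsOfFinOrder g → g = 1 := cop_tf (fun u => hntor u.1 u.2)
  have hl : ∀ t, lam (j t) = 1 := by
    intro t
    have : Subgroup.normalClosure {t : T | IsOfFinOrder t} ≤ (lam.comp j).ker := by
      apply Subgroup.normalClosure_le_normal
      intro t ht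
      exact htf _ (MonoidHom.isOfFinOrder (lam.comp j) ht)
    rw [hg] at this
    exact this (Subgroup.mem_top t)
  refine ⟨_, Ct, inferInstance, fun p => p.2.2, Wr.stab Θ 1 j (by
    intro a; rw [hp, hl, one_mul]), ?_⟩
  rw [injective_iff_map_eq_one]
  intro a ha
  rw [Wr.stab_apply] at ha
  have := hκ (j a) 1
  rw [ha, hl] at this
  apply hj
  rw [map_one]
  simpa using this.symm

/-- two-type family -/
def Fam (N F V : Type) : Option V → Type
  | none => F
  | some _ => N

instance (N F V : Type) [Group N] [Group F] : ∀ o, Group (Fam N F V o)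
  | none => inferInstanceAs (Group F)
  | some _ => inferInstanceAs (Group N)

section Fam
variable {N F V K : Type} [Group N] [Group F] [Group K]

/-- inclusion -/
def inN (v : V) : N →* CoprodI (Fam N F V) := CoprodI.of (M := Fam N F V) (i := some v)
/-- inclusion -/
def inF : F →* CoprodI (Fam N F V) := CoprodI.of (M := Fam N F V) (i := none)

/-- lift -/
def famLift (f : V → N →* K) (g : F →* K) : CoprodI (Fam N F V) →* K :=
  CoprodI.lift fun o => match o with
    | none => g
    | some v => f v

@[simp] theorem famLift_inN (f : V → N →* K) (g : F →* K) (v x) : famLift f g (inN v x) = f v x := by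
  unfold famLift inN
  erw [CoprodI.lift_of]
@[simp] theorem famLift_inF (f : V → N →* K) (g : F →* K) (x) :
    famLift f g (inF (N := N) (V := V) x) = g x := by
  unfold famLift inF
  erw [CoprodI.lift_of]

end Fam

theorem orbit_rep {K H : Type} [Group K] [Group H] (f : K →* H) (hf : Function.Injective f) :
    ∃ (rep : H → H) (hd : H → K), (∀ q, f (hd q) * rep q = q) ∧ (∀ g q, rep (f g * q) = rep q) ∧
      ∀ g q, hd (f g * q) = g * hd q := by
  classical
  let R := QuotientGroup.rightRel f.range
  let rep : H → H := fun q => (Quotient.mk R q).out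
  have h : ∀ q, ∃ k, f k * rep q = q := by
    intro q
    have : R (rep q) q := Quotient.mk_out (s := R) q
    rw [QuotientGroup.rightRel_apply] at this
    obtain ⟨k, hk⟩ := this
    exact ⟨k, by rw [hk]; simp⟩
  choose hd hhd using h
  have hrep : ∀ g q, rep (f g * q) = rep q := by
    intro g q
    simp only [rep]
    congr 1
    apply Quotient.sound (s := R)
    change R _ _
    rw [QuotientGroup.rightRel_apply]
    exact ⟨g⁻¹, by simp⟩
  refine ⟨rep, hd, hhd, hrep, ?_⟩
  intro g q
  apply hf
  have h1 := hhd (f g * q)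
  rw [hrep] at h1
  have h2 := hhd q
  rw [map_mul]
  apply mul_right_cancel (b := rep q)
  rw [h1, mul_assoc, h2]

theorem wr_aux {W : Type} [Group W] (a b c d e : W) :
    a * b * c * (d * e)⁻¹ * d = a * (b * c * e⁻¹) := by group

section HNNker
variable {E G0 Q0 : Type} [Group E] [Group G0] [Group Q0] (p : G0 →* Q0) 
  (i1 i2 : E →* G0) (k1 : Function.Injective (p.comp i1)) (k2 : Function.Injective (p.comp i2))
  (h1 : Function.Injective i1) (h2 : Function.Injective i2)

/-- induced map of HNN extensions -/
noncomputable def hnMap : HN i1 i2 h1 h2 →* HN (p.comp i1) (p.comp i2) k1 k2 :=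
  HN.lift i1 i2 h1 h2 (HNNExtension.of.comp p) HNNExtension.t (HN.t_of _ _ k1 k2)

theorem hn_ker (hp : Function.Surjective p) :
    ∃ (V Ed : Type) (κ : CoprodI (Fam p.ker (FreeGroup Ed) V) →* HN i1 i2 h1 h2)
      (θ : (hnMap p i1 i2 k1 k2 h1 h2).ker →* CoprodI (Fam p.ker (FreeGroup Ed) V))
      (c : HN i1 i2 h1 h2),
      (∀ a, κ (θ a) = c⁻¹ * a * c) ∧ ∀ v x, ∃ h, κ (inN v x) = h * HNNExtension.of x.1 * h⁻¹ := by
  classical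
  let ps := hnMap p i1 i2 k1 k2 h1 h2
  have ps_of : ∀ g, ps (HNNExtension.of g) = HNNExtension.of (p g) := by
    intro g; simp [ps, hnMap]
  have ps_t : ps HNNExtension.t = HNNExtension.t := by simp [ps, hnMap]
  have hps : Function.Surjective ps := by
    rw [← MonoidHom.range_eq_top, eq_top_iff]
    rintro x -
    induction x using HNNExtension.induction_on with
    | of g => obtain ⟨g, rfl⟩ := hp g; exact ⟨HNNExtension.of g, ps_of g⟩
    | t => exact ⟨_, ps_t⟩
    | mul a b ha hb => exact mul_mem ha hb
    | inv a ha => exact inv_mem ha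
  obtain ⟨rep, hd, hr1, hr2, hr3⟩ := orbit_rep _ (HN.of_inj (p.comp i1) (p.comp i2) k1 k2)
  obtain ⟨repE, hdE, he1, he2, he3⟩ := orbit_rep
    ((HNNExtension.of : Q0 →* HN (p.comp i1) (p.comp i2) k1 k2).comp (p.comp i1))
    ((HN.of_inj (p.comp i1) (p.comp i2) k1 k2).comp k1)
  choose s0 hs0 using hps
  choose σ hσ using hp
  let Ω := HN (p.comp i1) (p.comp i2) k1 k2
  let H := HN i1 i2 h1 h2
  let W := CoprodI (Fam p.ker (FreeGroup Ω) Ω)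
  let s : Ω → H := fun q => HNNExtension.of (σ (hd q)) * s0 (rep q)
  let t : Ω := HNNExtension.t
  let α : G0 → Ω → W := fun g q => inN (rep q) ⟨(σ (p g * hd q))⁻¹ * g * σ (hd q), by
    rw [MonoidHom.mem_ker]; simp [hσ]⟩
  have α_mul : ∀ g g' q, α (g * g') q = α g (HNNExtension.of (p g') * q) * α g' q := by
    intro g g' q
    simp only [α, hr2, hr3]
    refine Eq.trans ?_ ((inN (rep q)).map_mul _ _)
    congr 1
    apply Subtype.ext
    simp [mul_assoc]
  have α_one : ∀ q, α 1 q = 1 := by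
    intro q
    have := α_mul 1 1 q
    simpa using this
  let κ : W →* H := famLift (fun v => (cj (s0 v)⁻¹).comp
      (HNNExtension.of.comp p.ker.subtype))
    (FreeGroup.lift fun q => (s (t * q))⁻¹ * HNNExtension.t * s q)
  have κN : ∀ v x, κ (inN v x) = (s0 v)⁻¹ * HNNExtension.of x.1 * s0 v := by
    intro v x
    refine (famLift_inN _ _ v x).trans ?_
    rw [MonoidHom.comp_apply, cj_apply, inv_inv]; rfl
  have κα : ∀ g q, κ (α g q) = (s (HNNExtension.of (p g) * q))⁻¹ * HNNExtension.of g * s q := by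
    intro g q
    simp only [α, κN, s, hr2, hr3]
    simp only [map_mul, map_inv]
    group
  let A : G0 →* Wr Ω W :=
    { toFun := fun g => Wr.mk' (α g) (HNNExtension.of (p g))
      map_one' := by apply Wr.ext' <;> intro q <;> simp [α_one]
      map_mul' := by intro x y; apply Wr.ext' <;> intro q <;> simp [mul_assoc, α_mul] }
  let τ : Ω → W := fun q => α (i2 (hdE q)) (t * repE q) * inF (FreeGroup.of (repE q)) *
    (α (i1 (hdE q)) (repE q))⁻¹
  have ht : ∀ e q, t * (HNNExtension.of (p (i1 e)) * q) = HNNExtension.of (p (i2 e)) * (t * q) := by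
    intro e q
    have := HN.t_of _ _ k1 k2 e
    simp only [MonoidHom.comp_apply] at this
    rw [← mul_assoc, ← mul_assoc]
    congr 1
  have hq : ∀ q, HNNExtension.of (p (i1 (hdE q))) * repE q = q := he1
  have κτ : ∀ q, κ (τ q) = (s (t * q))⁻¹ * HNNExtension.t * s q := by
    intro q
    have hf : κ (inF (FreeGroup.of (repE q))) = (s (t * repE q))⁻¹ * HNNExtension.t * s (repE q) :=
      (famLift_inF _ _ _).trans FreeGroup.lift_apply_of
    have hinv : κ (τ q) = κ (α (i2 (hdE q)) (t * repE q)) * κ (inF (FreeGroup.of (repE q))) *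
        (κ (α (i1 (hdE q)) (repE q)))⁻¹ :=
      (map_mul κ _ _).trans (congrArg₂ (· * ·) (map_mul κ _ _) (map_inv κ _))
    rw [hinv, κα, κα, hf, ← ht, hq]
    have := HN.t_of _ _ h1 h2 (hdE q)
    have h3 : HNNExtension.of (i2 (hdE q)) = (HNNExtension.t : H) * HNNExtension.of (i1 (hdE q)) *
      HNNExtension.t⁻¹ := by rw [this]; group
    rw [h3]
    group
  let Θ : H →* Wr Ω W := HN.lift i1 i2 h1 h2 A (Wr.mk' τ t) (by
    intro e
    apply Wr.ext'
    · intro q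
      simp only [Wr.mul_f, A, Wr.mk'_f, Wr.mk'_p, MonoidHom.coe_mk, OneHom.coe_mk]
      have e2 : repE (HNNExtension.of (p (i1 e)) * q) = repE q := he2 e q
      have e3 : hdE (HNNExtension.of (p (i1 e)) * q) = e * hdE q := he3 e q
      simp only [τ, e2, e3, map_mul, α_mul]
      rw [hq, ← ht, hq]
      exact wr_aux _ _ _ _ _
    · intro q
      simp only [Wr.mul_p, A, Wr.mk'_p, MonoidHom.coe_mk, OneHom.coe_mk, Equiv.Perm.mul_apply]
      exact ht e q)
  have Θ_of : ∀ g, Θ (HNNExtension.of g) = A g := fun g => HN.lift_of _ _ _ _ _ _ _ g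
  have Θ_t : Θ HNNExtension.t = Wr.mk' τ t := HN.lift_t _ _ _ _ _ _ _
  have hΘ : ∀ w, (∀ q, (Θ w).p q = ps w * q) ∧
      ∀ q, κ ((Θ w).f q) = (s (ps w * q))⁻¹ * w * s q := by
    intro w
    induction w using HNNExtension.induction_on with
    | of g =>
      rw [Θ_of, ps_of]
      exact ⟨fun q => rfl, fun q => κα g q⟩
    | t => rw [Θ_t, ps_t]; exact ⟨fun q => rfl, κτ⟩
    | mul a b iha ihb =>
      refine ⟨fun q => ?_, fun q => ?_⟩
      · rw [map_mul, map_mul, Wr.mul_p, Equiv.Perm.mul_apply, iha.1, ihb.1, mul_assoc]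
      · rw [map_mul, map_mul, Wr.mul_f, map_mul, iha.2, ihb.1, ihb.2, mul_assoc]
        group
    | inv a iha =>
      have h3 : ∀ q, (Θ a)⁻¹.p q = (ps a)⁻¹ * q := by
        intro q
        rw [Wr.inv_p, Equiv.Perm.inv_eq_iff_eq, iha.1]; group
      refine ⟨fun q => ?_, fun q => ?_⟩
      · rw [map_inv, map_inv, h3]
      · have h4 := h3 q
        rw [Wr.inv_p] at h4
        rw [map_inv, map_inv, Wr.inv_f, map_inv, h4, iha.2]
        group
  refine ⟨Ω, Ω, κ, Wr.stab Θ 1 (MonoidHom.ker ps).subtype (by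
    intro a; rw [(hΘ _).1, Subgroup.subtype_apply, MonoidHom.mem_ker.1 a.2, one_mul]), s 1, ?_, ?_⟩
  · intro a
    rw [Wr.stab_apply, (hΘ _).2, Subgroup.subtype_apply, MonoidHom.mem_ker.1 a.2, one_mul]
  · intro v x
    refine ⟨(s0 v)⁻¹, ?_⟩
    rw [κN, inv_inv]

theorem hn_good (hp : Function.Surjective p) (hN : Good p.ker) :
    Good (hnMap p i1 i2 k1 k2 h1 h2).ker ∧
    ∀ a, hnMap p i1 i2 k1 k2 h1 h2 a = 1 → IsOfFinOrder a → 
      ∃ h x, p x = 1 ∧ IsOfFinOrder x ∧ a = h * HNNExtension.of x * h⁻¹ := by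
  obtain ⟨V, Ed, κ, θ, c, hκ, hv⟩ := hn_ker p i1 i2 k1 k2 h1 h2 hp
  have hθ : Function.Injective θ := by
    rw [injective_iff_map_eq_one]
    intro a ha
    have := hκ a
    rw [ha, map_one] at this
    apply Subtype.ext
    have h3 : a.1 = c * (c⁻¹ * a.1 * c) * c⁻¹ := by group
    rw [h3, ← this]; simp
  constructor
  · refine Good.of_inj (Good.coprod ?_) θ hθ
    rintro (_ | v)
    · exact Good.free (T := FreeGroup Ed) fun x hx => by
        by_contra h; exact not_isOfFinOrder_of_isMulTorsionFree h hx
    · exact hN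
  · intro a ha hf
    have hf' : IsOfFinOrder (⟨a, ha⟩ : (hnMap p i1 i2 k1 k2 h1 h2).ker) := by
      rwa [← (Subgroup.subtype_injective _).isOfFinOrder_iff]
    obtain ⟨o, x, k, h⟩ := cop_torsion_conj _ (MonoidHom.isOfFinOrder θ hf')
    have hx : IsOfFinOrder x := by
      rw [← (CoprodI.of_injective o).isOfFinOrder_iff]
      have := conj_fin k⁻¹ (MonoidHom.isOfFinOrder θ hf')
      rw [h] at this
      rwa [show k⁻¹ * (k * CoprodI.of x * k⁻¹) * k⁻¹⁻¹ = CoprodI.of x by group] at this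
    have h3 := hκ ⟨a, ha⟩
    rw [h, map_mul, map_mul, map_inv] at h3
    have h4 : a = (c * κ k) * κ (CoprodI.of x) * (c * κ k)⁻¹ := by
      have : a = c * (c⁻¹ * a * c) * c⁻¹ := by group
      rw [this, ← h3]; group
    cases o with
    | none =>
      have : x = 1 := by
        by_contra hne; exact not_isOfFinOrder_of_isMulTorsionFree (G := FreeGroup Ed) hne hx
      refine ⟨1, 1, map_one _, by simp, ?_⟩
      rw [h4, this]; simp
    | some v =>
      obtain ⟨g, hg⟩ := hv v x
      refine ⟨c * κ k * g, x.1, x.2, ?_, ?_⟩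
      · exact MonoidHom.isOfFinOrder p.ker.subtype hx
      · rw [h4]
        have : κ (CoprodI.of x) = g * HNNExtension.of x.1 * g⁻¹ := hg
        rw [this]; group

end HNNker
end OR

namespace OR
open Monoid

/-- Fischer–Karrass–Solitar property -/
def FKS {G : Type} [Group G] (r : G) : Prop :=
  Good (Subgroup.normalClosure {r}) ∧
    ∀ τ ∈ Subgroup.normalClosure {r}, IsOfFinOrder τ → ∃ (g : G) (k : ℤ), τ = g * r ^ k * g⁻¹

theorem FKS.conj {G : Type} [Group G] {r r' : G} (h : FKS r) (hc : IsConj r r') : FKS r' := by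
  unfold FKS
  rw [← nc_conj hc]
  refine ⟨h.1, fun τ h1 h2 => ?_⟩
  obtain ⟨g, k, rfl⟩ := h.2 τ h1 h2
  obtain ⟨c, rfl⟩ := isConj_iff.1 hc
  refine ⟨g * c⁻¹, k, ?_⟩
  rw [conj_zpow]; group

theorem FKS.equiv {G G' : Type} [Group G] [Group G'] {r : G} (h : FKS r) (e : G ≃* G') : FKS (e r) := by
  have key : ∀ τ, τ ∈ Subgroup.normalClosure {e r} → e.symm τ ∈ Subgroup.normalClosure {r} := by
    intro τ hτ
    have := nc_map e.symm.toMonoidHom hτ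
    simpa using this
  constructor
  · refine h.1.of_inj ((e.symm.toMonoidHom.comp (Subgroup.subtype _)).codRestrict _
      (fun x => key x.1 x.2)) ?_
    intro x y hxy
    have := congrArg Subtype.val hxy
    exact Subtype.ext (e.symm.injective this)
  · intro τ h1 h2
    obtain ⟨g, k, hg⟩ := h.2 _ (key τ h1) (MonoidHom.isOfFinOrder e.symm.toMonoidHom h2)
    refine ⟨e g, k, ?_⟩
    rw [← map_zpow, ← map_inv, ← map_mul, ← map_mul, ← hg]; simp

/-- the property for one-relator groups -/
def FK {X : Type} (R : FreeGroup X) (n : ℕ) : Prop := FKS (PresentedGroup.mk {R ^ n} R)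

variable {X : Type}

theorem isConj_pow {G : Type} [Group G] {a b : G} (h : IsConj a b) (n : ℕ) : IsConj (a ^ n) (b ^ n) := by
  obtain ⟨c, rfl⟩ := isConj_iff.1 h
  exact isConj_iff.2 ⟨c, by rw [conj_pow]⟩

theorem FK.conj {R R' : FreeGroup X} {n : ℕ} (h : FK R n) (hc : IsConj R R') : FK R' n := by
  have h1 : FKS (PresentedGroup.mk {R ^ n} R') := FKS.conj h ((PresentedGroup.mk {R ^ n}).map_isConj hc)
  have h2 : Subgroup.normalClosure {R ^ n} = Subgroup.normalClosure {R' ^ n} :=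
    nc_conj (isConj_pow hc n)
  exact h1.equiv (QuotientGroup.quotientMulEquivOfEq h2)

theorem hnn_step {R0 : FreeGroup (X × ℤ)} {s z0 : X} {a b : ℤ} {n : ℕ} (h : FK R0 n)
    (ha : Ess R0 (z0, a)) (hb : Ess R0 (z0, b)) (hR : R0 ∈ Sub (Win s z0 a b)) :
    FK (iota s R0) n := by
  have hFS := freiheit R0
  have h1 := mi1_inj (a := a) n hFS hb
  have h2 := mi2_inj (b := b) n hFS ha
  let p : PresentedGroup {R0 ^ n} →* PresentedGroup {R0 ^ 1} :=
    pgLift (PresentedGroup.mk {R0 ^ 1}) (by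
      rw [mk_eq_one]; rw [pow_one]
      exact pow_mem (Subgroup.subset_normalClosure (Set.mem_singleton _)) n)
  have hp : Function.Surjective p := by
    intro x
    obtain ⟨w, rfl⟩ := PresentedGroup.mk_surjective _ x
    exact ⟨PresentedGroup.mk _ w, rfl⟩
  have hker : ∀ x, p x = 1 → x ∈ Subgroup.normalClosure {PresentedGroup.mk {R0 ^ n} R0} := by
    intro x hx
    obtain ⟨w, rfl⟩ := PresentedGroup.mk_surjective _ x
    have : PresentedGroup.mk {R0 ^ 1} w = 1 := hx
    rw [mk_eq_one, pow_one] at this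
    exact nc_map _ this
  have k1 : Function.Injective (p.comp (mi1 z0 a b R0 n)) := mi1_inj (a := a) 1 hFS hb
  have k2 : Function.Injective (p.comp (mi2 z0 a b R0 n)) := mi2_inj (b := b) 1 hFS ha
  have hN : Good p.ker := h.1.of_inj (Subgroup.inclusion (fun x hx => hker x hx))
    (Subgroup.inclusion_injective _)
  obtain ⟨g1, g2⟩ := hn_good p (mi1 z0 a b R0 n) (mi2 z0 a b R0 n) k1 k2 h1 h2 hp hN
  let ps := hnMap p (mi1 z0 a b R0 n) (mi2 z0 a b R0 n) k1 k2 h1 h2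
  let f := mPhi' s n h1 h2 hR
  have hf : Function.Injective f := mPhi'_inj s n h1 h2 hR
  have fr : f (PresentedGroup.mk _ (iota s R0)) = HNNExtension.of (PresentedGroup.mk _ R0) :=
    mPhi_iota s n h1 h2 hR
  have hmem : ∀ τ ∈ Subgroup.normalClosure {PresentedGroup.mk {iota s R0 ^ n} (iota s R0)},
      ps (f τ) = 1 := by
    have : Subgroup.normalClosure {PresentedGroup.mk {iota s R0 ^ n} (iota s R0)} ≤ (ps.comp f).ker := by
      apply Subgroup.normalClosure_le_normal
      rw [Set.singleton_subset_iff, SetLike.mem_coe, MonoidHom.mem_ker, MonoidHom.comp_apply, fr]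
      have h5 : ps (HNNExtension.of (PresentedGroup.mk _ R0)) =
        HNNExtension.of (p (PresentedGroup.mk _ R0)) := HN.lift_of _ _ _ _ _ _ _ _
      have h6 : p (PresentedGroup.mk _ R0) = 1 := by
        have h7 : PresentedGroup.mk {R0 ^ 1} R0 = 1 := by
          rw [mk_eq_one, pow_one]; exact Subgroup.subset_normalClosure (Set.mem_singleton _)
        exact h7
      rw [h5, h6, map_one]
    exact fun τ hτ => this hτ
  constructor
  · refine g1.of_inj ((f.comp (Subgroup.subtype _)).codRestrict _ (fun x => hmem x.1 x.2)) ?_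
    intro x y hxy
    exact Subtype.ext (hf (congrArg Subtype.val hxy))
  · intro τ ht1 ht2
    obtain ⟨c, x, hx1, hx2, hx3⟩ := g2 (f τ) (hmem τ ht1) (MonoidHom.isOfFinOrder f ht2)
    obtain ⟨g, k, rfl⟩ := h.2 x (hker x hx1) hx2
    have hinv : mPsi s n h1 h2 (f τ) = τ := by
      obtain ⟨w, rfl⟩ := PresentedGroup.mk_surjective _ τ
      exact mPsi_mPhi s n h1 h2 w
    have hps : mPsi s n h1 h2 (HNNExtension.of (PresentedGroup.mk _ R0)) =
        PresentedGroup.mk _ (iota s R0) := HN.lift_of _ _ _ _ _ _ _ _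
    refine ⟨mPsi s n h1 h2 (c * HNNExtension.of g), k, ?_⟩
    rw [← hps, ← hinv, hx3]
    simp only [map_mul, map_inv, map_zpow]
    group

theorem root_step {R : FreeGroup X} {x y : X} (hxy : x ≠ y) {n : ℕ} {a b : ℤ} (ha : a ≠ 0)
    (hx : Ess R x) (h : FK (psi x y a b R) n) : FK R n := by
  classical
  let G := PresentedGroup {R ^ n}
  let φ : ∀ o : Option Unit, Multiplicative ℤ →* Fam G (Multiplicative ℤ) Unit o := fun o => match o with
    | none => (zpowGroupHom a : Multiplicative ℤ →* Multiplicative ℤ)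
    | some _ => zpowersHom G (PresentedGroup.mk _ (FreeGroup.of y))
  have hφ : ∀ o, Function.Injective (φ o) := by
    rintro (_ | _)
    · change Function.Injective (zpowGroupHom a : Multiplicative ℤ →* Multiplicative ℤ)
      rw [injective_iff_map_eq_one]
      intro z hz
      apply Multiplicative.toAdd.injective
      have := congrArg Multiplicative.toAdd hz
      simpa [ha] using this
    · change Function.Injective (zpowersHom G (PresentedGroup.mk _ (FreeGroup.of y)))
      rw [injective_iff_map_eq_one]
      intro z hz
      rw [zpowersHom_apply, ← map_zpow, mk_eq_one] at hz
      have h1 := freiheit R x hx _ (zpow_mem (of_mem_Sub (show y ∈ ({x}ᶜ : Set X) from hxy.symm)) _)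
        (nc_pow_le _ _ hz)
      rw [IsMulTorsionFree.zpow_eq_one_iff_right (FreeGroup.of_ne_one _)] at h1
      exact Multiplicative.toAdd.injective h1
  let oG : G →* PushoutI φ := PushoutI.of (φ := φ) (some ())
  let oZ : Multiplicative ℤ →* PushoutI φ := PushoutI.of (φ := φ) none
  have hoG : Function.Injective oG := PushoutI.of_injective hφ (some ())
  let u := oZ (Multiplicative.ofAdd 1)
  have hu : u ^ a = oG (PresentedGroup.mk _ (FreeGroup.of y)) := by
    have e1 := PushoutI.of_apply_eq_base φ (some ()) (Multiplicative.ofAdd 1)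
    have e2 := PushoutI.of_apply_eq_base φ none (Multiplicative.ofAdd 1)
    have e3 : oG (zpowersHom G (PresentedGroup.mk _ (FreeGroup.of y)) (Multiplicative.ofAdd 1)) =
      oZ ((zpowGroupHom a : Multiplicative ℤ →* Multiplicative ℤ) (Multiplicative.ofAdd 1)) :=
      e1.trans e2.symm
    rw [zpowersHom_apply] at e3
    simp only [toAdd_ofAdd, zpow_one] at e3
    rw [e3]
    exact (map_zpow oZ _ _).symm
  let β0 : FreeGroup X →* PushoutI φ := FreeGroup.lift fun z => if z = y then u else
    if z = x then oG (PresentedGroup.mk _ (FreeGroup.of z)) * u ^ b else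
      oG (PresentedGroup.mk _ (FreeGroup.of z))
  have hβ0 : ∀ w, β0 (psi x y a b w) = oG (PresentedGroup.mk _ w) := by
    intro w
    have : β0.comp (psi x y a b) = oG.comp (PresentedGroup.mk _) := by
      ext z
      by_cases hz : z = y
      · subst hz
        simp only [psi, subst, MonoidHom.comp_apply, FreeGroup.lift_apply_of, if_true, map_zpow, β0]
        exact hu
      · by_cases hzx : z = x
        · subst hzx
          simp only [psi, subst, MonoidHom.comp_apply, FreeGroup.lift_apply_of, if_true, map_zpow, β0,
            if_neg hz, map_mul]
          group
        · simp only [psi, subst, MonoidHom.comp_apply, FreeGroup.lift_apply_of, if_true, map_zpow, β0,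
            if_neg hz, if_neg hzx, map_mul]
          group
    exact DFunLike.congr_fun this w
  let β : PresentedGroup {psi x y a b R ^ n} →* PushoutI φ := pgLift β0 (by
    rw [← map_pow, hβ0, mk_self, map_one])
  let f : G →* PresentedGroup {psi x y a b R ^ n} :=
    pgLift ((PresentedGroup.mk _).comp (psi x y a b)) (by
      rw [MonoidHom.comp_apply, map_pow]; exact mk_self)
  have hβf : ∀ g, β (f g) = oG g := by
    intro g
    obtain ⟨w, rfl⟩ := PresentedGroup.mk_surjective _ g
    exact hβ0 w
  have hf : Function.Injective f := by
    intro g g' h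
    apply hoG
    rw [← hβf, ← hβf, h]
  have fr : f (PresentedGroup.mk _ R) = PresentedGroup.mk _ (psi x y a b R) := rfl
  have hmem : ∀ τ ∈ Subgroup.normalClosure {PresentedGroup.mk {R ^ n} R},
      f τ ∈ Subgroup.normalClosure {PresentedGroup.mk {psi x y a b R ^ n} (psi x y a b R)} := by
    intro τ hτ; rw [← fr]; exact nc_map f hτ
  constructor
  · refine h.1.of_inj ((f.comp (Subgroup.subtype _)).codRestrict _ (fun x => hmem x.1 x.2)) ?_
    intro x y hxy
    exact Subtype.ext (hf (congrArg Subtype.val hxy))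
  · intro τ ht1 ht2
    obtain ⟨g', k, hg⟩ := h.2 (f τ) (hmem τ ht1) (MonoidHom.isOfFinOrder f ht2)
    by_cases hk : PresentedGroup.mk {R ^ n} R ^ k = 1
    · refine ⟨1, 0, hf ?_⟩
      rw [hg, ← fr, ← map_zpow, hk]; simp
    · have e1 : β g' * oG (PresentedGroup.mk {R ^ n} R ^ k) * (β g')⁻¹ = oG τ := by
        rw [← hβf, ← hβf, hg, ← fr]; simp
      have e2 : IsOfFinOrder (PresentedGroup.mk {R ^ n} R ^ k) := by
        rw [← hoG.isOfFinOrder_iff]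
        have := conj_fin (β g')⁻¹ (MonoidHom.isOfFinOrder oG ht2)
        rw [← e1] at this
        rwa [show (β g')⁻¹ * (β g' * oG (PresentedGroup.mk {R ^ n} R ^ k) * (β g')⁻¹) * (β g')⁻¹⁻¹ =
          oG (PresentedGroup.mk {R ^ n} R ^ k) by group] at this
      obtain ⟨-, g, hg'⟩ := malnormal hφ (fun h hh => by
        by_contra hne; exact not_isOfFinOrder_of_isMulTorsionFree hne hh)
        (i := some ()) (j := some ()) (PresentedGroup.mk {R ^ n} R ^ k : G) τ e2 hk (β g') e1
      refine ⟨g, k, hoG ?_⟩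
      have hg' : oG g = β g' := hg'
      rw [← e1, ← hg']
      exact ((map_mul oG _ _).trans (congrArg₂ (· * ·) (map_mul oG _ _) (map_inv oG _))).symm

theorem zmod_pow (d : ℕ) : (Multiplicative.ofAdd (1 : ZMod d)) ^ d = 1 := by
  apply Multiplicative.toAdd.injective
  rw [toAdd_pow, toAdd_ofAdd, toAdd_one]; simp

theorem zmod_zpow (k : ℤ) : (Multiplicative.ofAdd (1 : ZMod k.natAbs)) ^ k = 1 := by
  apply Multiplicative.toAdd.injective
  rw [toAdd_zpow, toAdd_ofAdd, toAdd_one, zsmul_eq_mul, mul_one]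
  exact (ZMod.intCast_zmod_eq_zero_iff_dvd _ _).2 (Int.natAbs_dvd.2 dvd_rfl)

theorem zmodHom {G : Type} [Group G] (d : ℕ) (g : G) (h : g ^ d = 1) :
    ∃ f : Multiplicative (ZMod d) →* G, f (Multiplicative.ofAdd 1) = g := by
  refine ⟨AddMonoidHom.toMultiplicativeLeft (ZMod.lift d ⟨zmultiplesHom (Additive G) (Additive.ofMul g), ?_⟩), ?_⟩
  · rw [zmultiplesHom_apply]
    apply Additive.toMul.injective
    simpa using h
  · have : (1 : ZMod d) = ((1 : ℤ) : ZMod d) := by simp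
    rw [this]
    change Additive.toMul (ZMod.lift d _ ((1 : ℤ) : ZMod d)) = g
    rw [ZMod.lift_coe]
    simp

theorem zmod_gen (d : ℕ) (y : Multiplicative (ZMod d)) : ∃ l : ℤ, y = (Multiplicative.ofAdd 1) ^ l := by
  obtain ⟨l, hl⟩ := ZMod.intCast_surjective (Multiplicative.toAdd y)
  refine ⟨l, Multiplicative.toAdd.injective ?_⟩
  rw [toAdd_zpow, toAdd_ofAdd, ← hl]; simp

theorem zmod_tf (d : ℕ) (hd : d = 0) (y : Multiplicative (ZMod d)) (hy : IsOfFinOrder y) : y = 1 := by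
  subst hd
  by_contra hne
  exact not_isOfFinOrder_of_isMulTorsionFree (G := Multiplicative ℤ) hne hy

theorem base_step (x : X) (k : ℤ) (hk : k ≠ 0) (n : ℕ) (hn : n ≠ 0) : FK (FreeGroup.of x ^ k) n := by
  classical
  let m := k.natAbs * n
  have hm : m ≠ 0 := by simp [m, hk, hn]
  let d : X → ℕ := fun z => if z = x then m else 0
  have hdx : d x = m := by simp [d]
  have hdz : ∀ z, z ≠ x → d z = 0 := fun z hz => by simp [d, hz]
  let C : X → Type := fun z => Multiplicative (ZMod (d z))
  let e : ∀ z, C z := fun z => Multiplicative.ofAdd (1 : ZMod (d z))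
  have hkm : ∀ {G : Type} [Group G] (g : G), g ^ m = 1 ↔ (g ^ k) ^ n = 1 := by
    intro G _ g
    simp only [m]
    rw [pow_mul]
    rcases Int.natAbs_eq k with h | h
    · rw [← zpow_natCast g, ← h]
    · have h3 : g ^ k = (g ^ k.natAbs)⁻¹ := by rw [← zpow_natCast, ← zpow_neg, ← h]
      rw [h3, inv_pow, inv_eq_one]
  let G := PresentedGroup {(FreeGroup.of x ^ k) ^ n}
  let lam : G →* CoprodI C := pgLift (FreeGroup.lift fun z => CoprodI.of (e z)) (by
    rw [map_pow, map_zpow, FreeGroup.lift_apply_of, ← hkm, ← map_pow]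
    have : e x ^ m = 1 := by
      rw [← hdx]; exact zmod_pow _
    rw [this, map_one])
  let xx : X → G := fun z => PresentedGroup.mk _ (FreeGroup.of z)
  have hxx : xx x ^ m = 1 := by
    rw [hkm, ← map_zpow, ← map_pow]; exact mk_self
  have hxd : ∀ z, xx z ^ d z = 1 := by
    intro z
    by_cases hz : z = x
    · subst hz; rw [hdx, hxx]
    · rw [hdz z hz, pow_zero]
  choose f hf using fun z => zmodHom (d z) (xx z) (hxd z)
  let μ : CoprodI C →* G := CoprodI.lift f
  have hμ : ∀ g, μ (lam g) = g := by
    intro g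
    obtain ⟨w, rfl⟩ := PresentedGroup.mk_surjective _ g
    have : (μ.comp (lam.comp (PresentedGroup.mk _))) = PresentedGroup.mk _ := by
      ext z
      have h1 : lam (PresentedGroup.mk _ (FreeGroup.of z)) = CoprodI.of (e z) := FreeGroup.lift_apply_of
      simp only [MonoidHom.comp_apply, h1]
      exact (CoprodI.lift_of _ _).trans (hf z)
    exact DFunLike.congr_fun this w
  have hlam : Function.Injective lam := Function.LeftInverse.injective hμ
  constructor
  · refine Good.of_inj ⟨X, C, inferInstance, ?_, lam, hlam⟩ (Subgroup.subtype _)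
      (Subgroup.subtype_injective _)
    intro z
    by_cases hz : z = x
    · left
      subst hz
      have : NeZero (d z) := ⟨by rw [hdx]; exact hm⟩
      intro y
      have : Finite (C z) := inferInstanceAs (Finite (ZMod (d z)))
      exact isOfFinOrder_of_finite y
    · right; exact zmod_tf _ (hdz z hz)
  · intro τ ht1 ht2
    have : Nonempty X := ⟨x⟩
    obtain ⟨z, y, c, hc⟩ := cop_torsion_conj (lam τ) (MonoidHom.isOfFinOrder lam ht2)
    by_cases hz : z = x
    · subst hz
      obtain ⟨l, rfl⟩ := zmod_gen _ y
      have h1 : τ = μ c * xx z ^ l * (μ c)⁻¹ := by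
        rw [← hμ τ, hc, map_mul, map_mul, map_inv]
        congr 2
        refine (CoprodI.lift_of _ _).trans ?_
        rw [map_zpow, hf]
      let q : G →* Multiplicative (ZMod k.natAbs) := pgLift
        (FreeGroup.lift fun v => if v = z then Multiplicative.ofAdd 1 else 1) (by
          rw [map_pow, map_zpow, FreeGroup.lift_apply_of, if_pos rfl]
          have : (Multiplicative.ofAdd (1 : ZMod k.natAbs)) ^ k = 1 := zmod_zpow k
          rw [this, one_pow])
      have hqx : q (xx z) = Multiplicative.ofAdd 1 := by
        have : q (xx z) = if z = z then Multiplicative.ofAdd 1 else 1 := FreeGroup.lift_apply_of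
        rw [this, if_pos rfl]
      have hq : q τ = 1 := by
        have : Subgroup.normalClosure {PresentedGroup.mk _ (FreeGroup.of z ^ k)} ≤ q.ker := by
          apply Subgroup.normalClosure_le_normal
          rw [Set.singleton_subset_iff, SetLike.mem_coe, MonoidHom.mem_ker, map_zpow, map_zpow]
          have h2 : q (xx z) ^ k = 1 := by
            rw [hqx]; exact zmod_zpow k
          exact h2
        exact this ht1
      rw [h1] at hq
      have hq2 : q (xx z) ^ l = 1 := by
        rw [map_mul, map_mul, map_inv, map_zpow, mul_comm, ← mul_assoc, inv_mul_cancel, one_mul] at hq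
        exact hq
      rw [hqx] at hq2
      have hq3 := congrArg Multiplicative.toAdd hq2
      simp only [toAdd_zpow, toAdd_ofAdd, toAdd_one, zsmul_eq_mul, mul_one] at hq3
      rw [ZMod.intCast_zmod_eq_zero_iff_dvd, Int.natAbs_dvd] at hq3
      obtain ⟨l', rfl⟩ := hq3
      refine ⟨μ c, l', ?_⟩
      rw [h1, map_zpow, ← zpow_mul]
    · have hy : IsOfFinOrder y := by
        rw [← (CoprodI.of_injective z).isOfFinOrder_iff]
        have := conj_fin c⁻¹ (MonoidHom.isOfFinOrder lam ht2)
        rw [hc] at this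
        rwa [show c⁻¹ * (c * CoprodI.of y * c⁻¹) * c⁻¹⁻¹ = CoprodI.of y by group] at this
      have := zmod_tf _ (hdz z hz) y hy
      subst this
      refine ⟨1, 0, hlam ?_⟩
      rw [hc]; simp

theorem fks_aux (n : ℕ) (hn : n ≠ 0) (N : ℕ) :
    ∀ (X : Type) (R : FreeGroup X), csize R = N → R ≠ 1 → FK R n := by
  induction N using Nat.strong_induction_on with
  | _ N ih =>
  intro X R hN hR1
  obtain ⟨L, hL1, hL2, hL3⟩ := exists_min R
  have step : ∀ (s : X) (L0 : List ((X × ℤ) × Bool)), csize (FreeGroup.mk L0) < csize R →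
      (∀ q ∈ L0, Ess (FreeGroup.mk L0) q.1) → (∀ q ∈ L0, q.1.1 ≠ s) → L0 ≠ [] →
      FK (iota s (FreeGroup.mk L0)) n := by
    intro s L0 g2 g3 g4 hne
    obtain ⟨q0, hq0⟩ := List.exists_mem_of_ne_nil _ hne
    obtain ⟨a, b, hab, ⟨qa, hqa, hqa'⟩, ⟨qb, hqb, hqb'⟩, hwin⟩ := window L0 g4 ⟨q0, hq0, rfl⟩
    have ha := g3 qa hqa
    have hb := g3 qb hqb
    rw [hqa'] at ha
    rw [hqb'] at hb
    exact hnn_step (ih _ (hN ▸ g2) _ _ rfl (ess_ne_one ha)) ha hb hwin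
  by_cases hA : ∃ p ∈ L, exps p.1 R = 1
  · obtain ⟨p, hp, hex⟩ := hA
    obtain ⟨L0, g1, g2, g3, g4⟩ := reduceStep hL2 p.1 ⟨p, hp, rfl⟩ 1 (fun _ => 0) (by
      rw [subst_one, hom_conj _ hL1, hex])
    rw [subst_one] at g1
    refine (step p.1 L0 g2 g3 g4 ?_).conj (g1.trans hL1)
    rintro rfl
    rw [← FreeGroup.one_eq_mk, map_one] at g1
    exact hR1 (isConj_one_right.1 (g1.trans hL1))
  · push Not at hA
    have hLne : L ≠ [] := by
      rintro rfl
      rw [← FreeGroup.one_eq_mk] at hL1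
      exact hR1 (isConj_one_right.1 hL1)
    obtain ⟨px, hpx⟩ := List.exists_mem_of_ne_nil _ hLne
    set x := px.1 with hx_def
    have hex := hA px hpx
    by_cases hy : ∃ p ∈ L, p.1 ≠ x
    · obtain ⟨py, hpy, hyx⟩ := hy
      obtain ⟨y, c⟩ := py
      simp only at hyx
      obtain ⟨L0, g1, g2, g3, g4⟩ := reduceStep hL2 y ⟨_, hpy, rfl⟩
        (Multiplicative.toAdd (exps x (FreeGroup.mk L))) _ (psi_exps_y hyx.symm (FreeGroup.mk L))
      have hex' : exps x (FreeGroup.mk L) ≠ 1 := by rwa [hom_conj _ hL1]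
      refine FK.conj ?_ hL1
      refine root_step hyx.symm (a := Multiplicative.toAdd (exps x (FreeGroup.mk L))) ?_
        ((hL3 px hpx).conj hL1.symm) ((step y L0 g2 g3 g4 ?_).conj g1)
      · exact fun h => hex' (Multiplicative.toAdd.injective h)
      · rintro rfl
        have := hom_conj (exps x) g1
        rw [psi_exps_x hyx.symm, ← FreeGroup.one_eq_mk, map_one, map_one] at this
        exact hex' this.symm
    · push Not at hy
      have hk : ∃ k : ℤ, FreeGroup.mk L = FreeGroup.of x ^ k := by
        have h1 : FreeGroup.mk L ∈ Sub ({x} : Set X) := mk_mem_Sub fun p hp => hy p hp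
        have h2 : Sub ({x} : Set X) ≤ Subgroup.zpowers (FreeGroup.of x) := Sub_le (by
          rintro _ rfl; exact Subgroup.mem_zpowers _)
        obtain ⟨k, hk⟩ := h2 h1
        exact ⟨k, hk.symm⟩
      obtain ⟨k, hk⟩ := hk
      rw [hk] at hL1
      refine (base_step x k ?_ n hn).conj hL1
      rintro rfl
      rw [zpow_zero] at hL1
      exact hR1 (isConj_one_right.1 hL1)

theorem fks (R : FreeGroup X) (hR : R ≠ 1) (n : ℕ) (hn : n ≠ 0) : FK R n :=
  fks_aux n hn _ X R rfl hR

end OR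

namespace OR
open Monoid

/-- elements of a group represented by paths in a graph -/
inductive Pth {I V K : Type} [Group K] (src tgt : I → V) (z : I → K) : V → V → K → Prop
  | nil (v : V) : Pth src tgt z v v 1
  | cons (i : I) (w : V) (g : K) : Pth src tgt z (tgt i) w g → Pth src tgt z (src i) w (z i * g)
  | cons' (i : I) (w : V) (g : K) : Pth src tgt z (src i) w g → Pth src tgt z (tgt i) w ((z i)⁻¹ * g)

namespace Pth
variable {I V K : Type} [Group K] {src tgt : I → V} {z : I → K}

theorem mul {v u w : V} {g h : K} (p : Pth src tgt z v u g) (q : Pth src tgt z u w h) :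
    Pth src tgt z v w (g * h) := by
  induction p with
  | nil v => simpa using q
  | cons i w g _ ih => rw [mul_assoc]; exact cons _ _ _ (ih q)
  | cons' i w g _ ih => rw [mul_assoc]; exact cons' _ _ _ (ih q)

theorem single (i : I) : Pth src tgt z (src i) (tgt i) (z i) := by
  have := cons (z := z) i _ _ (nil (src := src) (tgt := tgt) (z := z) (tgt i))
  rwa [mul_one] at this

theorem single' (i : I) : Pth src tgt z (tgt i) (src i) (z i)⁻¹ := by
  have := cons' (z := z) i _ _ (nil (src := src) (tgt := tgt) (z := z) (src i))
  rwa [mul_one] at this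

theorem inv {v w : V} {g : K} (p : Pth src tgt z v w g) : Pth src tgt z w v g⁻¹ := by
  induction p with
  | nil v => simpa using nil v
  | cons i w g _ ih => rw [mul_inv_rev]; exact ih.mul (single' i)
  | cons' i w g _ ih => rw [mul_inv_rev, inv_inv]; exact ih.mul (single i)

theorem gauge {S : Type} [Group S] {k ι : K →* S} {γ : V → S}
    (h : ∀ i, k (z i) = γ (src i) * ι (z i) * (γ (tgt i))⁻¹) {v w : V} {g : K}
    (p : Pth src tgt z v w g) : k g = γ v * ι g * (γ w)⁻¹ := by
  induction p with
  | nil v => simp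
  | cons i w g _ ih => rw [map_mul, ih, h, map_mul]; group
  | cons' i w g _ ih => rw [map_mul, ih, map_mul, map_inv, h, map_inv]; group

/-- a way to push paths -/
theorem push {I' V' K' : Type} [Group K'] {src' tgt' : I' → V'} {z' : I' → K'} (k : K →* K')
    (κ : V → V') (h : ∀ i, Pth src' tgt' z' (κ (src i)) (κ (tgt i)) (k (z i))) {v w : V} {g : K}
    (p : Pth src tgt z v w g) : Pth src' tgt' z' (κ v) (κ w) (k g) := by
  induction p with
  | nil v => rw [map_one]; exact nil _
  | cons i w g _ ih => rw [map_mul]; exact (h i).mul ih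
  | cons' i w g _ ih => rw [map_mul, map_inv]; exact (h i).inv.mul ih

theorem all [Subsingleton V] (hz : Subgroup.closure (Set.range z) = ⊤) (v w : V) (g : K) :
    Pth src tgt z v w g := by
  have hg : g ∈ Subgroup.closure (Set.range z) := by rw [hz]; trivial
  induction hg using Subgroup.closure_induction with
  | mem x hx =>
    obtain ⟨i, rfl⟩ := hx
    rw [Subsingleton.elim v (src i), Subsingleton.elim w (tgt i)]; exact single i
  | one => rw [Subsingleton.elim v w]; exact nil _
  | mul x y _ _ h1 h2 => 
    rw [Subsingleton.elim w v] at *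
    exact h1.mul h2
  | inv x _ h => rw [Subsingleton.elim w v] at *; exact h.inv

end Pth

/-- reduced label paths -/
inductive RP {V : Type} {P : Bool → Type} [∀ b, Group (P b)] (M : ∀ b, V → V → P b → Prop) :
    V → V → List (Σ b, P b) → Prop
  | nil (v : V) : RP M v v []
  | cons (b : Bool) (v u w : V) (p : P b) (L : List (Σ b, P b)) : M b v u p → p ≠ 1 →
      (∀ q ∈ L.head?, q.1 ≠ b) → RP M u w L → RP M v w (⟨b, p⟩ :: L)

section RP
variable {V : Type} {P : Bool → Type} [∀ b, Group (P b)] {M : ∀ b, V → V → P b → Prop}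

/-- product of a syllable list -/
def sprod (L : List (Σ b, P b)) : CoprodI P := (L.map fun s => CoprodI.of s.2).prod

theorem RP.step (hM : ∀ b v u w p q, M b v u p → M b u w q → M b v w (p * q))
    (h1 : ∀ b v w, M b v w 1 → v = w) {b : Bool} {v u w : V} {p : P b} {L : List (Σ b, P b)}
    (hp : M b v u p) (hL : RP M u w L) :
    ∃ L', RP M v w L' ∧ sprod L' = CoprodI.of p * sprod L := by
  by_cases hp1 : p = 1
  · subst hp1
    have := h1 _ _ _ hp
    subst this
    exact ⟨L, hL, by simp⟩
  cases hL with
  | nil => exact ⟨_, RP.cons b v u u p [] hp hp1 (by simp) (RP.nil u), by simp [sprod]⟩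
  | cons b' _ u' _ p' L hp' hp1' hne hL =>
    by_cases hb : b' = b
    · subst hb
      by_cases hpp : p * p' = 1
      · have hvu := hM _ _ _ _ _ _ hp hp'
        rw [hpp] at hvu
        have := h1 _ _ _ hvu
        subst this
        refine ⟨L, hL, ?_⟩
        simp only [sprod, List.map_cons, List.prod_cons]
        rw [← mul_assoc, ← map_mul, hpp, map_one, one_mul]
      · refine ⟨_, RP.cons b' v u' w (p * p') L (hM _ _ _ _ _ _ hp hp') hpp hne hL, ?_⟩
        simp only [sprod, List.map_cons, List.prod_cons]
        rw [map_mul, mul_assoc]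
    · refine ⟨_, RP.cons b v u w p _ hp hp1 ?_ (RP.cons b' u u' w p' L hp' hp1' hne hL), ?_⟩
      · intro q hq
        simp only [List.head?_cons, Option.mem_some_iff] at hq
        subst hq; exact hb
      · simp [sprod]

theorem RP.word {v w : V} {L : List (Σ b, P b)} (h : RP M v w L) :
    ∃ W : CoprodI.Word P, W.toList = L := by
  have : (∀ l ∈ L, Sigma.snd l ≠ 1) ∧ L.IsChain (fun a b => a.1 ≠ b.1) := by
    induction h with
    | nil => simp
    | cons b v u w p L hp hp1 hne _ ih =>
      refine ⟨?_, ?_⟩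
      · intro l hl
        rcases List.mem_cons.1 hl with rfl | hl
        · exact hp1
        · exact ih.1 l hl
      · rw [List.isChain_cons]
        exact ⟨fun y hy => (hne y hy).symm, ih.2⟩
  exact ⟨⟨L, this.1, this.2⟩, rfl⟩

theorem RP.ne_one {v w : V} {L : List (Σ b, P b)} (h : RP M v w L) (h1 : sprod L = 1) : v = w := by
  classical
  obtain ⟨W, rfl⟩ := h.word
  have : W.prod = CoprodI.Word.prod (CoprodI.Word.empty) := by
    rw [CoprodI.Word.prod_empty]; exact h1
  have hW : W = CoprodI.Word.empty := by
    exact (CoprodI.Word.equiv (M := P)).symm.injective this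
  rw [hW] at h
  cases h
  rfl

end RP

section Gru
variable {P : Bool → Type} [∀ b, Group (P b)] {F : Type} [Group F] (f : F →* CoprodI P)

/-- total graph maps -/
def tsrc {V : Type} {I : Bool → Type} (src : ∀ b, I b → V) : (Σ b, I b) → V := fun s => src s.1 s.2
def tz {I U : Bool → Type} [∀ b, Group (U b)] (z : ∀ b, I b → U b) : (Σ b, I b) → CoprodI U :=
  fun s => CoprodI.of (z s.1 s.2)

theorem mono_tot {V : Type} {I U : Bool → Type} [∀ b, Group (U b)] {src tgt : ∀ b, I b → V}
    {z : ∀ b, I b → U b} {b : Bool} {v w : V} {g : U b} (h : Pth (src b) (tgt b) (z b) v w g) :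
    Pth (tsrc src) (tsrc tgt) (tz z) v w (CoprodI.of g) :=
  Pth.push (CoprodI.of (i := b)) id (fun i => Pth.single (src := tsrc src) (tgt := tsrc tgt)
    (z := tz z) ⟨b, i⟩) h

theorem nofold {V : Type} {I U : Bool → Type} [∀ b, Group (U b)] {src tgt : ∀ b, I b → V}
    {z : ∀ b, I b → U b} (lam : ∀ b, U b →* P b)
    (h : ∀ b v w g, Pth (src b) (tgt b) (z b) v w g → lam b g = 1 → v = w) {v w : V} {g : CoprodI U}
    (hp : Pth (tsrc src) (tsrc tgt) (tz z) v w g) (h1 : cmap lam g = 1) : v = w := by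
  let M : ∀ b, V → V → P b → Prop := fun b v w p => ∃ g, Pth (src b) (tgt b) (z b) v w g ∧ lam b g = p
  have hM : ∀ b v u w p q, M b v u p → M b u w q → M b v w (p * q) := by
    rintro b v u w _ _ ⟨g, hg, rfl⟩ ⟨g', hg', rfl⟩
    exact ⟨g * g', hg.mul hg', map_mul _ _ _⟩
  have hM1 : ∀ b v w, M b v w 1 → v = w := by
    rintro b v w ⟨g, hg, h1⟩
    exact h b v w g hg h1
  have key : ∃ L, RP M v w L ∧ sprod L = cmap lam g := by
    clear h1
    induction hp with
    | nil v => exact ⟨[], RP.nil v, by simp [sprod]⟩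
    | cons i w g _ ih =>
      obtain ⟨L, hL, e⟩ := ih
      obtain ⟨L', hL', e'⟩ := RP.step hM hM1 (b := i.1) (v := src i.1 i.2) ⟨z i.1 i.2, Pth.single i.2, rfl⟩ hL
      refine ⟨L', hL', ?_⟩
      rw [e', e, map_mul, tz, cmap_of]
    | cons' i w g _ ih =>
      obtain ⟨L, hL, e⟩ := ih
      obtain ⟨L', hL', e'⟩ := RP.step hM hM1 (b := i.1) (v := tgt i.1 i.2) ⟨(z i.1 i.2)⁻¹, Pth.single' i.2, rfl⟩ hL
      refine ⟨L', hL', ?_⟩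
      rw [e', e, map_mul, tz, map_inv, map_inv, map_inv, cmap_of]
  obtain ⟨L, hL, e⟩ := key
  exact hL.ne_one (e.trans h1)

theorem grushko_aux (hf : Function.Surjective f) (n : ℕ) :
    ∀ (V : Type) [Finite V] (_ : Nat.card V = n) (v0 : V) (U : Bool → Type) [∀ b, Group (U b)]
      (_ : ∀ b, IsFreeGroup (U b)) (I : Bool → Type) (src tgt : ∀ b, I b → V) (z : ∀ b, I b → U b)
      (_ : ∀ b, Subgroup.closure (Set.range (z b)) = ⊤)
      (_ : ∀ b (S : Type) [Group S] (ι : U b →* S) (γ : V → S),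
        ∃ k : U b →* S, ∀ i, k (z b i) = γ (src b i) * ι (z b i) * (γ (tgt b i))⁻¹)
      (lam : ∀ b, U b →* P b) (j : F →* CoprodI U) (_ : Function.Injective j)
      (_ : ∀ g, g ∈ j.range ↔ Pth (tsrc src) (tsrc tgt) (tz z) v0 v0 g)
      (_ : ∀ v, ∃ g, Pth (tsrc src) (tsrc tgt) (tz z) v0 v g)
      (_ : ∀ x, cmap lam (j x) = f x),
    ∃ (U : Bool → Type) (_ : ∀ b, Group (U b)) (_ : ∀ b, IsFreeGroup (U b)) (lam : ∀ b, U b →* P b)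
      (j : F ≃* CoprodI U), ∀ x, cmap lam (j x) = f x := by
  classical
  induction n with
  | zero =>
    intro V _ hV v0
    have : Nonempty V := ⟨v0⟩
    exact absurd hV Nat.card_pos.ne'
  | succ n ih =>
  intro V _ hV v0 U _ hfree I src tgt z hgen hgauge lam j hj hrange hconn hlab
  by_cases hs : Subsingleton V
  · refine ⟨U, inferInstance, hfree, lam, MulEquiv.ofBijective j ⟨hj, fun g => ?_⟩, hlab⟩
    have : g ∈ j.range := by
      rw [hrange]
      apply Pth.all
      have h2 : ∀ b, (CoprodI.of (M := U) (i := b)).range ≤ Subgroup.closure (Set.range (tz z)) := by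
        intro b
        rw [MonoidHom.range_eq_map, ← hgen b, MonoidHom.map_closure, Subgroup.closure_le]
        rintro _ ⟨_, ⟨i, rfl⟩, rfl⟩
        exact Subgroup.subset_closure ⟨⟨b, i⟩, rfl⟩
      rw [eq_top_iff]
      intro g _
      induction g using CoprodI.induction_on with
      | one => exact one_mem _
      | of i x => exact h2 i (MonoidHom.mem_range.2 ⟨x, rfl⟩)
      | mul x y hx hy => exact mul_mem (hx trivial) (hy trivial)
    exact this
  by_cases hno : ∀ b v w g, Pth (src b) (tgt b) (z b) v w g → lam b g = 1 → v = w
  · exfalso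
    apply hs
    have key : ∀ v, v0 = v := by
      intro v
      obtain ⟨g, hg⟩ := hconn v
      obtain ⟨x, hx⟩ := hf (cmap lam g)
      have h1 := (hrange (j x)).1 ⟨x, rfl⟩
      apply nofold lam hno (h1.inv.mul hg)
      rw [map_mul, map_inv, hlab, hx, inv_mul_cancel]
    exact ⟨fun a b => (key a).symm.trans (key b)⟩
  -- fold
  have hfold : ∃ b e e' m, Pth (src b) (tgt b) (z b) e e' m ∧ lam b m = 1 ∧ e ≠ e' ∧ e' ≠ v0 := by
    push Not at hno
    obtain ⟨b, v, w, g, h1, h2, h3⟩ := hno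
    by_cases hw : w = v0
    · exact ⟨b, w, v, g⁻¹, h1.inv, by rw [map_inv, h2, inv_one], h3.symm, fun h => h3 (h.trans hw.symm)⟩
    · exact ⟨b, v, w, g, h1, h2, h3, hw⟩
  clear hno
  obtain ⟨b, e, e', m, hm, hm1, hee, he0⟩ := hfold
  let mm : ∀ c, U c := Function.update (fun _ => 1) b m
  have mmb : mm b = m := Function.update_self _ _ _
  have mmc : ∀ c, c ≠ b → mm c = 1 := fun c hc => Function.update_of_ne hc _ _
  let gm : ∀ c, V → U c := fun c v => if v = e' then mm c else 1
  choose ps hps using fun c => hgauge c (U c) (MonoidHom.id _) (gm c)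
  simp only [MonoidHom.id_apply] at hps
  -- new data
  let V' := {v : V // v ≠ e'}
  let κ : V → V' := fun v => if h : v = e' then ⟨e, hee⟩ else ⟨v, h⟩
  have κe' : κ e' = ⟨e, hee⟩ := by simp [κ]
  have κv : ∀ v (h : v ≠ e'), κ v = ⟨v, h⟩ := fun v h => by simp [κ, h]
  have κκ : ∀ v, κ (κ v).1 = κ v := fun v => κv _ (κ v).2
  let U' : Bool → Type := fun c => (ps c).range
  let pr' : ∀ c, U c →* U' c := fun c => (ps c).rangeRestrict
  have pr'_surj : ∀ c, Function.Surjective (pr' c) := fun c => (ps c).rangeRestrict_surjective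
  let z' : ∀ c, I c → U' c := fun c i => pr' c (z c i)
  let src' : ∀ c, I c → V' := fun c i => κ (src c i)
  let tgt' : ∀ c, I c → V' := fun c i => κ (tgt c i)
  -- any hom killing the mm factors nicely
  have hkill : ∀ c (S : Type) [Group S] (h : U c →* S), h (mm c) = 1 → ∀ g, h (ps c g) = h g := by
    intro c S _ h hh g
    have : h.comp (ps c) = h := by
      apply MonoidHom.eq_of_eqOn_dense (hgen c)
      rintro _ ⟨i, rfl⟩
      have h1 : ∀ v, h (gm c v) = 1 := by
        intro v; simp only [gm]; split_ifs
        · exact hh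
        · exact map_one h
      rw [MonoidHom.comp_apply, hps, map_mul, map_mul, map_inv, h1, h1]; simp
    exact DFunLike.congr_fun this g
  have hpsm : ps b m = 1 := by
    have := hm.gauge (k := ps b) (ι := MonoidHom.id _) (γ := gm b) (fun i => hps b i)
    rw [this]
    simp [gm, hee, mmb]
  have hpm : ∀ c, pr' c (mm c) = 1 := by
    intro c
    by_cases hc : c = b
    · subst hc; rw [mmb]; exact Subtype.ext hpsm
    · rw [mmc c hc, map_one]
  have hlm : ∀ c, lam c (mm c) = 1 := by
    intro c
    by_cases hc : c = b
    · subst hc; rw [mmb]; exact hm1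
    · rw [mmc c hc, map_one]
  let lam' : ∀ c, U' c →* P c := fun c => (lam c).comp (Subgroup.subtype _)
  have hlam' : ∀ c g, lam' c (pr' c g) = lam c g := fun c g => hkill c _ (lam c) (hlm c) g
  let contr : CoprodI U →* CoprodI U' := cmap pr'
  -- back map
  let Γ : V → CoprodI U := fun v => if v = e' then CoprodI.of m else 1
  have hback : ∀ c, ∃ k : U' c →* CoprodI U, ∀ i, k (z' c i) =
      Γ (src c i) * CoprodI.of (z c i) * (Γ (tgt c i))⁻¹ := by
    intro c
    by_cases hc : c = b
    · subst hc
      refine ⟨CoprodI.of.comp (Subgroup.subtype _), fun i => ?_⟩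
      have h1 : ∀ v, CoprodI.of (gm c v) = Γ v := by
        intro v; simp only [gm, Γ]; split_ifs
        · rw [mmb]
        · exact map_one _
      rw [← h1, ← h1, ← map_inv, ← map_mul, ← map_mul, ← hps]
      rfl
    · obtain ⟨h, hh⟩ := hgauge c (CoprodI U) CoprodI.of Γ
      refine ⟨h.comp (Subgroup.subtype _), fun i => ?_⟩
      rw [← hh]
      exact hkill c _ h (by rw [mmc c hc, map_one]) _
  choose kb hkb using hback
  let back : CoprodI U' →* CoprodI U := CoprodI.lift kb
  have hbc : ∀ g, Pth (tsrc src) (tsrc tgt) (tz z) v0 v0 g → back (contr g) = g := by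
    intro g hg
    have := hg.gauge (k := back.comp contr) (ι := MonoidHom.id _) (γ := Γ) (by
      rintro ⟨c, i⟩
      simp only [MonoidHom.comp_apply, MonoidHom.id_apply, tsrc, tz]
      have h1 : contr (CoprodI.of (z c i)) = CoprodI.of (z' c i) := cmap_of _ _
      rw [h1, ← hkb]
      exact CoprodI.lift_of _ _)
    rw [MonoidHom.comp_apply] at this
    rw [this]
    simp [Γ, he0.symm]
  have hpush : ∀ v w g, Pth (tsrc src) (tsrc tgt) (tz z) v w g →
      Pth (tsrc src') (tsrc tgt') (tz z') (κ v) (κ w) (contr g) := by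
    intro v w g hg
    refine hg.push contr κ ?_
    rintro ⟨c, i⟩
    have h1 : contr (CoprodI.of (z c i)) = CoprodI.of (z' c i) := cmap_of _ _
    have := Pth.single (src := tsrc src') (tgt := tsrc tgt') (z := tz z') ⟨c, i⟩
    simp only [tz] at this ⊢
    rw [h1]; exact this
  have hconnect : ∀ v, ∃ g, Pth (tsrc src) (tsrc tgt) (tz z) v (κ v).1 g ∧ contr g = 1 := by
    intro v
    by_cases hv : v = e'
    · subst hv
      refine ⟨(CoprodI.of m)⁻¹, ?_, ?_⟩
      · rw [κe']; exact (mono_tot hm).inv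
      have h1 : contr (CoprodI.of m) = CoprodI.of (pr' b m) := cmap_of _ _
      have h2 : pr' b m = 1 := Subtype.ext hpsm
      rw [map_inv, h1, h2, map_one, inv_one]
    · rw [κv v hv]; exact ⟨1, Pth.nil v, map_one _⟩
  have hlift : ∀ v w g, Pth (tsrc src') (tsrc tgt') (tz z') v w g →
      ∃ g', Pth (tsrc src) (tsrc tgt) (tz z) v.1 w.1 g' ∧ contr g' = g := by
    intro v w g hg
    induction hg with
    | nil v => exact ⟨1, Pth.nil _, map_one _⟩
    | cons i w g _ ih =>
      obtain ⟨c, i⟩ := i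
      obtain ⟨g1, h1, rfl⟩ := ih
      obtain ⟨g2, h2, e2⟩ := hconnect (src c i)
      obtain ⟨g3, h3, e3⟩ := hconnect (tgt c i)
      refine ⟨g2⁻¹ * CoprodI.of (z c i) * g3 * g1,
        ((h2.inv.mul (Pth.single (src := tsrc src) (tgt := tsrc tgt) (z := tz z) ⟨c, i⟩)).mul h3).mul h1, ?_⟩
      have h1 : contr (CoprodI.of (z c i)) = CoprodI.of (z' c i) := cmap_of _ _
      rw [map_mul, map_mul, map_mul, map_inv, e2, e3, h1, inv_one, one_mul, mul_one]; rfl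
    | cons' i w g _ ih =>
      obtain ⟨c, i⟩ := i
      obtain ⟨g1, h1, rfl⟩ := ih
      obtain ⟨g2, h2, e2⟩ := hconnect (src c i)
      obtain ⟨g3, h3, e3⟩ := hconnect (tgt c i)
      refine ⟨g3⁻¹ * (CoprodI.of (z c i))⁻¹ * g2 * g1,
        ((h3.inv.mul (Pth.single' (src := tsrc src) (tgt := tsrc tgt) (z := tz z) ⟨c, i⟩)).mul h2).mul h1, ?_⟩
      have h1 : contr (CoprodI.of (z c i)) = CoprodI.of (z' c i) := cmap_of _ _
      rw [map_mul, map_mul, map_mul, map_inv, map_inv, e2, e3, h1, inv_one, one_mul, mul_one]; rfl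
  have hv0 : κ v0 = ⟨v0, he0.symm⟩ := κv _ _
  have hcard : Nat.card V' = n := by
    have h1 : Nat.card V' = Nat.card V - 1 := by
      have := Fintype.ofFinite V
      rw [Nat.card_eq_fintype_card, Nat.card_eq_fintype_card]
      rw [Fintype.card_subtype_compl, Fintype.card_subtype_eq]
    rw [h1, hV]; rfl
  refine ih V' hcard ⟨v0, he0.symm⟩ U' (fun c => ?_) I src' tgt' z' (fun c => ?_) (fun c S _ ι γ => ?_)
    lam' (contr.comp j) ?_ (fun g => ?_) (fun v => ?_) (fun x => ?_)
  · have := hfree c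
    exact subgroupIsFreeOfIsFree _
  · have h1 : Set.range (z' c) = (pr' c) '' Set.range (z c) := by
      rw [← Set.range_comp]; rfl
    rw [h1, ← MonoidHom.map_closure, hgen c]
    exact Subgroup.map_top_of_surjective _ (pr'_surj c)
  · obtain ⟨h, hh⟩ := hgauge c S (ι.comp (pr' c)) (fun v => γ (κ v))
    refine ⟨h.comp (Subgroup.subtype _), fun i => ?_⟩
    have hk : h (mm c) = 1 := by
      by_cases hc : c = b
      · subst hc
        rw [mmb, hm.gauge (γ := fun v => γ (κ v)) hh]
        rw [κe', κv e hee]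
        have h2 : pr' c m = 1 := Subtype.ext hpsm
        rw [MonoidHom.comp_apply, h2]; simp
      · rw [mmc c hc, map_one]
    exact (hkill c _ h hk (z c i)).trans (hh i)
  · intro x y hxy
    apply hj
    rw [← hbc (j x) ((hrange _).1 ⟨x, rfl⟩), ← hbc (j y) ((hrange _).1 ⟨y, rfl⟩)]
    exact congrArg back hxy
  · constructor
    · rintro ⟨x, rfl⟩
      have := hpush _ _ _ ((hrange _).1 ⟨x, rfl⟩)
      rwa [hv0] at this
    · intro hg
      obtain ⟨g', h1, rfl⟩ := hlift _ _ _ hg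
      obtain ⟨x, rfl⟩ := (hrange _).2 h1
      exact ⟨x, rfl⟩
  · obtain ⟨g, hg⟩ := hconn v.1
    have := hpush _ _ _ hg
    rw [hv0, κv _ v.2] at this
    exact ⟨_, this⟩
  · rw [← hlab]
    have : (cmap lam').comp contr = cmap lam := by
      refine CoprodI.ext_hom _ _ fun c => ?_
      ext g
      have h1 : contr (CoprodI.of g) = CoprodI.of (pr' c g) := cmap_of _ _
      simp only [MonoidHom.comp_apply]
      rw [h1, cmap_of, cmap_of, hlam']
    exact DFunLike.congr_fun this (j x)

end Gru
end OR

namespace OR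
open Monoid

/-- edges of the initial graph -/
inductive Ed {X : Type} (len : X → ℕ) : Type
  | a (x : X) : Ed len
  | z (x : X) (i : Fin (len x)) : Ed len
  | c (x : X) : Ed len

theorem exists_syl {P : Bool → Type} [∀ b, Group (P b)] (g : CoprodI P) : ∃ L : List (Σ b, P b), sprod L = g := by
  induction g using CoprodI.induction_on with
  | one => exact ⟨[], by simp [sprod]⟩
  | of i x => exact ⟨[⟨i, x⟩], by simp [sprod]⟩
  | mul x y hx hy =>
    obtain ⟨L, rfl⟩ := hx
    obtain ⟨L', rfl⟩ := hy
    exact ⟨L ++ L', by simp [sprod]⟩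

theorem grushko {X : Type} [Finite X] {P : Bool → Type} [∀ b, Group (P b)]
    (f : FreeGroup X →* CoprodI P) (hf : Function.Surjective f) :
    ∃ (U : Bool → Type) (_ : ∀ b, Group (U b)) (_ : ∀ b, IsFreeGroup (U b)) (lam : ∀ b, U b →* P b)
      (j : FreeGroup X ≃* CoprodI U), ∀ x, cmap lam (j x) = f x := by
  classical
  choose L hL using fun x : X => exists_syl (f (FreeGroup.of x))
  let len : X → ℕ := fun x => (L x).length
  let V := Option (Σ x, Fin (len x + 1))
  let es : Ed len → V := fun e => match e with
    | .a _ => none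
    | .z x i => some ⟨x, i.castSucc⟩
    | .c x => some ⟨x, Fin.last _⟩
  let et : Ed len → V := fun e => match e with
    | .a x => some ⟨x, 0⟩
    | .z x i => some ⟨x, i.succ⟩
    | .c _ => none
  let sy : Ed len → Σ b, P b := fun e => match e with
    | .a _ => ⟨true, 1⟩
    | .z x i => (L x).get i
    | .c _ => ⟨true, 1⟩
  let rr : Ed len → FreeGroup X := fun e => match e with
    | .a _ => 1
    | .z _ _ => 1
    | .c x => FreeGroup.of x
  let I : Bool → Type := fun b => {e : Ed len // (sy e).1 = b}
  let U : Bool → Type := fun b => FreeGroup (I b)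
  let instU : ∀ b, Group (U b) := fun b => inferInstanceAs (Group (FreeGroup (I b)))
  let lam : ∀ b, U b →* P b := fun b => FreeGroup.lift fun e => e.2 ▸ (sy e.1).2
  let z : ∀ b, I b → U b := fun b e => FreeGroup.of e
  let src : ∀ b, I b → V := fun b e => es e.1
  let tgt : ∀ b, I b → V := fun b e => et e.1
  let ze : Ed len → CoprodI U := fun e => CoprodI.of (z (sy e).1 ⟨e, rfl⟩)
  have hze : ∀ b (e : I b), CoprodI.of (z b e) = ze e.1 := by
    rintro b ⟨e, rfl⟩; rfl
  have hlze : ∀ e, cmap lam (ze e) = CoprodI.of (sy e).2 := by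
    intro e
    refine (cmap_of _ _).trans (congrArg _ ?_)
    exact FreeGroup.lift_apply_of
  have hpze : ∀ e, Pth (tsrc src) (tsrc tgt) (tz z) (es e) (et e) (ze e) := fun e =>
    Pth.single (src := tsrc src) (tgt := tsrc tgt) (z := tz z) ⟨(sy e).1, ⟨e, rfl⟩⟩
  let r : CoprodI U →* FreeGroup X := CoprodI.lift fun b => FreeGroup.lift fun e : I b => rr e.1
  have hrze : ∀ e, r (ze e) = rr e := fun e => (CoprodI.lift_of _ _).trans FreeGroup.lift_apply_of
  let tn : X → ℕ → CoprodI U := fun x k => Nat.rec (ze (.a x))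
    (fun k t => t * if h : k < len x then ze (.z x ⟨k, h⟩) else 1) k
  have tn0 : ∀ x, tn x 0 = ze (.a x) := fun x => rfl
  have tns : ∀ x k (h : k < len x), tn x (k + 1) = tn x k * ze (.z x ⟨k, h⟩) := by
    intro x k h
    have : tn x (k + 1) = tn x k * if h : k < len x then ze (.z x ⟨k, h⟩) else 1 := rfl
    rw [this, dif_pos h]
  have tnp : ∀ x k (h : k < len x + 1), Pth (tsrc src) (tsrc tgt) (tz z) none (some ⟨x, ⟨k, h⟩⟩) (tn x k) := by
    intro x k
    induction k with
    | zero => intro h; exact hpze (.a x)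
    | succ k ih =>
      intro h
      rw [tns x k (by omega)]
      exact (ih (by omega)).mul (hpze (.z x ⟨k, by omega⟩))
  have tnl : ∀ x k, k ≤ len x → cmap lam (tn x k) = sprod ((L x).take k) := by
    intro x k
    induction k with
    | zero => intro _; rw [tn0]; exact (hlze (.a x)).trans (by simp [sprod, sy])
    | succ k ih =>
      intro h
      have hk : k < (L x).length := h
      rw [tns x k hk, map_mul, ih (by omega), hlze (.z x ⟨k, hk⟩), List.take_add_one, List.getElem?_eq_getElem hk]
      simp only [sprod, Option.toList_some, List.map_append, List.map_cons, List.map_nil,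
        List.prod_append, List.prod_singleton]
      rfl
  have tnr : ∀ x k, k ≤ len x → r (tn x k) = 1 := by
    intro x k
    induction k with
    | zero => intro _; rw [tn0]; exact hrze (.a x)
    | succ k ih =>
      intro h
      rw [tns x k (by omega), map_mul, ih (by omega), one_mul]; exact hrze _
  let j : FreeGroup X →* CoprodI U := FreeGroup.lift fun x => tn x (len x) * ze (.c x)
  have hjx : ∀ x, j (FreeGroup.of x) = tn x (len x) * ze (.c x) := fun x => FreeGroup.lift_apply_of
  have hrj : ∀ g, r (j g) = g := by
    intro g
    have : r.comp j = MonoidHom.id _ := by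
      ext x
      rw [MonoidHom.comp_apply, hjx, map_mul, tnr x _ le_rfl, one_mul]; exact hrze _
    exact DFunLike.congr_fun this g
  let γ : V → CoprodI U := fun v => match v with
    | none => 1
    | some ⟨x, k⟩ => tn x k.1
  have hjr : ∀ g, Pth (tsrc src) (tsrc tgt) (tz z) none none g → j (r g) = g := by
    intro g hg
    have := hg.gauge (k := j.comp r) (ι := MonoidHom.id _) (γ := γ) (by
      rintro ⟨b, e⟩
      have h1 : tz z ⟨b, e⟩ = ze e.1 := hze b e
      rw [h1, MonoidHom.comp_apply, hrze, MonoidHom.id_apply]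
      obtain ⟨e, he⟩ := e
      change j (rr e) = γ (es e) * ze e * (γ (et e))⁻¹
      cases e with
      | a x => 
        change j 1 = 1 * ze (.a x) * (tn x 0)⁻¹
        rw [map_one, tn0]; group
      | z x i =>
        change j 1 = tn x i.1 * ze (.z x i) * (tn x (i.1 + 1))⁻¹
        rw [map_one, tns x i.1 i.2]; group
      | c x =>
        change j (FreeGroup.of x) = tn x (len x) * ze (.c x) * 1⁻¹
        rw [hjx]; group)
    rw [MonoidHom.comp_apply] at this
    rw [this]
    change 1 * g * 1⁻¹ = g
    group
  refine grushko_aux f hf _ V rfl none U (fun b => inferInstance) I src tgt z (fun b => ?_)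
    (fun b S _ ι γ => ⟨FreeGroup.lift fun i => γ (src b i) * ι (z b i) * (γ (tgt b i))⁻¹, fun i =>
      FreeGroup.lift_apply_of⟩) lam j (Function.LeftInverse.injective hrj) (fun g => ⟨?_, ?_⟩) (fun v => ?_) (fun x => ?_)
  · exact FreeGroup.closure_range_of _
  · rintro ⟨x, rfl⟩
    induction x using FreeGroup.induction_on with
    | C1 => rw [map_one]; exact Pth.nil _
    | of x => rw [hjx]; exact (tnp x (len x) (by omega)).mul (hpze (.c x))
    | inv_of x h => rw [map_inv]; exact h.inv
    | mul x y hx hy => rw [map_mul]; exact hx.mul hy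
  · intro hg
    exact ⟨r g, hjr g hg⟩
  · match v with
    | none => exact ⟨1, Pth.nil _⟩
    | some ⟨x, k⟩ => exact ⟨_, tnp x k.1 k.2⟩
  · have : (cmap lam).comp j = f := by
      ext x
      rw [MonoidHom.comp_apply, hjx, map_mul, tnl x _ le_rfl, hlze (.c x), ← hL x]
      simp [len, sy]
    exact DFunLike.congr_fun this x

end OR

namespace OR
open Monoid

theorem icmap {G H : Type} [Group G] [Group H] {a b : G} (h : IsConj a b) (f : G →* H) :
    IsConj (f a) (f b) := f.map_isConj h

theorem copBool (U : Bool → Type) [∀ b, Group (U b)] (b : Bool) :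
    ∃ e : CoprodI U ≃* Coprod (U b) (U !b), ∀ x : U b, e (CoprodI.of x) = Coprod.inl x := by
  have key : ∀ f : ∀ c, U c →* Coprod (U b) (U !b), f b = Coprod.inl → f (!b) = Coprod.inr →
      ∃ e : CoprodI U ≃* Coprod (U b) (U !b), ∀ x : U b, e (CoprodI.of x) = Coprod.inl x := by
    intro f h1 h2
    refine ⟨MonoidHom.toMulEquiv (CoprodI.lift f)
      (Coprod.lift (CoprodI.of (i := b)) (CoprodI.of (i := !b))) ?_ ?_, fun x => ?_⟩
    · ext c x
      rcases (by cases b <;> cases c <;> simp : c = b ∨ c = !b) with rfl | rfl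
      · simp [h1]
      · simp [h2]
    · apply Coprod.hom_ext
      · ext x; simp [h1]
      · ext x; simp [h2]
    · simp [MonoidHom.toMulEquiv, h1]
  cases b
  · exact key (fun c => match c with | false => Coprod.inl | true => Coprod.inr) rfl rfl
  · exact key (fun c => match c with | true => Coprod.inl | false => Coprod.inr) rfl rfl

theorem lemD {X H K : Type} [Group H] [Group K] (R : FreeGroup X) (n : ℕ)
    (j : FreeGroup X ≃* Coprod H K) (R1 : H) (hc : IsConj (j R) (Coprod.inl R1))
    (hK : Nontrivial K) (hH : Nontrivial (H ⧸ Subgroup.normalClosure {R1 ^ n})) :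
    FreelyDecomposable (PresentedGroup {R ^ n}) := by
  let Q := H ⧸ Subgroup.normalClosure {R1 ^ n}
  let q : H →* Q := QuotientGroup.mk' _
  have hq : q (R1 ^ n) = 1 := (QuotientGroup.eq_one_iff _).2
    (Subgroup.subset_normalClosure (Set.mem_singleton _))
  let f : FreeGroup X →* Coprod Q K := (Coprod.map q (MonoidHom.id K)).comp j.toMonoidHom
  have hf : f (R ^ n) = 1 := by
    have h1 : IsConj (j (R ^ n)) (Coprod.inl (R1 ^ n)) := by
      rw [map_pow, map_pow]; exact isConj_pow hc n
    have h2 := icmap h1 (Coprod.map q (MonoidHom.id K))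
    rw [Coprod.map_apply_inl, hq, map_one] at h2
    exact isConj_one_left.1 h2
  let m : FreeGroup X →* PresentedGroup {R ^ n} := PresentedGroup.mk {R ^ n}
  let p1 : H →* PresentedGroup {R ^ n} := m.comp (j.symm.toMonoidHom.comp Coprod.inl)
  have hp1 : Subgroup.normalClosure {R1 ^ n} ≤ p1.ker := by
    apply Subgroup.normalClosure_le_normal
    rintro _ rfl
    change m (j.symm (Coprod.inl (R1 ^ n))) = 1
    have h1 : IsConj (R ^ n) (j.symm (Coprod.inl (R1 ^ n))) := by
      have := icmap (isConj_pow hc n) j.symm.toMonoidHom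
      simpa using this
    have h2 := icmap h1 m
    rw [show m (R ^ n) = 1 from mk_self] at h2
    exact isConj_one_right.1 h2
  let β : Coprod Q K →* PresentedGroup {R ^ n} :=
    Coprod.lift (QuotientGroup.lift _ p1 hp1) (m.comp (j.symm.toMonoidHom.comp Coprod.inr))
  refine ⟨Q, K, inferInstance, inferInstance, hH, hK,
    ⟨MonoidHom.toMulEquiv (pgLift f hf) β ?_ ?_⟩⟩
  · have h : β.comp (Coprod.map q (MonoidHom.id K)) = m.comp j.symm.toMonoidHom := by
      apply Coprod.hom_ext
      · ext x; simp [β]; rfl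
      · ext x; simp [β]
    refine QuotientGroup.monoidHom_ext _ ?_
    apply MonoidHom.ext
    intro w
    change β (f w) = m w
    have := DFunLike.congr_fun h (j w)
    simp at this
    exact this
  · apply Coprod.hom_ext
    · apply QuotientGroup.monoidHom_ext
      ext x
      change f (j.symm (Coprod.inl x)) = Coprod.inl (q x)
      simp [f]
    · ext x
      change f (j.symm (Coprod.inr x)) = Coprod.inr x
      simp [f]

theorem colour {U : Bool → Type} [∀ b, Group (U b)] [∀ b, IsFreeGroup (U b)] (R : CoprodI U)
    (b : Bool) : (∃ x : U b, IsConj R (CoprodI.of x)) ∨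
      ∀ w : U b, CoprodI.of w ∈ Subgroup.normalClosure {R} → w = 1 := by
  classical
  let Y : Bool → Type := fun b => IsFreeGroup.Generators (U b)
  let B := CoprodI.FreeGroupBasis.coprodI (fun i ↦ IsFreeGroup.basis (U i))
  let E : FreeGroup (Σ b, Y b) ≃* CoprodI U := B.repr.symm
  have hE : ∀ b (y : Y b), E (FreeGroup.of ⟨b, y⟩) = CoprodI.of (IsFreeGroup.of y) := by
    intro b y
    simp [E, B, CoprodI.FreeGroupBasis.coprodI]
    rfl
  let S : Set (Σ b, Y b) := {s | s.1 = b}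
  have hS1 : ∀ w ∈ Sub S, ∃ x : U b, E w = CoprodI.of x := by
    intro w hw
    have : Sub S ≤ (CoprodI.of (M := U) (i := b)).range.comap E.toMonoidHom := by
      apply Sub_le
      rintro ⟨c, y⟩ (rfl : c = b)
      exact ⟨_, (hE _ _).symm⟩
    obtain ⟨x, hx⟩ := this hw
    exact ⟨x, hx.symm⟩
  have hS2 : ∀ x : U b, E.symm (CoprodI.of x) ∈ Sub S := by
    intro x
    have h : (E.symm.toMonoidHom.comp (CoprodI.of (M := U) (i := b))).comp
        (IsFreeGroup.toFreeGroup (U b)).symm.toMonoidHom =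
        FreeGroup.map (fun y : Y b => (⟨b, y⟩ : Σ b, Y b)) := by
      ext y
      change E.symm (CoprodI.of (IsFreeGroup.of y)) = _
      rw [← hE, MulEquiv.symm_apply_apply]; simp
    have h2 := DFunLike.congr_fun h (IsFreeGroup.toFreeGroup (U b) x)
    simp at h2
    rw [h2]
    exact Sub_map (S := Set.univ) _ (fun y _ => by
      rw [FreeGroup.map.of]; exact of_mem_Sub rfl) (by
      have : FreeGroup.mk (IsFreeGroup.toFreeGroup (U b) x).toWord ∈ Sub Set.univ :=
        mk_mem_Sub (fun _ _ => trivial)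
      rwa [FreeGroup.mk_toWord] at this)
  obtain ⟨L, hL, -, hess⟩ := exists_min (E.symm R)
  by_cases hb : ∀ p ∈ L, p.1 ∈ S
  · left
    obtain ⟨x, hx⟩ := hS1 _ (mk_mem_Sub hb)
    refine ⟨x, ?_⟩
    rw [← hx]
    have := icmap hL.symm E.toMonoidHom
    simpa using this
  · right
    push Not at hb
    obtain ⟨p, hp, hpS⟩ := hb
    intro w hw
    have h1 := nc_map E.symm.toMonoidHom hw
    have h2 : E.symm (CoprodI.of w) = 1 := by
      refine freiheit _ p.1 (hess p hp) _ ?_ h1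
      exact Sub_le (fun x hx => of_mem_Sub (by
        rintro rfl; exact hpS hx)) (hS2 w)
    rw [map_eq_one_iff E.symm E.symm.injective] at h2
    exact (map_eq_one_iff _ (CoprodI.of_injective b)).1 h2

theorem caseFI_fin {X : Type} [Finite X] {R : FreeGroup X} (hR : R ≠ 1) (n : ℕ)
    {P : Bool → Type} [∀ b, Group (P b)] (hP : ∀ b, Nontrivial (P b))
    (f : FreeGroup X →* CoprodI P) (hf : Function.Surjective f)
    (hk : f.ker = Subgroup.normalClosure {R}) : FreelyDecomposable (PresentedGroup {R ^ n}) := by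
  obtain ⟨U, i1, i2, lam, j, hj⟩ := grushko f hf
  have hker : ∀ z : CoprodI U, cmap lam z = 1 ↔ z ∈ Subgroup.normalClosure {j R} := by
    intro z
    have h0 := hj (j.symm z)
    rw [MulEquiv.apply_symm_apply] at h0
    rw [h0, ← MonoidHom.mem_ker, hk]
    constructor
    · intro h; have := nc_map j.toMonoidHom h; simpa using this
    · intro h; have := nc_map j.symm.toMonoidHom h; simpa using this
  have hlk : ∀ b (w : U b), lam b w = 1 ↔ CoprodI.of w ∈ Subgroup.normalClosure {j R} := by
    intro b w
    rw [← hker, cmap_of, map_eq_one_iff _ (CoprodI.of_injective b)]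
  have hls : ∀ b, Function.Surjective (lam b) := by
    intro b y
    obtain ⟨x, hx⟩ := hf (CoprodI.of y)
    rw [← hj] at hx
    let π : CoprodI P →* P b := CoprodI.lift (Function.update (fun _ => 1) b (MonoidHom.id _))
    let π' : CoprodI U →* U b := CoprodI.lift (Function.update (fun _ => 1) b (MonoidHom.id _))
    have hπ : π.comp (cmap lam) = (lam b).comp π' := by
      ext c u
      by_cases hcb : c = b
      · subst hcb; simp [π, π', cmap_of]
      · simp [π, π', cmap_of, hcb]
    refine ⟨π' (j x), ?_⟩
    have h2 := DFunLike.congr_fun hπ (j x)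
    simp only [MonoidHom.comp_apply] at h2
    rw [← h2, hx]; simp [π]
  have hmain : ∃ b, ∃ x : U b, IsConj (j R) (CoprodI.of x) := by
    by_contra hcon
    push Not at hcon
    have hi : ∀ b, Function.Injective (lam b) := by
      intro b
      rw [injective_iff_map_eq_one]
      intro w hw
      rcases colour (j R) b with ⟨x, hx⟩ | h
      · exact absurd hx (hcon b x)
      · exact h w ((hlk b w).1 hw)
    have h1 : cmap lam (j R) = 1 :=
      (hker _).2 (Subgroup.subset_normalClosure (Set.mem_singleton _))
    have h2 := (map_eq_one_iff _ (cmap_injective lam hi)).1 h1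
    exact hR ((map_eq_one_iff j j.injective).1 h2)
  obtain ⟨b, R1, hR1⟩ := hmain
  obtain ⟨e, he⟩ := copBool U b
  have hl1 : lam b R1 = 1 := by
    rw [hlk, nc_conj hR1]
    exact Subgroup.subset_normalClosure (Set.mem_singleton _)
  refine lemD R n (j.trans e) R1 ?_ ?_ ?_
  · have := icmap hR1 e.toMonoidHom
    rw [show e.toMonoidHom (CoprodI.of R1) = _ from he _] at this
    exact this
  · have := hP (!b)
    exact (hls (!b)).nontrivial
  · have := hP b
    have hle : Subgroup.normalClosure {R1 ^ n} ≤ (lam b).ker := by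
      apply Subgroup.normalClosure_le_normal
      rintro _ rfl
      change lam b (R1 ^ n) = 1
      rw [map_pow, hl1, one_pow]
    exact (QuotientGroup.lift_surjective_of_surjective _ (lam b) (hls b) hle).nontrivial

theorem caseFI_inf {X : Type} [Infinite X] (R : FreeGroup X) (n : ℕ) :
    FreelyDecomposable (PresentedGroup {R ^ n}) := by
  classical
  let s : Finset X := (R.toWord.map Prod.fst).toFinset
  obtain ⟨y, hy⟩ := Infinite.exists_notMem_finset s
  obtain ⟨z, hz⟩ := Infinite.exists_notMem_finset (insert y s)
  have hRm : ∀ t, t ∉ s → R ∈ Sub ({t}ᶜ : Set X) := by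
    intro t ht
    rw [← FreeGroup.mk_toWord (x := R)]
    apply mk_mem_Sub
    rintro p hp rfl
    apply ht
    simp only [s, List.mem_toFinset, List.mem_map]
    exact ⟨p, hp, rfl⟩
  have hzy : z ≠ y := by rintro rfl; simp at hz
  have hzs : z ∉ s := by intro h; exact hz (Finset.mem_insert_of_mem h)
  let H := Sub ({y}ᶜ : Set X)
  let a : FreeGroup X →* Coprod H (Multiplicative ℤ) := FreeGroup.lift fun x =>
    if h : x = y then Coprod.inr (Multiplicative.ofAdd 1) else Coprod.inl ⟨FreeGroup.of x, of_mem_Sub h⟩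
  let b : Coprod H (Multiplicative ℤ) →* FreeGroup X :=
    Coprod.lift H.subtype (zpowersHom _ (FreeGroup.of y))
  have hba : b.comp a = MonoidHom.id _ := by
    ext x
    by_cases h : x = y
    · subst h; simp [a, b]
    · simp [a, b, h]
  have hsub : ∀ w : FreeGroup X, ∀ hw : w ∈ H, a w = Coprod.inl ⟨w, hw⟩ := by
    intro w hw
    induction hw using Subgroup.closure_induction with
    | mem x hx =>
      obtain ⟨t, ht, rfl⟩ := hx
      have ht' : t ≠ y := ht
      simp [a, ht']
    | one => rw [map_one]; exact (map_one _).symm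
    | mul p q hp hq h1 h2 => rw [map_mul, h1, h2, ← map_mul]; rfl
    | inv p hp h1 => rw [map_inv, h1, ← map_inv]; rfl
  have hab : a.comp b = MonoidHom.id _ := by
    apply Coprod.hom_ext
    · ext w
      change a (b (Coprod.inl w)) = Coprod.inl w
      simp only [b, Coprod.lift_apply_inl]
      exact hsub w.1 w.2
    · ext
      simp [a, b]
  refine lemD R n (MonoidHom.toMulEquiv a b hba hab) (⟨R, hRm y hy⟩ : H) ?_ inferInstance ?_
  · change IsConj (a R) _
    rw [hsub R (hRm y hy)]
  · let ε : H →* Multiplicative ℤ := (exps z).comp H.subtype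
    have hle : Subgroup.normalClosure {(⟨R, hRm y hy⟩ : H) ^ n} ≤ ε.ker := by
      apply Subgroup.normalClosure_le_normal
      rintro _ rfl
      change ε _ = 1
      rw [map_pow]
      have : ε ⟨R, hRm y hy⟩ = 1 := by
        change exps z R = (1 : FreeGroup X →* Multiplicative ℤ) R
        refine Sub_eq _ _ ?_ (hRm z hzs)
        intro x hx
        have : x ≠ z := hx
        simp [exps, this]
      rw [this, one_pow]
    have hs : Function.Surjective ε := by
      intro t
      refine ⟨(⟨FreeGroup.of z, of_mem_Sub hzy⟩ : H) ^ (Multiplicative.toAdd t), ?_⟩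
      rw [map_zpow]
      have : ε ⟨FreeGroup.of z, of_mem_Sub hzy⟩ = Multiplicative.ofAdd 1 := by
        change exps z (FreeGroup.of z) = _
        simp [exps]
      rw [this, ← ofAdd_zsmul]; simp
    exact (QuotientGroup.lift_surjective_of_surjective _ ε hs hle).nontrivial

theorem caseFI {X : Type} {R : FreeGroup X} (hR : R ≠ 1) (n : ℕ)
    {P : Bool → Type} [∀ b, Group (P b)] (hP : ∀ b, Nontrivial (P b))
    (f : FreeGroup X →* CoprodI P) (hf : Function.Surjective f)
    (hk : f.ker = Subgroup.normalClosure {R}) : FreelyDecomposable (PresentedGroup {R ^ n}) := by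
  rcases finite_or_infinite X with h | h
  · exact caseFI_fin hR n hP f hf hk
  · exact caseFI_inf R n

end OR

namespace OR
open Monoid

theorem nc_kill {G G' : Type} [Group G] [Group G'] (f : G →* G') {a b : G} (h : f a = 1)
    (hb : b ∈ Subgroup.normalClosure {a}) : f b = 1 := by
  have := nc_map f hb
  rw [h] at this
  have h2 : Subgroup.normalClosure {(1 : G')} ≤ ⊥ :=
    Subgroup.normalClosure_le_normal (by simp)
  exact Subgroup.mem_bot.1 (h2 this)

theorem cop_noncomm {P : Bool → Type} [∀ b, Group (P b)] (hP : ∀ b, Nontrivial (P b)) :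
    ∃ a b : CoprodI P, a * b ≠ b * a := by
  have := hP true
  have := hP false
  obtain ⟨p, hp⟩ := exists_ne (1 : P true)
  obtain ⟨q, hq⟩ := exists_ne (1 : P false)
  refine ⟨CoprodI.of p, CoprodI.of q, fun h => ?_⟩
  refine cop_word_ne_one (G := P) [⟨true, p⟩, ⟨false, q⟩, ⟨true, p⁻¹⟩, ⟨false, q⁻¹⟩] (by simp)
    (by simp [hp, hq]) (by simp) ?_
  simp only [List.map_cons, List.map_nil, List.prod_cons, List.prod_nil, map_inv, mul_one]
  rw [← mul_assoc, h]; group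

/-- abelianisation -/
noncomputable def abl (Y : Type) : FreeGroup Y →* Multiplicative (Y →₀ ℤ) :=
  FreeGroup.lift fun y => Multiplicative.ofAdd (Finsupp.single y 1)

theorem abl_factor {Y G : Type} [CommGroup G] (g : FreeGroup Y →* G) :
    ∃ g' : Multiplicative (Y →₀ ℤ) →* G, ∀ w, g' (abl Y w) = g w := by
  let a : (Y →₀ ℤ) →+ Additive G :=
    Finsupp.liftAddHom fun y => (zmultiplesHom (Additive G)) (Additive.ofMul (g (FreeGroup.of y)))
  let g' : Multiplicative (Y →₀ ℤ) →* G := AddMonoidHom.toMultiplicativeLeft a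
  refine ⟨g', fun w => ?_⟩
  have : g'.comp (abl Y) = g := by
    ext y
    simp [g', abl, a]
  exact DFunLike.congr_fun this w

theorem nc_comm {G H : Type} [Group G] [CommGroup H] (g : G →* H) {a b : G}
    (hb : b ∈ Subgroup.normalClosure {a}) : ∃ k : ℤ, g b = g a ^ k := by
  have : Subgroup.normalClosure {a} ≤ (Subgroup.zpowers (g a)).comap g := by
    apply Subgroup.normalClosure_le_normal
    rintro _ rfl
    exact Subgroup.mem_zpowers _
  obtain ⟨k, hk⟩ := this hb
  exact ⟨k, hk.symm⟩

/-- orders of the two cyclic factors -/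
abbrev ordZ (n : ℕ) : Bool → ℕ
  | true => 0
  | false => n

theorem caseZ' {X : Type} {R : FreeGroup X} {n : ℕ} (hn : n ≠ 0)
    (E : PresentedGroup {R ^ n} ≃* CoprodI fun b => Multiplicative (ZMod (ordZ n b)))
    {P : Bool → Type} [∀ b, Group (P b)] (hP : ∀ b, Nontrivial (P b))
    (f : FreeGroup X →* CoprodI P) (hf : Function.Surjective f)
    (hfR : f R = 1) : False := by
  let Z : Bool → Type := fun b => Multiplicative (ZMod (ordZ n b))
  let m : FreeGroup X →* PresentedGroup {R ^ n} := PresentedGroup.mk {R ^ n}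
  have hfn : f (R ^ n) = 1 := by rw [map_pow, hfR, one_pow]
  let h : CoprodI Z →* CoprodI P := (pgLift f hfn).comp E.symm.toMonoidHom
  have hh : ∀ w, h (E (m w)) = f w := by
    intro w
    simp only [h, MonoidHom.comp_apply]
    rw [show E.symm.toMonoidHom (E (m w)) = m w from E.symm_apply_apply _]
    exact pgLift_mk f hfn w
  let π : CoprodI Z →* Z false := CoprodI.lift (Function.update (fun _ => 1) false (MonoidHom.id _))
  have hπ : ∀ z : Z false, π (CoprodI.of z) = z := by intro z; simp [π]
  have hmR : (E (m R)) ^ n = 1 := by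
    rw [← map_pow, ← map_pow, show m (R ^ n) = 1 from mk_self, map_one]
  have htor : IsOfFinOrder (E (m R)) := isOfFinOrder_iff_pow_eq_one.2 ⟨n, Nat.pos_of_ne_zero hn, hmR⟩
  have hx : h (CoprodI.of (π (E (m R)))) = 1 := by
    obtain ⟨i, x, k, hk⟩ := cop_torsion_conj (G := Z) (E (m R)) htor
    have hxt : h (CoprodI.of x) = 1 := by
      have h1 := hh R
      rw [hfR, hk, map_mul, map_mul, map_inv] at h1
      exact conj_eq_one_iff.1 h1
    cases i
    · have h2 : π (k * CoprodI.of x * k⁻¹) = x := by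
        rw [map_mul π, map_mul π, map_inv π, hπ x, mul_comm (π k), mul_inv_cancel_right]
      rw [hk, h2]
      exact hxt
    · have hx1 : x = 1 := by
        apply zmod_tf _ rfl
        have h2 : IsOfFinOrder (CoprodI.of (M := Z) x) := by
          have := conj_fin k⁻¹ htor
          rw [hk] at this
          rwa [show k⁻¹ * (k * CoprodI.of x * k⁻¹) * k⁻¹⁻¹ = CoprodI.of x by group] at this
        exact (isOfFinOrder_iff_pow_eq_one.2 (by
          obtain ⟨d, hd, h3⟩ := isOfFinOrder_iff_pow_eq_one.1 h2
          refine ⟨d, hd, CoprodI.of_injective (M := Z) true ?_⟩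
          rw [map_pow, h3, map_one]))
      rw [hk, hx1]
      simp
  let y : Z false := Multiplicative.ofAdd (1 : ZMod n)
  obtain ⟨v, hv⟩ := E.surjective (CoprodI.of (M := Z) y)
  obtain ⟨w, rfl⟩ := PresentedGroup.mk_surjective {R ^ n} v
  have hw : w ^ n ∈ Subgroup.normalClosure {R ^ n} := by
    rw [← mk_eq_one]
    apply E.injective
    rw [map_pow, map_pow, hv, map_one, ← map_pow]
    rw [show y ^ n = 1 from zmod_pow n, map_one]
  obtain ⟨k, hk⟩ := nc_comm (abl X) hw
  have hab : abl X w = abl X R ^ k := by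
    rw [map_pow, map_pow, ← zpow_natCast, ← zpow_natCast, ← zpow_mul, mul_comm, zpow_mul,
      zpow_natCast, zpow_natCast] at hk
    have h2 : n • (Multiplicative.toAdd (abl X w)) = n • (Multiplicative.toAdd (abl X R ^ k)) :=
      congrArg Multiplicative.toAdd hk
    ext t
    have h3 := DFunLike.congr_fun h2 t
    simp only [Finsupp.smul_apply, nsmul_eq_mul] at h3
    exact mul_left_cancel₀ (by exact_mod_cast hn) h3
  have hy : y = π (E (m R)) ^ k := by
    obtain ⟨g', hg'⟩ := abl_factor (π.comp (E.toMonoidHom.comp m))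
    have h1 := hg' w
    rw [hab, map_zpow, hg' R] at h1
    have h2 : (π.comp (E.toMonoidHom.comp m)) w = y := by
      change π (E (m w)) = y
      rw [show E (m w) = _ from hv, hπ]
    rw [h2] at h1
    exact h1.symm
  have hhy : h (CoprodI.of (M := Z) y) = 1 := by
    rw [hy, map_zpow, map_zpow, hx, one_zpow]
  let t : Z true := Multiplicative.ofAdd (1 : ZMod 0)
  have hr : ∀ z, h z ∈ Subgroup.zpowers (h (CoprodI.of (M := Z) t)) := by
    intro z
    induction z using CoprodI.induction_on with
    | one => rw [map_one]; exact one_mem _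
    | of i z =>
      obtain ⟨l, hl⟩ := zmod_gen _ z
      cases i
      · rw [show z = y ^ l from hl, map_zpow, map_zpow, hhy, one_zpow]; exact one_mem _
      · rw [show z = t ^ l from hl, map_zpow, map_zpow]
        exact Subgroup.zpow_mem _ (Subgroup.mem_zpowers _) _
    | mul a b ha hb => rw [map_mul]; exact mul_mem ha hb
  obtain ⟨a, b, hne⟩ := cop_noncomm hP
  apply hne
  obtain ⟨a', rfl⟩ := hf a
  obtain ⟨b', rfl⟩ := hf b
  obtain ⟨ka, hka⟩ := hr (E (m a'))
  obtain ⟨kb, hkb⟩ := hr (E (m b'))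
  rw [hh] at hka hkb
  rw [← hka, ← hkb]
  exact zpow_mul_comm _ _ _

theorem caseZ {X : Type} {R : FreeGroup X} {n : ℕ} (hn : n ≠ 0)
    (e : PresentedGroup {R ^ n} ≃* Coprod (Multiplicative ℤ) (Multiplicative (ZMod n)))
    {P : Bool → Type} [∀ b, Group (P b)] (hP : ∀ b, Nontrivial (P b))
    (f : FreeGroup X →* CoprodI P) (hf : Function.Surjective f)
    (hfR : f R = 1) : False := by
  obtain ⟨e2, -⟩ := copBool (fun b => Multiplicative (ZMod (ordZ n b))) true
  let e3 : CoprodI (fun b => Multiplicative (ZMod (ordZ n b))) ≃*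
    Coprod (Multiplicative ℤ) (Multiplicative (ZMod n)) := e2
  exact caseZ' hn (e.trans e3.symm) hP f hf hfR

theorem free_sub_comm {Y : Type} [Subsingleton Y] (a b : FreeGroup Y) : a * b = b * a := by
  rcases isEmpty_or_nonempty Y with h | ⟨⟨y⟩⟩
  · exact Subsingleton.elim _ _
  · have hz : ∀ w : FreeGroup Y, w ∈ Subgroup.zpowers (FreeGroup.of y) := by
      intro w
      have : w ∈ (⊤ : Subgroup (FreeGroup Y)) := trivial
      rw [← FreeGroup.closure_range_of] at this
      refine (Subgroup.closure_le _).2 ?_ this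
      rintro _ ⟨z, rfl⟩
      rw [Subsingleton.elim z y]
      exact Subgroup.mem_zpowers _
    obtain ⟨k, rfl⟩ := hz a
    obtain ⟨l, rfl⟩ := hz b
    exact zpow_mul_comm _ _ _

theorem cyc {A Z : Type} [Group A] (θ : A →* FreeGroup Z) (a0 : A)
    (H : ∀ N : Subgroup A, N.Normal → θ.ker ≤ N → a0 ∈ N → N = ⊤) (a : A) :
    ∃ k : ℤ, θ a = θ a0 ^ k := by
  classical
  let Y := IsFreeGroup.Generators θ.range
  let ε : θ.range ≃* FreeGroup Y := IsFreeGroup.toFreeGroup θ.range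
  let η : A →* FreeGroup Y := ε.toMonoidHom.comp θ.rangeRestrict
  have hηs : Function.Surjective η := ε.surjective.comp θ.rangeRestrict_surjective
  have hηk : ∀ a, θ a = 1 → η a = 1 := by
    intro a ha
    have : θ.rangeRestrict a = 1 := Subtype.ext ha
    change ε (θ.rangeRestrict a) = 1
    rw [this, map_one]
  have hv : ∀ w, abl Y w ∈ Subgroup.zpowers (abl Y (η a0)) := by
    intro w
    have := H ((Subgroup.zpowers (abl Y (η a0))).comap ((abl Y).comp η)) inferInstance
      (fun a ha => by
        change abl Y (η a) ∈ Subgroup.zpowers (abl Y (η a0))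
        rw [hηk a ha, map_one]; exact one_mem _)
      (Subgroup.mem_zpowers _)
    obtain ⟨a, rfl⟩ := hηs w
    have h2 : a ∈ (⊤ : Subgroup A) := trivial
    rw [← this] at h2
    exact h2
  have hsub : Subsingleton Y := by
    constructor
    intro y y'
    by_contra hne
    obtain ⟨k, hk⟩ := hv (FreeGroup.of y)
    obtain ⟨l, hl⟩ := hv (FreeGroup.of y')
    generalize abl Y (η a0) = v at hk hl
    have hk' : k • (Multiplicative.toAdd v) = Finsupp.single y 1 := by
      have := congrArg Multiplicative.toAdd hk
      simpa [abl] using this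
    have hl' : l • (Multiplicative.toAdd v) = Finsupp.single y' 1 := by
      have := congrArg Multiplicative.toAdd hl
      simpa [abl] using this
    have h1 := DFunLike.congr_fun hk' y
    have h2 := DFunLike.congr_fun hk' y'
    have h3 := DFunLike.congr_fun hl' y'
    simp only [Finsupp.smul_apply, smul_eq_mul, Finsupp.single_eq_same] at h1 h3 h2
    rw [Finsupp.single_apply, if_neg hne] at h2
    rcases mul_eq_zero.1 h2 with h | h
    · rw [h] at h1; simp at h1
    · rw [h] at h3; simp at h3
  have hN := H ((Subgroup.zpowers (η a0)).comap η) ⟨fun x hx g => by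
      rw [Subgroup.mem_comap, map_mul, map_mul, map_inv, free_sub_comm (η g), mul_inv_cancel_right]
      exact hx⟩ (fun a ha => by
        rw [Subgroup.mem_comap, hηk a ha]; exact one_mem _) (Subgroup.mem_zpowers _)
  have h2 : a ∈ (⊤ : Subgroup A) := trivial
  rw [← hN] at h2
  obtain ⟨k, hk⟩ := h2
  refine ⟨k, ?_⟩
  have hk2 : ε (θ.rangeRestrict a0 ^ k) = ε (θ.rangeRestrict a) := by rw [map_zpow]; exact hk
  have h3 := congrArg Subtype.val (ε.injective hk2)
  simpa using h3.symm

end OR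

namespace OR
open Monoid

theorem famBool (F : Bool → Type) (i : Bool) (u : F i) (v : F !i) :
    ∃ f : ∀ b, F b, f i = u ∧ f (!i) = v := by
  cases i
  · exact ⟨fun b => match b with | false => u | true => v, rfl, rfl⟩
  · exact ⟨fun b => match b with | true => u | false => v, rfl, rfl⟩

theorem emb_T {G : Type} [Group G] {r : G} (h : FKS r) (hr : IsOfFinOrder r) :
    ∃ (U : Type) (C : U → Type) (_ : ∀ u, Group (C u)), (∀ u (x : C u), IsOfFinOrder x) ∧
      ∃ j : Subgroup.normalClosure {r} →* CoprodI C, Function.Injective j := by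
  apply Good.rec_torsion h.1
  rw [eq_top_iff]
  rintro ⟨t, ht⟩ -
  have key : ∀ t (ht : t ∈ Subgroup.closure (Group.conjugatesOfSet {r})),
      (⟨t, ht⟩ : Subgroup.normalClosure {r}) ∈
        Subgroup.normalClosure {t : Subgroup.normalClosure {r} | IsOfFinOrder t} := by
    intro t ht
    induction ht using Subgroup.closure_induction with
    | mem x hx =>
      apply Subgroup.subset_normalClosure
      have hx' := hx
      rw [Group.mem_conjugatesOfSet_iff] at hx'
      obtain ⟨a, rfl, hc⟩ := hx'
      obtain ⟨g, hg⟩ := isConj_iff.1 hc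
      change IsOfFinOrder _
      refine (Function.Injective.isOfFinOrder_iff
        (f := (Subgroup.normalClosure {a}).subtype) Subtype.val_injective).1 ?_
      change IsOfFinOrder x
      rw [← hg]
      exact conj_fin g hr
    | one => exact one_mem _
    | mul p q hp hq h1 h2 => exact mul_mem h1 h2
    | inv p hp h1 => exact inv_mem h1
  exact key t ht

section
variable {C : Type} [Group C] {D : Bool → Type} [∀ b, Group (D b)] {φ : ∀ b, C →* D b}

theorem b2 (hinj : ∀ b, Function.Injective (φ b)) (htf : ∀ c : C, IsOfFinOrder c → c = 1)
    (c0 : C) (hc0 : c0 ≠ 1) (hgen : ∀ c, ∃ k : ℤ, c = c0 ^ k) (i : Bool) (ρ : D i)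
    (hρ : IsOfFinOrder ρ) (hF : FKS (PushoutI.of (φ := φ) i ρ))
    (hbase : ∀ c, PushoutI.base φ c ∈ Subgroup.normalClosure {PushoutI.of (φ := φ) i ρ})
    (hT : ∀ a : D i, PushoutI.of (φ := φ) i a ∈
      Subgroup.normalClosure {PushoutI.of (φ := φ) i ρ}) : False := by
  obtain ⟨U, E, iE, hfin, j, hj⟩ := emb_T hF ((PushoutI.of (φ := φ) i).isOfFinOrder hρ)
  let ι : D i →* Subgroup.normalClosure {PushoutI.of (φ := φ) i ρ} :=
    (PushoutI.of (φ := φ) i).codRestrict _ hT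
  have hι : Function.Injective ι := by
    intro a b hab
    exact PushoutI.of_injective hinj i (congrArg Subtype.val hab)
  have hN : ∀ N : Subgroup (D i), N.Normal → ρ ∈ N → φ i c0 ∈ N → N = ⊤ := by
    intro N hNn h1 h2
    obtain ⟨f, hf1, hf2⟩ := famBool (fun b => D b →* D i ⧸ N) i (QuotientGroup.mk' N) 1
    have hcomp : ∀ b, (f b).comp (φ b) = 1 := by
      intro b
      rcases (by cases b <;> cases i <;> simp : b = i ∨ b = !i) with rfl | rfl
      · ext c
        obtain ⟨k, rfl⟩ := hgen c
        rw [hf1, MonoidHom.comp_apply, map_zpow]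
        exact (QuotientGroup.eq_one_iff _).2 (N.zpow_mem h2 k)
      · rw [hf2]; rfl
    rw [eq_top_iff]
    intro a _
    have h3 := nc_kill (PushoutI.lift f 1 hcomp) (by
      rw [PushoutI.lift_of, hf1]; exact (QuotientGroup.eq_one_iff _).2 h1) (hT a)
    rw [PushoutI.lift_of, hf1] at h3
    exact (QuotientGroup.eq_one_iff _).1 h3
  have htor : ∀ t : D i, IsOfFinOrder t → ∃ a, ∃ k : ℤ, t = a * ρ ^ k * a⁻¹ := by
    intro t ht
    by_cases ht1 : t = 1
    · exact ⟨1, 0, by simp [ht1]⟩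
    obtain ⟨g, k, hg⟩ := hF.2 _ (hT t) ((PushoutI.of (φ := φ) i).isOfFinOrder ht)
    rw [← map_zpow] at hg
    have hk1 : ρ ^ k ≠ 1 := by
      intro h
      rw [h, map_one, mul_one, mul_inv_cancel] at hg
      exact ht1 ((map_eq_one_iff _ (PushoutI.of_injective hinj i)).1 hg)
    obtain ⟨-, a, rfl⟩ := malnormal hinj htf (ρ ^ k) t hρ.zpow hk1 g hg.symm
    refine ⟨a, k, PushoutI.of_injective hinj i ?_⟩
    rw [hg, map_mul, map_mul, map_inv]
  obtain ⟨Z, θ, hθ⟩ := K1 hfin (j.comp ι) (hj.comp hι)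
  have hθρ : θ ρ = 1 := by
    rw [← MonoidHom.mem_ker, hθ]
    exact Subgroup.subset_normalClosure hρ
  have hcyc := cyc θ (φ i c0) (fun N hNn h1 h2 => hN N hNn (h1 hθρ) h2)
  have hc0inf : ¬ IsOfFinOrder c0 := fun h => hc0 (htf _ h)
  by_cases hx : θ (φ i c0) = 1
  · have hnc : Subgroup.normalClosure {ρ} = ⊤ := by
      have hk : θ.ker = ⊤ := by
        rw [eq_top_iff]; intro a _
        obtain ⟨k, hk⟩ := hcyc a
        rw [hx, one_zpow] at hk
        exact hk
      rw [eq_top_iff, ← hk, hθ]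
      apply Subgroup.normalClosure_le_normal
      intro t ht
      obtain ⟨a, k, rfl⟩ := htor t ht
      exact Subgroup.Normal.conj_mem inferInstance _
        (Subgroup.zpow_mem _ (Subgroup.subset_normalClosure (Set.mem_singleton _)) _) _
    have := K2 hfin (j.comp ι) (hj.comp hι) ρ hρ htor hnc (φ i c0)
    exact hc0inf ((hinj i).isOfFinOrder_iff.1 this)
  · set x := θ (φ i c0) with hxdef
    have hzi : Function.Injective fun k : ℤ => x ^ k :=
      injective_zpow_iff_not_isOfFinOrder.2 (not_isOfFinOrder_of_isMulTorsionFree hx)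
    choose k hk using hcyc
    let χ : D i →* Multiplicative ℤ := MonoidHom.mk' (fun a => Multiplicative.ofAdd (k a)) (by
      intro a b
      rw [← ofAdd_add]
      congr 1
      apply hzi
      change x ^ _ = x ^ _
      rw [← hk, zpow_add, ← hk, ← hk, map_mul])
    obtain ⟨f, hf1, hf2⟩ := famBool (fun b => D b →* D !i) i
      ((zpowersHom _ (φ (!i) c0)).comp χ) (MonoidHom.id _)
    have hval : ∀ a, f i a = φ (!i) c0 ^ k a := by
      intro a; rw [hf1]; rfl
    have hcomp : ∀ b, (f b).comp (φ b) = φ (!i) := by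
      intro b
      rcases (by cases b <;> cases i <;> simp : b = i ∨ b = !i) with rfl | rfl
      · ext c
        obtain ⟨l, rfl⟩ := hgen c
        rw [MonoidHom.comp_apply, hval]
        have : k (φ b (c0 ^ l)) = l := by
          apply hzi
          change x ^ _ = x ^ _
          rw [← hk, map_zpow, map_zpow]
        rw [this, map_zpow]
      · rw [hf2]; rfl
    have hkρ : k ρ = 0 := by
      apply hzi
      change x ^ _ = x ^ _
      rw [← hk, hθρ, zpow_zero]
    have h3 := nc_kill (PushoutI.lift f (φ (!i)) hcomp) (by
      rw [PushoutI.lift_of, hval, hkρ, zpow_zero]) (hbase c0)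
    rw [PushoutI.lift_base] at h3
    exact hc0 ((map_eq_one_iff _ (hinj (!i))).1 h3)

theorem b1 (hinj : ∀ b, Function.Injective (φ b)) (htf : ∀ c : C, IsOfFinOrder c → c = 1)
    (hproper : ∀ b, (φ b).range ≠ ⊤)
    (c0 : C) (hgen : ∀ c, ∃ k : ℤ, c = c0 ^ k) (i : Bool) (ρ : D i)
    (hρ : IsOfFinOrder ρ) (hF : FKS (PushoutI.of (φ := φ) i ρ))
    (hT : ∀ a : D !i, PushoutI.of (φ := φ) (!i) a ∈
      Subgroup.normalClosure {PushoutI.of (φ := φ) i ρ}) : False := by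
  obtain ⟨U, E, iE, hfin, j, hj⟩ := emb_T hF ((PushoutI.of (φ := φ) i).isOfFinOrder hρ)
  let ι : D (!i) →* Subgroup.normalClosure {PushoutI.of (φ := φ) i ρ} :=
    (PushoutI.of (φ := φ) (!i)).codRestrict _ hT
  have hι : Function.Injective ι := by
    intro a b hab
    exact PushoutI.of_injective hinj (!i) (congrArg Subtype.val hab)
  have hN : ∀ N : Subgroup (D !i), N.Normal → φ (!i) c0 ∈ N → N = ⊤ := by
    intro N hNn h2
    obtain ⟨f, hf1, hf2⟩ := famBool (fun b => D b →* D (!i) ⧸ N) i 1 (QuotientGroup.mk' N)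
    have hcomp : ∀ b, (f b).comp (φ b) = 1 := by
      intro b
      rcases (by cases b <;> cases i <;> simp : b = i ∨ b = !i) with rfl | rfl
      · rw [hf1]; rfl
      · ext c
        obtain ⟨k, rfl⟩ := hgen c
        rw [hf2, MonoidHom.comp_apply, map_zpow]
        exact (QuotientGroup.eq_one_iff _).2 (N.zpow_mem h2 k)
    rw [eq_top_iff]
    intro a _
    have h3 := nc_kill (PushoutI.lift f 1 hcomp) (by
      rw [PushoutI.lift_of, hf1]; rfl) (hT a)
    rw [PushoutI.lift_of, hf2] at h3
    exact (QuotientGroup.eq_one_iff _).1 h3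
  have htor : ∀ t : D !i, IsOfFinOrder t → t = 1 := by
    intro t ht
    by_contra ht1
    obtain ⟨g, k, hg⟩ := hF.2 _ (hT t) ((PushoutI.of (φ := φ) (!i)).isOfFinOrder ht)
    rw [← map_zpow] at hg
    have hk1 : ρ ^ k ≠ 1 := by
      intro h
      rw [h, map_one, mul_one, mul_inv_cancel] at hg
      exact ht1 ((map_eq_one_iff _ (PushoutI.of_injective hinj (!i))).1 hg)
    obtain ⟨h, -⟩ := malnormal hinj htf (ρ ^ k) t hρ.zpow hk1 g hg.symm
    cases i <;> simp at h
  obtain ⟨Z, θ, hθ⟩ := K1 hfin (j.comp ι) (hj.comp hι)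
  have hker : θ.ker = ⊥ := by
    rw [hθ, eq_bot_iff]
    apply Subgroup.normalClosure_le_normal
    intro t ht
    exact Subgroup.mem_bot.2 (htor t ht)
  have hcyc := cyc θ (φ (!i) c0) (fun N hNn h1 h2 => hN N hNn h2)
  apply hproper (!i)
  rw [eq_top_iff]
  intro a _
  obtain ⟨k, hk⟩ := hcyc a
  refine ⟨c0 ^ k, ?_⟩
  apply (MonoidHom.ker_eq_bot_iff θ).1 hker
  rw [hk, map_zpow, map_zpow]

theorem toCop (T : Subgroup (PushoutI φ)) [T.Normal] (hbase : ∀ c, PushoutI.base φ c ∈ T)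
    (hb : ∀ b, ∃ a : D b, PushoutI.of (φ := φ) b a ∉ T) :
    ∃ (P : Bool → Type) (_ : ∀ b, Group (P b)) (_ : ∀ b, Nontrivial (P b))
      (κ : PushoutI φ →* CoprodI P), Function.Surjective κ ∧ (∀ i a, PushoutI.of (φ := φ) i a ∈ T →
        κ (PushoutI.of i a) = 1) ∧ ∀ g, κ g = 1 → g ∈ T := by
  let N : ∀ b, Subgroup (D b) := fun b => T.comap (PushoutI.of (φ := φ) b)
  let P : Bool → Type := fun b => D b ⧸ N b
  let iP : ∀ b, Group (P b) := fun b => inferInstanceAs (Group (D b ⧸ N b))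
  let q : ∀ b, D b →* P b := fun b => QuotientGroup.mk' (N b)
  have hq1 : ∀ b a, q b a = 1 ↔ PushoutI.of (φ := φ) b a ∈ T := by
    intro b a
    exact QuotientGroup.eq_one_iff _
  have hcomp : ∀ b, ((CoprodI.of (M := P) (i := b)).comp (q b)).comp (φ b) = 1 := by
    intro b
    ext c
    rw [MonoidHom.comp_apply, MonoidHom.comp_apply, (hq1 b (φ b c)).2 (by
      rw [PushoutI.of_apply_eq_base]; exact hbase c), map_one]
    rfl
  let κ : PushoutI φ →* CoprodI P :=
    PushoutI.lift (fun b => (CoprodI.of (M := P) (i := b)).comp (q b)) 1 hcomp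
  have hκ : ∀ b a, κ (PushoutI.of b a) = CoprodI.of (M := P) (q b a) := by
    intro b a
    exact PushoutI.lift_of _ _ hcomp a
  refine ⟨P, iP, ?_, κ, ?_, ?_, ?_⟩
  · intro b
    obtain ⟨a, ha⟩ := hb b
    exact ⟨q b a, 1, fun h => ha ((hq1 b a).1 h)⟩
  · intro z
    induction z using CoprodI.induction_on with
    | one => exact ⟨1, map_one _⟩
    | of i z =>
      obtain ⟨a, rfl⟩ := QuotientGroup.mk'_surjective (N i) z
      exact ⟨_, hκ i a⟩
    | mul a b ha hb =>
      obtain ⟨a, rfl⟩ := ha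
      obtain ⟨b, rfl⟩ := hb
      exact ⟨a * b, map_mul _ _ _⟩
  · intro i a ha
    rw [hκ, (hq1 i a).2 ha, map_one]
  · let back : CoprodI P →* PushoutI φ ⧸ T :=
      CoprodI.lift fun b => QuotientGroup.map (N b) T (PushoutI.of (φ := φ) b) le_rfl
    have h : back.comp κ = QuotientGroup.mk' T := by
      apply PushoutI.hom_ext
      · intro b
        ext a
        change back (κ (PushoutI.of b a)) = _
        rw [hκ]
        simp only [back, CoprodI.lift_of]
        rfl
      · ext c
        change back (κ (PushoutI.base φ c)) = QuotientGroup.mk' T (PushoutI.base φ c)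
        rw [show κ (PushoutI.base φ c) = 1 from PushoutI.lift_base _ _ hcomp c, map_one]
        exact ((QuotientGroup.eq_one_iff _).2 (hbase c)).symm
    intro g hg
    have h2 := DFunLike.congr_fun h g
    rw [MonoidHom.comp_apply, hg, map_one] at h2
    exact (QuotientGroup.eq_one_iff _).1 h2.symm

end

theorem final {X : Type} (R : FreeGroup X) (n : ℕ)
    (hn : 1 < n) (hR : R ≠ 1)
    (hG : FreelyIndecomposable (PresentedGroup {R ^ n}) ∨
      Nonempty (PresentedGroup {R ^ n} ≃*
        Monoid.Coprod (Multiplicative ℤ) (Multiplicative (ZMod n))))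
    (C : Type) [Group C] (hC : Nonempty (C ≃* Multiplicative ℤ))
    (D : Bool → Type) [∀ b, Group (D b)]
    (φ : ∀ b, C →* D b) (hinj : ∀ b, Function.Injective (φ b))
    (hproper : ∀ b, (φ b).range ≠ ⊤)
    (e : PresentedGroup {R ^ n} ≃* Monoid.PushoutI φ)
    (hT : ∀ c, PushoutI.base φ c ∈ Subgroup.normalClosure {e (PresentedGroup.mk {R ^ n} R)}) :
    False := by
  have hn0 : n ≠ 0 := by omega
  obtain ⟨ζ⟩ := hC
  let c0 : C := ζ.symm (Multiplicative.ofAdd 1)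
  have hgen : ∀ c, ∃ k : ℤ, c = c0 ^ k := by
    intro c
    refine ⟨Multiplicative.toAdd (ζ c), ?_⟩
    apply ζ.injective
    rw [map_zpow]
    simp only [c0, MulEquiv.apply_symm_apply]
    rw [← ofAdd_zsmul]; simp
  have htf : ∀ c : C, IsOfFinOrder c → c = 1 := by
    intro c hc
    by_contra h
    have h2 : ζ c ≠ 1 := fun h' => h ((map_eq_one_iff ζ ζ.injective).1 h')
    exact not_isOfFinOrder_of_isMulTorsionFree h2 (ζ.toMonoidHom.isOfFinOrder hc)
  have hc0 : c0 ≠ 1 := by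
    intro h
    have h2 := congrArg ζ h
    simp only [c0, MulEquiv.apply_symm_apply, map_one] at h2
    have h3 := congrArg Multiplicative.toAdd h2
    simp at h3
  set r := e (PresentedGroup.mk {R ^ n} R) with hr
  have hF : FKS r := (fks R hR n hn0).equiv e
  have hrn : r ^ n = 1 := by
    rw [hr, ← map_pow, ← map_pow, mk_self, map_one]
  have hrt : IsOfFinOrder r := isOfFinOrder_iff_pow_eq_one.2 ⟨n, by omega, hrn⟩
  obtain ⟨i, ρ, k, hk⟩ := torsion_conj hinj r hrt
  have hconj : IsConj r (PushoutI.of (φ := φ) i ρ) := by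
    rw [hk, isConj_comm]
    exact isConj_iff.2 ⟨k, rfl⟩
  have hρ : IsOfFinOrder ρ := by
    refine (PushoutI.of_injective hinj i).isOfFinOrder_iff.1 ?_
    have := conj_fin k⁻¹ hrt
    rw [hk] at this
    rwa [show k⁻¹ * (k * PushoutI.of i ρ * k⁻¹) * k⁻¹⁻¹ = PushoutI.of i ρ by group] at this
  have hF' := hF.conj hconj
  have hnc := nc_conj hconj
  have hb : ∀ b, ∃ a : D b, PushoutI.of (φ := φ) b a ∉ Subgroup.normalClosure {r} := by
    intro b
    by_contra hcon
    push Not at hcon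
    rw [hnc] at hcon hT
    rcases (by cases b <;> cases i <;> simp : b = i ∨ b = !i) with rfl | rfl
    · exact b2 hinj htf c0 hc0 hgen b ρ hρ hF' hT hcon
    · exact b1 hinj htf hproper c0 hgen i ρ hρ hF' hcon
  obtain ⟨P, iP, hP, κ, hκs, hκ1, hκ2⟩ := toCop (Subgroup.normalClosure {r}) hT hb
  let m : FreeGroup X →* PresentedGroup {R ^ n} := PresentedGroup.mk {R ^ n}
  let f : FreeGroup X →* CoprodI P := κ.comp (e.toMonoidHom.comp m)
  have hf : Function.Surjective f :=
    hκs.comp (e.surjective.comp (PresentedGroup.mk_surjective _))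
  have hκr : κ r = 1 := by
    have : κ (PushoutI.of i ρ) = 1 := hκ1 i ρ (by
      rw [hnc]; exact Subgroup.subset_normalClosure (Set.mem_singleton _))
    rw [hk, map_mul, map_mul, this, map_inv, mul_one, mul_inv_cancel]
  have hfR : f R = 1 := hκr
  have hker : f.ker = Subgroup.normalClosure {R} := by
    apply le_antisymm
    · intro w hw
      have h1 : e (m w) ∈ Subgroup.normalClosure {r} := hκ2 _ hw
      have h2 : m w ∈ Subgroup.normalClosure {m R} := by
        have := nc_map e.symm.toMonoidHom h1
        simpa [hr] using this
      have hq : QuotientGroup.mk' (Subgroup.normalClosure {R}) R = 1 :=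
        (QuotientGroup.eq_one_iff _).2 (Subgroup.subset_normalClosure (Set.mem_singleton _))
      have h3 := nc_kill (pgLift (r := R ^ n) (QuotientGroup.mk' (Subgroup.normalClosure {R}))
        (by rw [map_pow, hq, one_pow])) (by exact hq) h2
      exact (QuotientGroup.eq_one_iff _).1 h3
    · apply Subgroup.normalClosure_le_normal
      rintro _ rfl
      exact hfR
  rcases hG with hG | hG
  · exact hG (caseFI hR n hP f hf hker)
  · obtain ⟨e1⟩ := hG
    exact caseZ hn0 e1 hP f hf hfR

end OR
/-- Let `G = ⟨X; Rⁿ⟩` be a one-relator group with torsion which is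
freely indecomposable or isomorphic to `ℤ ∗ Cₙ`, and `T = ⟪R⟫`.  If `G` splits
nontrivially as an amalgam `A ∗_C B` with `C` infinite cyclic, then the image of `C`
in `G` is not contained in `T`. -/
theorem statement_9 {X : Type} [Nontrivial X] (R : FreeGroup X) (n : ℕ)
    (hn : 1 < n) (hR : ∀ (S : FreeGroup X) (k : ℕ), 1 ≤ k → R = S ^ k → k = 1)
    (hG : FreelyIndecomposable (PresentedGroup {R ^ n}) ∨
      Nonempty (PresentedGroup {R ^ n} ≃*
        Monoid.Coprod (Multiplicative ℤ) (Multiplicative (ZMod n))))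
    (C : Type) [Group C] (hC : Nonempty (C ≃* Multiplicative ℤ))
    (D : Bool → Type) [∀ b, Group (D b)]
    (φ : ∀ b, C →* D b) (hinj : ∀ b, Function.Injective (φ b))
    (hproper : ∀ b, (φ b).range ≠ ⊤)
    (e : PresentedGroup {R ^ n} ≃* Monoid.PushoutI φ) :
    ¬ ((e.symm.toMonoidHom.comp
        ((Monoid.PushoutI.of (φ := φ) true).comp (φ true))).range ≤
      Subgroup.normalClosure {PresentedGroup.mk {R ^ n} R}) := by
  intro hle
  have hR1 : R ≠ 1 := by
    rintro rfl
    have := hR 1 2 (by norm_num) (by simp)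
    omega
  refine OR.final R n hn hR1 hG C hC D φ hinj hproper e (fun c => ?_)
  have h1 := hle (MonoidHom.mem_range.2 ⟨c, rfl⟩)
  have h2 := OR.nc_map e.toMonoidHom h1
  have h3 : e.toMonoidHom ((e.symm.toMonoidHom.comp
        ((Monoid.PushoutI.of (φ := φ) true).comp (φ true))) c) = Monoid.PushoutI.base φ c := by
    rw [← Monoid.PushoutI.of_apply_eq_base φ true c]
    exact e.apply_symm_apply _
  rw [h3] at h2
  exact h2
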